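/- arXiv:1509.05246 — 2 statements merged into one kernel-verified Lean document; each statement's English description precedes it below -/
import Mathlib

section
/- Let (X,T) be a topological dynamical system given by a continuous ℤ^d-action on a compact metric space and let μ be an ergodic T-invariant Borel probability measure. Then H_ap = H_ms^c = H_me; that is, for f ∈ L²(X,μ): f is almost periodic if and only if f is not μ-mean sensitive, if and only if f is μ-mean equicontinuous. -/
open MeasureTheory Filter Finset Metric
open scoped Classical

noncomputable section

/-- The box `{0,…,n−1}^d` inside `ℤ^d`. -/
def Fbox (d n : ℕ) : Finset (Fin d → ℤ) :=
  Fintype.piFinset fun _ => Finset.Icc (0 : ℤ) ((n : ℤ) - 1)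

/-- Upper density of a subset of `ℤ^d` along the boxes `F_n`. -/
def upperDensity (d : ℕ) (S : Set (Fin d → ℤ)) : ℝ :=
  Filter.limsup
    (fun n : ℕ => (((Fbox d n).filter (fun j => j ∈ S)).card : ℝ) / ((Fbox d n).card : ℝ))
    Filter.atTop

/-- Lower density of a subset of `ℤ^d` along the boxes `F_n`. -/
def lowerDensity (d : ℕ) (S : Set (Fin d → ℤ)) : ℝ :=
  Filter.liminf
    (fun n : ℕ => (((Fbox d n).filter (fun j => j ∈ S)).card : ℝ) / ((Fbox d n).card : ℝ))
    Filter.atTop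

variable {X : Type*}

/-- The pseudometric `d_f(x,y) = limsup_n ((1/|F_n|) Σ_{j∈F_n} |f(T^j x) − f(T^j y)|²)^{1/2}`. -/
def dF {d : ℕ} (T : (Fin d → ℤ) → X → X) (f : X → ℂ) (x y : X) : ℝ :=
  Filter.limsup (fun n : ℕ =>
    Real.sqrt ((∑ j ∈ Fbox d n, ‖f (T j x) - f (T j y)‖ ^ 2) / ((Fbox d n).card : ℝ)))
    Filter.atTop

/-- The pseudometric `ρ_f(x,y) = inf {ε > 0 : D̄({i : |f(T^i x) − f(T^i y)| > ε}) < ε}`. -/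
def rhoF {d : ℕ} (T : (Fin d → ℤ) → X → X) (f : X → ℂ) (x y : X) : ℝ :=
  sInf {ε : ℝ | 0 < ε ∧ upperDensity d {i | ε < ‖f (T i x) - f (T i y)‖} < ε}

/-- `x` is a generic point for `|f|²`:
the Birkhoff averages of `|f|²` along `x` converge to `∫ |f|² dμ`. -/
def genericSq {d : ℕ} [MeasurableSpace X] (μ : Measure X) (T : (Fin d → ℤ) → X → X)
    (f : X → ℂ) (x : X) : Prop :=
  Filter.Tendsto
    (fun n : ℕ => (∑ j ∈ Fbox d n, ‖f (T j x)‖ ^ 2) / ((Fbox d n).card : ℝ))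
    Filter.atTop (nhds (∫ y, ‖f y‖ ^ 2 ∂μ))

/-- `ε` is a `μ`-sensitivity constant for `f`: every positive measure set contains two
generic points `x, y` with `d_f(x,y) > ε`. -/
def SensitivityConstant {d : ℕ} [MeasurableSpace X] (μ : Measure X)
    (T : (Fin d → ℤ) → X → X) (f : X → ℂ) (ε : ℝ) : Prop :=
  0 < ε ∧ ∀ A : Set X, MeasurableSet A → 0 < μ A →
    ∃ x ∈ A, ∃ y ∈ A, genericSq μ T f x ∧ genericSq μ T f y ∧ ε < dF T f x y

/-- `f` is `μ`-mean sensitive (`f ∈ H_ms`). -/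
def MeanSensitiveFun {d : ℕ} [MeasurableSpace X] (μ : Measure X)
    (T : (Fin d → ℤ) → X → X) (f : X → ℂ) : Prop :=
  ∃ ε : ℝ, SensitivityConstant μ T f ε

/-- `f` is almost periodic (`f ∈ H_ap`): the closure of the orbit `{f ∘ T^j : j ∈ ℤ^d}`
in `L²(X,μ)` is compact. -/
def APFun {d : ℕ} [MeasurableSpace X] (μ : Measure X)
    (T : (Fin d → ℤ) → X → X) (f : X → ℂ) : Prop :=
  IsCompact (closure {g : Lp ℂ 2 μ | ∃ j : Fin d → ℤ, (g : X → ℂ) =ᵐ[μ] f ∘ T j})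

/-- `(X,T)` is `μ-f`-mean equicontinuous. -/
def MuFMeanEquicont {d : ℕ} [MetricSpace X] [MeasurableSpace X] (μ : Measure X)
    (T : (Fin d → ℤ) → X → X) (f : X → ℂ) : Prop :=
  ∀ τ : ℝ, 0 < τ → ∃ M : Set X, IsCompact M ∧ 1 - ENNReal.ofReal τ ≤ μ M ∧
    ∀ ε : ℝ, 0 < ε → ∃ δ : ℝ, 0 < δ ∧
      ∀ x ∈ M, ∀ y ∈ M, dist x y ≤ δ → rhoF T f x y ≤ ε


lemma mem_Fbox {d n : ℕ} {j : Fin d → ℤ} : j ∈ Fbox d n ↔ ∀ k, 0 ≤ j k ∧ j k < n := by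
  simp only [Fbox, Fintype.mem_piFinset, Finset.mem_Icc]
  refine forall_congr' fun k => ?_
  omega

lemma card_Fbox (d n : ℕ) : (Fbox d n).card = n ^ d := by
  simp [Fbox, Fintype.card_piFinset]

lemma vitali_box {d : ℕ} (φ : (Fin d → ℤ) → ENNReal) (lam : ENNReal)
    (E F : Finset (Fin d → ℤ)) (r : (Fin d → ℤ) → ℕ) (hr : ∀ j ∈ E, 1 ≤ r j)
    (hF : ∀ j ∈ E, ∀ i ∈ Fbox d (r j), i + j ∈ F)
    (h : ∀ j ∈ E, lam * (r j : ENNReal) ^ d ≤ ∑ i ∈ Fbox d (r j), φ (i + j)) :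
    lam * (E.card : ENNReal) ≤ 3 ^ d * ∑ i ∈ F, φ i := by
  set B : (Fin d → ℤ) → Finset (Fin d → ℤ) := fun j => (Fbox d (r j)).image (fun i => i + j) with hB
  obtain ⟨u, hut, hdisj, hcov⟩ := Vitali.exists_disjoint_subfamily_covering_enlargement
    (fun j => (B j : Set (Fin d → ℤ))) (E : Set (Fin d → ℤ)) (fun j => (r j : ℝ)) 2 (by norm_num)
    (fun _ _ => Nat.cast_nonneg _) (∑ j ∈ E, (r j : ℝ))
    (fun a ha => Finset.single_le_sum (f := fun j => (r j : ℝ))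
      (fun _ _ => Nat.cast_nonneg _) ha)
    (by
      intro a ha
      have h1 := hr a ha
      refine ⟨a, ?_⟩
      simp only [hB, Finset.coe_image, Set.mem_image, Finset.mem_coe]
      refine ⟨0, ?_, by simp⟩
      rw [mem_Fbox]; intro k; simp; omega)
  set U : Finset (Fin d → ℤ) := E.filter (fun j => j ∈ u) with hU
  have hUu : ∀ j, j ∈ U ↔ j ∈ u := by
    intro j; simp only [hU, Finset.mem_filter]
    exact ⟨fun h => h.2, fun h => ⟨hut h, h⟩⟩
  have hUE : ∀ j ∈ U, j ∈ E := fun j hj => (Finset.mem_filter.1 hj).1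
  set Q : (Fin d → ℤ) → Finset (Fin d → ℤ) := fun b =>
    Fintype.piFinset fun k => Finset.Ioc (b k - 2 * r b) (b k + r b) with hQ
  have hQcard : ∀ b, (Q b).card = 3 ^ d * r b ^ d := by
    intro b
    simp only [hQ, Fintype.card_piFinset, Int.card_Ioc]
    have : ∀ k : Fin d, (b k + r b - (b k - 2 * r b)).toNat = 3 * r b := by intro k; omega
    simp only [this]
    simp [mul_pow]
  have hEQ : E ⊆ U.biUnion Q := by
    intro a ha
    obtain ⟨b, hbu, ⟨z, hza, hzb⟩, hab⟩ := hcov a ha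
    rw [Finset.mem_biUnion]
    refine ⟨b, (hUu b).2 hbu, ?_⟩
    have hab' : r a ≤ 2 * r b := by exact_mod_cast hab
    simp only [hB, Finset.coe_image, Set.mem_image, Finset.mem_coe] at hza hzb
    obtain ⟨i, hi, rfl⟩ := hza
    obtain ⟨i', hi', hii⟩ := hzb
    rw [mem_Fbox] at hi hi'
    simp only [hQ, Fintype.mem_piFinset, Finset.mem_Ioc]
    intro k
    have h1 := hi k
    have h2 := hi' k
    have h3 := congrFun hii k
    simp only [Pi.add_apply] at h3
    omega
  have hsumB : ∀ b, ∑ i ∈ B b, φ i = ∑ i ∈ Fbox d (r b), φ (i + b) := by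
    intro b
    rw [hB, Finset.sum_image]
    intro x _ y _ hxy
    exact add_right_cancel hxy
  calc lam * (E.card : ENNReal) ≤ lam * (∑ b ∈ U, (3 : ENNReal) ^ d * (r b : ENNReal) ^ d) := by
        gcongr
        calc (E.card : ENNReal) ≤ ((∑ b ∈ U, (Q b).card : ℕ) : ENNReal) := by
              exact_mod_cast (Finset.card_le_card hEQ).trans Finset.card_biUnion_le
          _ = _ := by simp [hQcard]
    _ = 3 ^ d * ∑ b ∈ U, lam * (r b : ENNReal) ^ d := by
        rw [Finset.mul_sum, Finset.mul_sum]
        refine Finset.sum_congr rfl fun b _ => by ring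
    _ ≤ 3 ^ d * ∑ b ∈ U, ∑ i ∈ B b, φ i := by
        gcongr with b hb
        rw [hsumB]
        exact h b (hUE b hb)
    _ = 3 ^ d * ∑ i ∈ U.biUnion B, φ i := by
        rw [Finset.sum_biUnion]
        intro x hx y hy hxy
        have := hdisj ((hUu x).1 hx) ((hUu y).1 hy) hxy
        exact Finset.disjoint_coe.1 this
    _ ≤ 3 ^ d * ∑ i ∈ F, φ i := by
        gcongr
        intro z hz
        rw [Finset.mem_biUnion] at hz
        obtain ⟨b, hb, hz⟩ := hz
        simp only [hB, Finset.mem_image] at hz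
        obtain ⟨i, hi, rfl⟩ := hz
        exact hF b (hUE b hb) i hi

section erg
variable {Ω : Type*} [MeasurableSpace Ω] {ν : Measure Ω} {d : ℕ}
  {S : (Fin d → ℤ) → Ω → Ω}

lemma maximal_aux [IsProbabilityMeasure ν] (hS : ∀ j, MeasurePreserving (S j) ν ν)
    (hadd : ∀ i j, S (i + j) = S i ∘ S j)
    {g : Ω → ENNReal} (hg : Measurable g) (lam : ENNReal) (N : ℕ) (hN : 1 ≤ N) :
    lam * ν {x | ∃ n, 1 ≤ n ∧ n ≤ N ∧ lam * (n : ENNReal) ^ d ≤ ∑ j ∈ Fbox d n, g (S j x)}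
      ≤ 6 ^ d * ∫⁻ x, g x ∂ν := by
  set E := {x | ∃ n, 1 ≤ n ∧ n ≤ N ∧ lam * (n : ENNReal) ^ d ≤ ∑ j ∈ Fbox d n, g (S j x)} with hE
  have hEm : MeasurableSet E := by
    have : E = ⋃ n, ⋃ (_ : 1 ≤ n ∧ n ≤ N),
        {x | lam * (n : ENNReal) ^ d ≤ ∑ j ∈ Fbox d n, g (S j x)} := by
      ext x; simp [hE, and_assoc]
    rw [this]
    refine MeasurableSet.iUnion fun n => MeasurableSet.iUnion fun _ => ?_
    refine measurableSet_le measurable_const ?_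
    exact Finset.measurable_sum _ fun j _ => hg.comp (hS j).measurable
  have key : ∀ x, lam * ∑ j ∈ Fbox d N, E.indicator (fun _ => (1 : ENNReal)) (S j x)
      ≤ 3 ^ d * ∑ i ∈ Fbox d (2 * N), g (S i x) := by
    intro x
    have h1 : ∀ j : Fin d → ℤ, ∃ n : ℕ, S j x ∈ E → 1 ≤ n ∧ n ≤ N ∧
        lam * (n : ENNReal) ^ d ≤ ∑ i ∈ Fbox d n, g (S (i + j) x) := by
      intro j
      by_cases hj : S j x ∈ E
      · obtain ⟨n, hn⟩ := hj
        refine ⟨n, fun _ => ?_⟩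
        simpa [hadd] using hn
      · exact ⟨0, fun h => absurd h hj⟩
    choose r hr using h1
    have := vitali_box (fun i => g (S i x)) lam ((Fbox d N).filter fun j => S j x ∈ E)
      (Fbox d (2 * N)) r (fun j hj => (hr j (Finset.mem_filter.1 hj).2).1)
      (by
        intro j hj i hi
        have h2 := (hr j (Finset.mem_filter.1 hj).2).2.1
        have h3 := (Finset.mem_filter.1 hj).1
        rw [mem_Fbox] at hi h3 ⊢
        intro k
        have := hi k
        have := h3 k
        simp only [Pi.add_apply]
        push_cast
        omega)
      (fun j hj => (hr j (Finset.mem_filter.1 hj).2).2.2)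
    refine le_trans (le_of_eq ?_) this
    congr 1
    simp [Set.indicator_apply, Finset.sum_ite]
  have hIntg := lintegral_mono (μ := ν) key
  have hind : Measurable (E.indicator (fun _ => (1 : ENNReal))) := measurable_const.indicator hEm
  have m1 : ∀ j, Measurable fun x => E.indicator (fun _ => (1 : ENNReal)) (S j x) :=
    fun j => hind.comp (hS j).measurable
  have m2 : ∀ j, Measurable fun x => g (S j x) := fun j => hg.comp (hS j).measurable
  rw [lintegral_const_mul _ (Finset.measurable_sum _ fun j _ => m1 j),
    lintegral_const_mul _ (Finset.measurable_sum _ fun j _ => m2 j),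
    lintegral_finsetSum _ (fun j _ => m1 j),
    lintegral_finsetSum _ (fun j _ => m2 j)] at hIntg
  have e1 : ∀ j, ∫⁻ x, E.indicator (fun _ => (1 : ENNReal)) (S j x) ∂ν = ν E := by
    intro j
    rw [(hS j).lintegral_comp hind, lintegral_indicator hEm]; simp
  have e2 : ∀ j, ∫⁻ x, g (S j x) ∂ν = ∫⁻ x, g x ∂ν := fun j => (hS j).lintegral_comp hg
  simp only [e1, e2, Finset.sum_const, card_Fbox, nsmul_eq_mul] at hIntg
  have hNd0 : ((N ^ d : ℕ) : ENNReal) ≠ 0 := by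
    have : N ^ d ≠ 0 := by positivity
    exact_mod_cast this
  have hNd1 : ((N ^ d : ℕ) : ENNReal) ≠ ⊤ := ENNReal.natCast_ne_top _
  refine (ENNReal.mul_le_mul_iff_right hNd0 hNd1).1 ?_
  calc ((N ^ d : ℕ) : ENNReal) * (lam * ν E) = lam * (((N ^ d : ℕ) : ENNReal) * ν E) := by ring
    _ ≤ _ := hIntg
    _ = _ := by
      push_cast
      rw [show (6 : ENNReal) = 3 * 2 by norm_num]
      simp only [mul_pow]
      ring

lemma ae_all_translates (hS : ∀ j, MeasurePreserving (S j) ν ν) {p : Ω → Prop}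
    (hp : ∀ᵐ x ∂ν, p x) : ∀ᵐ x ∂ν, ∀ j, p (S j x) :=
  ae_all_iff.2 fun j => (hS j).quasiMeasurePreserving.ae hp

lemma maximal_ineq [IsProbabilityMeasure ν] (hS : ∀ j, MeasurePreserving (S j) ν ν)
    (hadd : ∀ i j, S (i + j) = S i ∘ S j)
    {g : Ω → ENNReal} (hg : AEMeasurable g ν) (lam : ENNReal) :
    lam * ν {x | ∃ n : ℕ, 1 ≤ n ∧ lam * (n : ENNReal) ^ d ≤ ∑ j ∈ Fbox d n, g (S j x)}
      ≤ 6 ^ d * ∫⁻ x, g x ∂ν := by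
  obtain ⟨g', hg', hgg⟩ := hg
  have hae := ae_all_translates hS hgg
  have e1 : ν {x | ∃ n : ℕ, 1 ≤ n ∧ lam * (n : ENNReal) ^ d ≤ ∑ j ∈ Fbox d n, g (S j x)}
      = ν {x | ∃ n : ℕ, 1 ≤ n ∧ lam * (n : ENNReal) ^ d ≤ ∑ j ∈ Fbox d n, g' (S j x)} := by
    refine measure_congr ?_
    filter_upwards [hae] with x hx
    apply propext
    show (∃ n : ℕ, _) ↔ (∃ n : ℕ, _)
    simp only [hx]
  rw [e1, lintegral_congr_ae hgg]
  have e2 : {x | ∃ n : ℕ, 1 ≤ n ∧ lam * (n : ENNReal) ^ d ≤ ∑ j ∈ Fbox d n, g' (S j x)}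
     = ⋃ N : ℕ, {x | ∃ n, 1 ≤ n ∧ n ≤ N + 1 ∧
        lam * (n : ENNReal) ^ d ≤ ∑ j ∈ Fbox d n, g' (S j x)} := by
    ext x
    simp only [Set.mem_ofPred_eq, Set.mem_iUnion]
    constructor
    · rintro ⟨n, h1, h2⟩
      exact ⟨n, n, h1, by omega, h2⟩
    · rintro ⟨_, n, h1, _, h2⟩
      exact ⟨n, h1, h2⟩
  rw [e2, Monotone.measure_iUnion, ENNReal.mul_iSup]
  · exact iSup_le fun N => maximal_aux hS hadd hg' lam (N + 1) (by omega)
  · intro a b hab x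
    rintro ⟨n, h1, h2, h3⟩
    exact ⟨n, h1, by omega, h3⟩

end erg


section folner

lemma card_inter_shift (d n : ℕ) (j : Fin d → ℤ) :
    (n - ∑ k, (j k).natAbs) ^ d ≤ (Fbox d n ∩ (Fbox d n).image (fun i => i + j)).card := by
  set m := ∑ k, (j k).natAbs with hm
  have hjm : ∀ k, (j k).natAbs ≤ m := fun k =>
    Finset.single_le_sum (f := fun k => (j k).natAbs) (fun _ _ => Nat.zero_le _) (Finset.mem_univ k)
  rw [← card_Fbox]
  refine Finset.card_le_card_of_injOn (fun i => fun k => i k + max 0 (j k)) ?_ ?_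
  · intro i hi
    rw [Finset.mem_coe, mem_Fbox] at hi
    simp only [Finset.coe_inter, Set.mem_inter_iff, Finset.mem_coe, Finset.mem_image]
    refine ⟨?_, fun k => i k + max 0 (j k) - j k, ?_, ?_⟩
    · rw [mem_Fbox]; intro k
      have := hi k; have := hjm k
      rcases le_total 0 (j k) with h | h <;> simp [h] <;> omega
    · rw [mem_Fbox]; intro k
      have := hi k; have := hjm k
      rcases le_total 0 (j k) with h | h <;> simp [h] <;> omega
    · funext k; simp
  · intro a _ b _ hab
    funext k
    have := congrFun hab k
    simpa using this

lemma tendsto_pow_ratio (d m : ℕ) :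
    Tendsto (fun n : ℕ => (((n - m : ℕ) : ℝ)) ^ d / (n : ℝ) ^ d) atTop (nhds 1) := by
  have h1 : Tendsto (fun n : ℕ => 1 - (m : ℝ) / (n : ℝ)) atTop (nhds (1 - 0)) :=
    tendsto_const_nhds.sub (tendsto_const_div_atTop_nhds_zero_nat _)
  have h2 : Tendsto (fun n : ℕ => (1 - (m : ℝ) / (n : ℝ)) ^ d) atTop (nhds 1) := by
    simpa using h1.pow d
  refine h2.congr' ?_
  filter_upwards [eventually_ge_atTop (m + 1)] with n hn
  rw [← div_pow]
  congr 1
  have : (n : ℝ) ≠ 0 := by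
    have : n ≠ 0 := by omega
    exact_mod_cast this
  rw [Nat.cast_sub (by omega)]
  field_simp

lemma shift_diff_bound {d : ℕ} (a : (Fin d → ℤ) → ℝ) (C : ℝ) (hC : ∀ i, |a i| ≤ C)
    (j : Fin d → ℤ) (n : ℕ) :
    |∑ i ∈ Fbox d n, (a i - a (i + j))| ≤
      2 * C * ((n : ℝ) ^ d - ((n - ∑ k, (j k).natAbs : ℕ) : ℝ) ^ d) := by
  have hC0 : 0 ≤ C := (abs_nonneg _).trans (hC 0)
  set F := Fbox d n
  set F' := (Fbox d n).image (fun i => i + j) with hF'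
  have hinj : Function.Injective (fun i : Fin d → ℤ => i + j) := add_left_injective j
  have hc' : F'.card = n ^ d := by
    rw [hF', Finset.card_image_of_injective _ hinj, card_Fbox]
  have hc : F.card = n ^ d := card_Fbox _ _
  have hs : ∑ i ∈ F, (a i - a (i + j)) = ∑ i ∈ F \ F', a i - ∑ i ∈ F' \ F, a i := by
    rw [Finset.sum_sub_distrib, Finset.sum_sdiff_sub_sum_sdiff]
    congr 1
    rw [hF', Finset.sum_image (fun x _ y _ h => hinj h)]
  have hb : ∀ s : Finset (Fin d → ℤ), |∑ i ∈ s, a i| ≤ s.card * C := by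
    intro s
    refine (Finset.abs_sum_le_sum_abs _ _).trans ?_
    refine (Finset.sum_le_sum fun i _ => hC i).trans ?_
    simp
  have hIntg := card_inter_shift d n j
  have h1 : ((F \ F').card : ℝ) ≤ (n : ℝ) ^ d - ((n - ∑ k, (j k).natAbs : ℕ) : ℝ) ^ d := by
    have := Finset.card_sdiff_add_card_inter F F'
    rw [hc] at this
    have h2 : ((F \ F').card : ℝ) + (F ∩ F').card = (n : ℝ) ^ d := by exact_mod_cast this
    have h3 : (((n - ∑ k, (j k).natAbs : ℕ) : ℝ)) ^ d ≤ (F ∩ F').card := by exact_mod_cast hIntg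
    linarith
  have h1' : ((F' \ F).card : ℝ) ≤ (n : ℝ) ^ d - ((n - ∑ k, (j k).natAbs : ℕ) : ℝ) ^ d := by
    have := Finset.card_sdiff_add_card_inter F' F
    rw [hc', Finset.inter_comm] at this
    have h2 : ((F' \ F).card : ℝ) + (F ∩ F').card = (n : ℝ) ^ d := by exact_mod_cast this
    have h3 : (((n - ∑ k, (j k).natAbs : ℕ) : ℝ)) ^ d ≤ (F ∩ F').card := by exact_mod_cast hIntg
    linarith
  rw [hs]
  calc _ ≤ |∑ i ∈ F \ F', a i| + |∑ i ∈ F' \ F, a i| := abs_sub _ _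
    _ ≤ (F \ F').card * C + (F' \ F).card * C := add_le_add (hb _) (hb _)
    _ ≤ _ := by nlinarith
  
end folner

section erg
variable {Ω : Type*} [mΩ : MeasurableSpace Ω] {ν : Measure Ω} {d : ℕ}
  {S : (Fin d → ℤ) → Ω → Ω}

/-- ergodic averages -/
def avg (S : (Fin d → ℤ) → Ω → Ω) (g : Ω → ℝ) (n : ℕ) (x : Ω) : ℝ :=
  (∑ j ∈ Fbox d n, g (S j x)) / ((Fbox d n).card : ℝ)

/-- the invariant sigma-algebra -/
@[reducible] def invSA (S : (Fin d → ℤ) → Ω → Ω) : MeasurableSpace Ω :=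
  ⨅ j, MeasurableSpace.invariants (S j)

lemma measurableSet_invSA {A : Set Ω} :
    MeasurableSet[invSA S] A ↔ MeasurableSet A ∧ ∀ j, S j ⁻¹' A = A := by
  rw [invSA, MeasurableSpace.measurableSet_iInf]
  simp only [MeasurableSpace.measurableSet_invariants]
  exact ⟨fun h => ⟨(h 0).1, fun j => (h j).2⟩, fun h j => ⟨h.1, h.2 j⟩⟩

lemma invSA_le : invSA S ≤ mΩ := fun _ hA => (measurableSet_invSA.1 hA).1

/-- averages converge a.e. to the conditional expectation -/
def Good (ν : Measure Ω) (S : (Fin d → ℤ) → Ω → Ω) (g : Ω → ℝ) : Prop :=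
  ∀ᵐ x ∂ν, Tendsto (fun n => avg S g n x) atTop (nhds ((ν[g | invSA S]) x))

lemma Good.congr (hS : ∀ j, MeasurePreserving (S j) ν ν) {g g' : Ω → ℝ} (h : g =ᵐ[ν] g')
    (hg : Good ν S g) : Good ν S g' := by
  have h1 := ae_all_translates hS h
  filter_upwards [hg, h1, condExp_congr_ae (m := invSA S) h] with x hx hx1 hx2
  rw [← hx2]
  simpa [avg, hx1] using hx

lemma good_coboundary [IsProbabilityMeasure ν] (hS : ∀ j, MeasurePreserving (S j) ν ν)
    (hadd : ∀ i j, S (i + j) = S i ∘ S j) {h : Ω → ℝ} (hm : Measurable h) (C : ℝ)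
    (hC : ∀ x, |h x| ≤ C) (j : Fin d → ℤ) : Good ν S (fun x => h x - h (S j x)) := by
  have hi : Integrable h ν := Integrable.of_bound hm.aestronglyMeasurable C (ae_of_all _ hC)
  have hi' : Integrable (fun x => h (S j x)) ν :=
    Integrable.of_bound (hm.comp (hS j).measurable).aestronglyMeasurable C
      (ae_of_all _ fun x => hC _)
  have h0 : (fun _ => (0 : ℝ)) =ᵐ[ν] ν[(fun x => h x - h (S j x)) | invSA S] := by
    refine ae_eq_condExp_of_forall_setIntegral_eq invSA_le (hi.sub hi') ?_ ?_ ?_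
    · intro s _ _
      simp
    · intro s hs _
      obtain ⟨hs1, hs2⟩ := measurableSet_invSA.1 hs
      have e : ∫ x in s, h (S j x) ∂ν = ∫ x in s, h x ∂ν := by
        have := setIntegral_map (μ := ν) (g := S j) hs1 (f := h)
          hm.aestronglyMeasurable (hS j).measurable.aemeasurable
        rw [(hS j).map_eq, hs2 j] at this
        exact this.symm
      rw [integral_sub hi.integrableOn hi'.integrableOn, e]
      simp
    · exact stronglyMeasurable_const.aestronglyMeasurable
  filter_upwards [h0] with x hx
  rw [← hx]
  have hlim : Tendsto (fun n : ℕ => 2 * C * (1 - (((n - ∑ k, (j k).natAbs : ℕ) : ℝ)) ^ d /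
      (n : ℝ) ^ d)) atTop (nhds 0) := by
    have := ((tendsto_const_nhds (x := (1 : ℝ))).sub
      (tendsto_pow_ratio d (∑ k, (j k).natAbs))).const_mul (2 * C)
    simpa using this
  refine squeeze_zero_norm' ?_ hlim
  filter_upwards [eventually_ge_atTop 1] with n hn
  have hb := shift_diff_bound (fun i => h (S i x)) C (fun i => hC _) j n
  have hn' : (0 : ℝ) < (n : ℝ) ^ d := by positivity
  rw [avg, card_Fbox, norm_div, Real.norm_eq_abs]
  push_cast
  rw [Real.norm_eq_abs, abs_of_pos hn', div_le_iff₀ hn']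
  refine le_trans (le_of_eq ?_) (hb.trans (le_of_eq ?_))
  · congr 1
    refine Finset.sum_congr rfl fun i _ => ?_
    rw [add_comm i j, hadd]; rfl
  · field_simp

lemma good_invariant [IsProbabilityMeasure ν] (hS : ∀ j, MeasurePreserving (S j) ν ν)
    (hadd : ∀ i j, S (i + j) = S i ∘ S j) {w : Ω → ℝ} (hw : Integrable w ν)
    (hinv : ∀ j, (fun x => w (S j x)) =ᵐ[ν] w) : Good ν S w := by
  obtain ⟨w0, hw0m, hw0⟩ : ∃ w0, Measurable w0 ∧ w =ᵐ[ν] w0 := hw.aemeasurable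
  have htr := ae_all_translates hS hw0
  have hall : ∀ᵐ x ∂ν, ∀ j, w (S j x) = w x := ae_all_iff.2 hinv
  set W : Ω → EReal := fun x => ⨆ j, ((w0 (S j x) : ℝ) : EReal) with hW
  have hWm : Measurable W := Measurable.iSup fun j =>
    (hw0m.comp (hS j).measurable).coe_real_ereal
  have hWinv : ∀ i x, W (S i x) = W x := by
    intro i x
    simp only [hW]
    rw [← (Equiv.addRight i).iSup_comp (g := fun j => ((w0 (S j x) : ℝ) : EReal))]
    refine iSup_congr fun j => ?_
    simp [hadd]
  have hWr : StronglyMeasurable[invSA S] (fun x => (W x).toReal) := by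
    refine Measurable.stronglyMeasurable ?_
    intro B hB
    refine measurableSet_invSA.2 ⟨?_, ?_⟩
    · exact (hWm.ereal_toReal) hB
    · intro j
      ext x
      simp [hWinv]
  have hwW : w =ᵐ[ν] fun x => (W x).toReal := by
    filter_upwards [htr, hall] with x h1 h2
    have : W x = ((w x : ℝ) : EReal) := by
      simp only [hW, ← h1, h2]
      exact ciSup_const
    rw [this]; simp
  have hc : ν[w | invSA S] =ᵐ[ν] w := by
    refine (condExp_congr_ae hwW).trans ?_
    rw [condExp_of_stronglyMeasurable invSA_le hWr (hw.congr hwW)]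
    exact hwW.symm
  filter_upwards [hc, hall] with x h1 h2
  rw [h1]
  refine tendsto_const_nhds.congr' ?_
  filter_upwards [eventually_ge_atTop 1] with n hn
  have hn' : (0 : ℝ) < (n : ℝ) ^ d := by positivity
  simp only [avg, h2, card_Fbox, Finset.sum_const, nsmul_eq_mul]
  push_cast
  field_simp

lemma avg_sub (g g' : Ω → ℝ) (n : ℕ) (x : Ω) :
    avg S (fun y => g y - g' y) n x = avg S g n x - avg S g' n x := by
  simp [avg, Finset.sum_sub_distrib, sub_div]

lemma good_closed [IsProbabilityMeasure ν] (hS : ∀ j, MeasurePreserving (S j) ν ν)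
    (hadd : ∀ i j, S (i + j) = S i ∘ S j) {g : Ω → ℝ} (hg : Integrable g ν)
    (happ : ∀ η : ENNReal, η ≠ 0 → ∃ g', Integrable g' ν ∧ Good ν S g' ∧
      eLpNorm (fun x => g x - g' x) 1 ν ≤ η) : Good ν S g := by
  have main : ∀ lam : ℝ, 0 < lam →
      ∀ᵐ x ∂ν, ∀ᶠ n in atTop, |avg S g n x - (ν[g | invSA S]) x| ≤ 3 * lam := by
    intro lam hlam
    have hl0 : ENNReal.ofReal lam ≠ 0 := by simpa using hlam
    rw [ae_iff]
    set bad := {x | ¬ ∀ᶠ n in atTop, |avg S g n x - (ν[g | invSA S]) x| ≤ 3 * lam} with hbad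
    have hb : ∀ η : ENNReal, η ≠ 0 → ENNReal.ofReal lam * ν bad ≤ (6 ^ d + 1) * η := by
      intro η hη
      obtain ⟨g', hg', hgood, hle⟩ := happ η hη
      set u : Ω → ℝ := fun x => g x - g' x with hu
      have hui : Integrable u ν := hg.sub hg'
      set E1 := {x | ∃ n : ℕ, 1 ≤ n ∧
        ENNReal.ofReal lam * (n : ENNReal) ^ d ≤ ∑ j ∈ Fbox d n, ‖u (S j x)‖ₑ} with hE1
      set E2 := {x | ENNReal.ofReal lam ≤ ‖(ν[u | invSA S]) x‖ₑ} with hE2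
      have hm1 : ENNReal.ofReal lam * ν E1 ≤ 6 ^ d * ∫⁻ x, ‖u x‖ₑ ∂ν :=
        maximal_ineq hS hadd hui.aestronglyMeasurable.enorm _
      have hm2 : ENNReal.ofReal lam * ν E2 ≤ ∫⁻ x, ‖(ν[u | invSA S]) x‖ₑ ∂ν :=
        mul_meas_ge_le_lintegral₀ integrable_condExp.aestronglyMeasurable.enorm _
      have hm3 : ∫⁻ x, ‖(ν[u | invSA S]) x‖ₑ ∂ν ≤ ∫⁻ x, ‖u x‖ₑ ∂ν := by
        have := eLpNorm_one_condExp_le_eLpNorm (μ := ν) (m := invSA S) u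
        simpa [eLpNorm_one_eq_lintegral_enorm] using this
      have hle' : ∫⁻ x, ‖u x‖ₑ ∂ν ≤ η := by
        simpa [eLpNorm_one_eq_lintegral_enorm] using hle
      have hsub : ν bad ≤ ν (E1 ∪ E2) := by
        refine measure_mono_ae ?_
        filter_upwards [hgood, condExp_sub hg hg' (invSA S)] with x hx1 hx2 hxbad
        by_contra hno
        apply hxbad
        have hno1 : x ∉ E1 := fun h => hno (Or.inl h)
        have hno2 : x ∉ E2 := fun h => hno (Or.inr h)
        have hEu : |(ν[u | invSA S]) x| < lam := by
          simp only [hE2, Set.mem_ofPred_eq, not_le] at hno2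
          rw [Real.enorm_eq_ofReal_abs] at hno2
          exact (ENNReal.ofReal_lt_ofReal_iff hlam).1 hno2
        have hx2' : (ν[u | invSA S]) x = (ν[g | invSA S]) x - (ν[g' | invSA S]) x := hx2
        have hav : ∀ n, 1 ≤ n → |avg S u n x| ≤ lam := by
          intro n hn
          have hn' : (0 : ℝ) < (n : ℝ) ^ d := by positivity
          have : ¬ (ENNReal.ofReal lam * (n : ENNReal) ^ d ≤ ∑ j ∈ Fbox d n, ‖u (S j x)‖ₑ) :=
            fun h => hno1 ⟨n, hn, h⟩
          rw [not_le] at this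
          simp only [Real.enorm_eq_ofReal_abs] at this
          rw [← ENNReal.ofReal_sum_of_nonneg (fun _ _ => abs_nonneg _),
            ← ENNReal.ofReal_natCast, ← ENNReal.ofReal_pow (Nat.cast_nonneg _),
            ← ENNReal.ofReal_mul hlam.le, ENNReal.ofReal_lt_ofReal_iff (by positivity)] at this
          rw [avg, card_Fbox, abs_div]
          push_cast
          rw [abs_of_pos hn', div_le_iff₀ hn']
          exact (Finset.abs_sum_le_sum_abs _ _).trans this.le
        have hev : ∀ᶠ n in atTop, |avg S g' n x - (ν[g' | invSA S]) x| < lam := by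
          have := (Metric.tendsto_nhds.1 hx1) lam hlam
          simpa [Real.dist_eq] using this
        filter_upwards [hev, eventually_ge_atTop 1] with n hn1 hn2
        have h3 := hav n hn2
        rw [hu, avg_sub] at h3
        rw [hx2'] at hEu
        rw [abs_le] at *
        rw [abs_lt] at *
        constructor <;> linarith [h3.1, h3.2, hn1.1, hn1.2, hEu.1, hEu.2]
      calc ENNReal.ofReal lam * ν bad ≤ ENNReal.ofReal lam * (ν E1 + ν E2) := by
            gcongr
            exact hsub.trans (measure_union_le _ _)
        _ ≤ 6 ^ d * η + η := by
            rw [mul_add]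
            refine add_le_add (hm1.trans ?_) (hm2.trans (hm3.trans hle'))
            gcongr
        _ = _ := by ring
    have hz : ENNReal.ofReal lam * ν bad ≤ (6 ^ d + 1) * 0 := by
      have ht : Tendsto (fun η : ENNReal => (6 ^ d + 1) * η) (nhdsWithin 0 (Set.Ioi 0))
          (nhds ((6 ^ d + 1) * 0)) :=
        (ENNReal.Tendsto.const_mul tendsto_id (Or.inr (by finiteness))).mono_left nhdsWithin_le_nhds
      refine ge_of_tendsto ht ?_
      filter_upwards [self_mem_nhdsWithin] with η hη
      exact hb η (ne_of_gt hη)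
    simpa [hl0, hlam] using hz
  have hall : ∀ᵐ x ∂ν, ∀ k : ℕ, ∀ᶠ n in atTop,
      |avg S g n x - (ν[g | invSA S]) x| ≤ 3 * (1 / ((k : ℝ) + 1)) :=
    ae_all_iff.2 fun k => main _ (by positivity)
  filter_upwards [hall] with x hx
  rw [Metric.tendsto_nhds]
  intro ε hε
  obtain ⟨k, hk⟩ := exists_nat_one_div_lt (show 0 < ε / 3 by positivity)
  filter_upwards [hx k] with n hn
  rw [Real.dist_eq]
  linarith
end erg


section erg
variable {Ω : Type*} [mΩ : MeasurableSpace Ω] {ν : Measure Ω} {d : ℕ}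
  {S : (Fin d → ℤ) → Ω → Ω}

lemma good_cob_L1 [IsProbabilityMeasure ν] (hS : ∀ j, MeasurePreserving (S j) ν ν)
    (hadd : ∀ i j, S (i + j) = S i ∘ S j) {w : Ω → ℝ} (hw : Integrable w ν)
    (j : Fin d → ℤ) : Good ν S (fun x => w x - w (S j x)) := by
  have hwS : ∀ {v : Ω → ℝ}, Integrable v ν → Integrable (fun x => v (S j x)) ν :=
    fun hv => (hS j).integrable_comp_of_integrable hv
  refine good_closed hS hadd (hw.sub (hwS hw)) ?_
  intro η hη
  have hη2 : η / 2 ≠ 0 := by simpa using hη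
  obtain ⟨h, hh1, hh2⟩ := (memLp_one_iff_integrable.2 hw).exists_simpleFunc_eLpNorm_sub_lt
    ENNReal.one_ne_top hη2
  obtain ⟨C, hC⟩ := h.exists_forall_norm_le
  have hhi : Integrable h ν := memLp_one_iff_integrable.1 hh2
  refine ⟨fun x => h x - h (S j x), hhi.sub (hwS hhi),
    good_coboundary hS hadd h.measurable C hC j, ?_⟩
  have e : (fun x => w x - w (S j x) - (h x - h (S j x))) = (w - ⇑h) - (w - ⇑h) ∘ S j := by
    funext x; simp; ring
  rw [e]
  have hm : AEStronglyMeasurable (w - ⇑h) ν := (hw.sub hhi).aestronglyMeasurable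
  refine (eLpNorm_sub_le hm (hm.comp_measurePreserving (hS j)) le_rfl).trans ?_
  rw [eLpNorm_comp_measurePreserving hm (hS j)]
  calc _ ≤ η / 2 + η / 2 := add_le_add hh1.le hh1.le
    _ = η := ENNReal.add_halves η

lemma Good.add [IsProbabilityMeasure ν] {g g' : Ω → ℝ} (hgi : Integrable g ν)
    (hgi' : Integrable g' ν) (hg : Good ν S g) (hg' : Good ν S g') :
    Good ν S (fun x => g x + g' x) := by
  filter_upwards [hg, hg', condExp_add hgi hgi' (invSA S)] with x h1 h2 h3
  have h3' : (ν[(fun x => g x + g' x) | invSA S]) x = (ν[g | invSA S]) x + (ν[g' | invSA S]) x := h3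
  rw [h3']
  simpa [avg, Finset.sum_add_distrib, add_div] using h1.add h2

lemma Good.smul [IsProbabilityMeasure ν] {g : Ω → ℝ} (c : ℝ) (hg : Good ν S g) :
    Good ν S (fun x => c * g x) := by
  filter_upwards [hg, condExp_smul (μ := ν) c g (invSA S)] with x h1 h3
  have h3' : (ν[(fun x => c * g x) | invSA S]) x = c * (ν[g | invSA S]) x := h3
  rw [h3']
  simpa [avg, ← Finset.mul_sum, mul_div_assoc] using h1.const_mul c

/-- the L² functions for which the ergodic theorem holds -/
def goodSub [IsProbabilityMeasure ν] (hS : ∀ j, MeasurePreserving (S j) ν ν) :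
    Submodule ℝ (Lp ℝ 2 ν) where
  carrier := {w | Good ν S w}
  add_mem' := by
    intro a b ha hb
    have hai : Integrable a ν := (Lp.memLp a).integrable (by norm_num)
    have hbi : Integrable b ν := (Lp.memLp b).integrable (by norm_num)
    exact (Good.add hai hbi ha hb).congr hS (Lp.coeFn_add a b).symm
  zero_mem' := by
    have h0 : Good ν S (fun _ => (0 : ℝ)) := by
      refine ae_of_all _ fun x => ?_
      have : (ν[(fun _ => (0 : ℝ)) | invSA S]) = 0 := condExp_zero
      rw [this]
      simp [avg]
    exact h0.congr hS (Lp.coeFn_zero _ _ _).symm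
  smul_mem' := by
    intro c a ha
    exact (Good.smul c ha).congr hS (Lp.coeFn_smul c a).symm

lemma goodSub_closed [IsProbabilityMeasure ν] (hS : ∀ j, MeasurePreserving (S j) ν ν)
    (hadd : ∀ i j, S (i + j) = S i ∘ S j) :
    IsClosed ((goodSub hS : Submodule ℝ (Lp ℝ 2 ν)) : Set (Lp ℝ 2 ν)) := by
  refine isClosed_of_closure_subset ?_
  intro w hw
  have hLi : ∀ v : Lp ℝ 2 ν, Integrable v ν := fun v => (Lp.memLp v).integrable (by norm_num)
  refine good_closed hS hadd (hLi w) ?_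
  intro η hη
  obtain ⟨v, hv, hd⟩ := EMetric.mem_closure_iff.1 hw η (pos_iff_ne_zero.2 hη)
  refine ⟨v, hLi v, hv, ?_⟩
  rw [Lp.edist_def] at hd
  refine le_trans ?_ hd.le
  exact eLpNorm_le_eLpNorm_of_exponent_le (by norm_num)
    ((Lp.aestronglyMeasurable w).sub (Lp.aestronglyMeasurable v))

lemma goodSub_eq_top [IsProbabilityMeasure ν] (hS : ∀ j, MeasurePreserving (S j) ν ν)
    (hadd : ∀ i j, S (i + j) = S i ∘ S j) : goodSub hS = ⊤ := by
  have : IsClosed ((goodSub hS : Submodule ℝ (Lp ℝ 2 ν)) : Set (Lp ℝ 2 ν)) :=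
    goodSub_closed hS hadd
  have : CompleteSpace (goodSub hS : Submodule ℝ (Lp ℝ 2 ν)) := this.completeSpace_coe
  rw [← Submodule.orthogonal_eq_bot_iff]
  rw [eq_bot_iff]
  intro w hw
  have hLi : ∀ v : Lp ℝ 2 ν, Integrable v ν := fun v => (Lp.memLp v).integrable (by norm_num)
  have hU : ∀ j, Lp.compMeasurePreserving (S j) (hS j) w = w := by
    intro j
    set U := Lp.compMeasurePreserving (S j) (hS j) w with hUdef
    have hUco : (U : Ω → ℝ) =ᵐ[ν] fun x => w (S j x) :=
      Lp.coeFn_compMeasurePreserving w (hS j)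
    have hn : ‖U‖ = ‖w‖ := Lp.norm_compMeasurePreserving w (hS j)
    have hmem : w - U ∈ goodSub hS := by
      refine Good.congr hS ?_ (good_cob_L1 hS hadd (hLi w) j)
      filter_upwards [hUco, Lp.coeFn_sub w U] with x h1 h2
      rw [h2, Pi.sub_apply, h1]
    have h0 : inner ℝ (w - U) w = 0 := (Submodule.mem_orthogonal _ _).1 hw _ hmem
    have h1 : ‖w - U‖ ^ 2 = 0 := by
      rw [@norm_sub_sq_real]
      rw [inner_sub_left, real_inner_self_eq_norm_sq, real_inner_comm] at h0
      rw [hn]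
      linarith
    have h2 : w - U = 0 := by simpa using h1
    exact (sub_eq_zero.1 h2).symm
  have hwg : w ∈ goodSub hS := by
    refine good_invariant hS hadd (hLi w) ?_
    intro j
    have := Lp.coeFn_compMeasurePreserving w (hS j)
    rw [hU j] at this
    exact this.symm
  have := (Submodule.mem_orthogonal _ _).1 hw _ hwg
  simpa using this

/-- Wiener's pointwise ergodic theorem. -/
theorem pointwise_ergodic [IsProbabilityMeasure ν] (hS : ∀ j, MeasurePreserving (S j) ν ν)
    (hadd : ∀ i j, S (i + j) = S i ∘ S j) {g : Ω → ℝ} (hg : Integrable g ν) :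
    ∀ᵐ x ∂ν, Tendsto (fun n => avg S g n x) atTop (nhds ((ν[g | invSA S]) x)) := by
  refine good_closed hS hadd hg ?_
  intro η hη
  obtain ⟨h, hh1, hh2⟩ := (memLp_one_iff_integrable.2 hg).exists_simpleFunc_eLpNorm_sub_lt
    ENNReal.one_ne_top hη
  have h2 : MemLp h 2 ν := h.memLp_of_isFiniteMeasure 2 ν
  have hm : h2.toLp ∈ goodSub hS := by rw [goodSub_eq_top hS hadd]; trivial
  exact ⟨h, memLp_one_iff_integrable.1 hh2, Good.congr hS h2.coeFn_toLp hm, hh1.le⟩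

theorem pointwise_ergodic_const [IsProbabilityMeasure ν] (hS : ∀ j, MeasurePreserving (S j) ν ν)
    (hadd : ∀ i j, S (i + j) = S i ∘ S j)
    (herg : ∀ A : Set Ω, MeasurableSet A → (∀ j, S j ⁻¹' A = A) → ν A = 0 ∨ ν A = 1)
    {g : Ω → ℝ} (hg : Integrable g ν) :
    ∀ᵐ x ∂ν, Tendsto (fun n => avg S g n x) atTop (nhds (∫ y, g y ∂ν)) := by
  have h1 : ∃ c : ℝ, ν[g | invSA S] =ᵐ[ν] fun _ => c := by
    refine Filter.exists_eventuallyEq_const_of_forall_separating MeasurableSet ?_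
    intro U hU
    have hm : MeasurableSet[invSA S] ((ν[g | invSA S]) ⁻¹' U) :=
      stronglyMeasurable_condExp.measurable hU
    obtain ⟨h2, h3⟩ := measurableSet_invSA.1 hm
    rcases herg _ h2 h3 with h | h
    · right
      rw [ae_iff]; simp only [not_not]; exact h
    · left
      exact (mem_ae_iff_prob_eq_one h2).2 h
  obtain ⟨c, hc⟩ := h1
  have hcc : c = ∫ y, g y ∂ν := by
    rw [← integral_condExp (invSA_le (S := S)) (f := g), integral_congr_ae hc]
    simp
  filter_upwards [pointwise_ergodic hS hadd hg, hc] with x hx hx2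
  rw [← hcc, ← hx2]
  exact hx
end erg


section basics
variable {X : Type*} {d : ℕ} {T : (Fin d → ℤ) → X → X}

/-- eventually the square averages of the difference are at most `c` -/
def Cl (T : (Fin d → ℤ) → X → X) (f : X → ℂ) (x y : X) (c : ℝ) : Prop :=
  ∀ᶠ n in atTop, ∑ j ∈ Fbox d n, ‖f (T j x) - f (T j y)‖ ^ 2 ≤ c * ((Fbox d n).card : ℝ)

lemma dF_le_of_Cl {f : X → ℂ} {x y : X} {ε : ℝ} (hε : 0 ≤ ε) (h : Cl T f x y (ε ^ 2)) :
    dF T f x y ≤ ε := by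
  refine limsup_le_of_le ?_ ?_
  · exact isCoboundedUnder_le_of_le atTop (x := 0) (fun n => Real.sqrt_nonneg _)
  · filter_upwards [h] with n hn
    rw [Real.sqrt_le_left hε]
    exact div_le_of_le_mul₀ (Nat.cast_nonneg _) (sq_nonneg _) hn

lemma norm_sub_sq_le_two (a b : ℂ) : ‖a - b‖ ^ 2 ≤ 2 * ‖a‖ ^ 2 + 2 * ‖b‖ ^ 2 := by
  have h1 := norm_sub_le a b
  have h2 := norm_nonneg (a - b)
  nlinarith [sq_nonneg (‖a‖ - ‖b‖), norm_nonneg a, norm_nonneg b]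

lemma Cl_of_dF [MeasurableSpace X] {μ : Measure X} {f : X → ℂ} {x y : X} {ε ε' : ℝ}
    (hx : genericSq μ T f x) (hy : genericSq μ T f y) (hd : dF T f x y ≤ ε) (h0 : 0 ≤ ε)
    (hε : ε < ε') : Cl T f x y (ε' ^ 2) := by
  have hb : IsBoundedUnder (· ≤ ·) atTop (fun n : ℕ =>
    Real.sqrt ((∑ j ∈ Fbox d n, ‖f (T j x) - f (T j y)‖ ^ 2) / ((Fbox d n).card : ℝ))) := by
    have ht := (Real.continuous_sqrt.tendsto _).comp ((hx.const_mul 2).add (hy.const_mul 2))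
    refine ht.isBoundedUnder_le.mono_le ?_
    refine Eventually.of_forall fun n => ?_
    refine Real.sqrt_le_sqrt ?_
    beta_reduce
    rw [← mul_div_assoc, ← mul_div_assoc, ← add_div, Finset.mul_sum, Finset.mul_sum,
      ← Finset.sum_add_distrib]
    gcongr
    exact norm_sub_sq_le_two _ _
  have := eventually_lt_of_limsup_lt (lt_of_le_of_lt hd hε) hb
  filter_upwards [this, eventually_ge_atTop 1] with n hn hn1
  have hc : (0 : ℝ) < ((Fbox d n).card : ℝ) := by rw [card_Fbox]; positivity
  rw [Real.sqrt_lt' (h0.trans_lt hε), div_lt_iff₀ hc] at hn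
  exact hn.le

lemma dens_nonneg (P : Set (Fin d → ℤ)) (n : ℕ) :
    (0 : ℝ) ≤ (((Fbox d n).filter (fun j => j ∈ P)).card : ℝ) / ((Fbox d n).card : ℝ) := by
  positivity

lemma dens_le_one (P : Set (Fin d → ℤ)) (n : ℕ) :
    (((Fbox d n).filter (fun j => j ∈ P)).card : ℝ) / ((Fbox d n).card : ℝ) ≤ 1 := by
  refine div_le_one_of_le₀ ?_ (Nat.cast_nonneg _)
  exact_mod_cast Finset.card_filter_le _ _

lemma upperDensity_le_of {P : Set (Fin d → ℤ)} {c : ℝ}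
    (h : ∀ᶠ n in atTop,
      (((Fbox d n).filter (fun j => j ∈ P)).card : ℝ) / ((Fbox d n).card : ℝ) ≤ c) :
    upperDensity d P ≤ c :=
  limsup_le_of_le (isCoboundedUnder_le_of_le atTop (x := 0) (dens_nonneg P)) h

lemma upperDensity_mono {P Q : Set (Fin d → ℤ)} (h : P ⊆ Q) :
    upperDensity d P ≤ upperDensity d Q := by
  refine limsup_le_limsup ?_ (isCoboundedUnder_le_of_le atTop (x := 0) (dens_nonneg P))
    (isBoundedUnder_of ⟨1, dens_le_one Q⟩)
  refine Eventually.of_forall fun n => ?_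
  simp only
  gcongr

lemma rhoF_le_of_Cl {f : X → ℂ} {x y : X} {ε c : ℝ} (hε : 0 < ε) (hc : c < ε ^ 3)
    (h : Cl T f x y c) : rhoF T f x y ≤ ε := by
  refine csInf_le ⟨0, fun a ha => ha.1.le⟩ ⟨hε, ?_⟩
  refine lt_of_le_of_lt (b := c / ε ^ 2) (upperDensity_le_of ?_) ?_
  · filter_upwards [h, eventually_ge_atTop 1] with n hn hn1
    have hcard : (0 : ℝ) < ((Fbox d n).card : ℝ) := by rw [card_Fbox]; positivity
    rw [div_le_div_iff₀ hcard (by positivity)]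
    refine le_trans ?_ hn
    calc _ = ∑ j ∈ (Fbox d n).filter (fun j => j ∈ {i | ε < ‖f (T i x) - f (T i y)‖}), ε ^ 2 := by
          simp
      _ ≤ ∑ j ∈ (Fbox d n).filter (fun j => j ∈ {i | ε < ‖f (T i x) - f (T i y)‖}),
            ‖f (T j x) - f (T j y)‖ ^ 2 := by
          refine Finset.sum_le_sum fun j hj => ?_
          have : ε < ‖f (T j x) - f (T j y)‖ := (Finset.mem_filter.1 hj).2
          gcongr
      _ ≤ _ := Finset.sum_le_sum_of_subset_of_nonneg (Finset.filter_subset _ _)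
          (fun _ _ _ => by positivity)
  · rw [div_lt_iff₀ (by positivity)]
    linarith [pow_succ' ε 2]

lemma upperDensity_le_of_rhoF {f : X → ℂ} {x y : X} {ε ε' : ℝ} (h : rhoF T f x y ≤ ε)
    (hε : ε < ε') : upperDensity d {i | ε' < ‖f (T i x) - f (T i y)‖} ≤ ε' := by
  have hne : {ε : ℝ | 0 < ε ∧ upperDensity d {i | ε < ‖f (T i x) - f (T i y)‖} < ε}.Nonempty := by
    refine ⟨2, by norm_num, lt_of_le_of_lt (upperDensity_le_of (c := 1) ?_) (by norm_num)⟩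
    exact Eventually.of_forall fun n => dens_le_one _ n
  obtain ⟨a, ha, hlt⟩ := exists_lt_of_csInf_lt hne (lt_of_le_of_lt h hε)
  refine (upperDensity_mono ?_).trans (ha.2.le.trans hlt.le)
  intro i hi
  exact hlt.trans hi

lemma Cl_shift (hTadd : ∀ i j, T (i + j) = T i ∘ T j) {f : X → ℂ} {x y : X} {c : ℝ} (hc : 0 ≤ c)
    (j : Fin d → ℤ) (hj : ∀ k, 0 ≤ j k) (hx : T 0 x = x) (hy : T 0 y = y)
    (h : Cl T f (T (-j) x) (T (-j) y) c) : Cl T f x y (2 * c) := by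
  set m := ∑ k, (j k).natAbs with hm
  have hjm : ∀ k, (j k).natAbs ≤ m := fun k =>
    Finset.single_le_sum (f := fun k => (j k).natAbs) (fun _ _ => Nat.zero_le _) (Finset.mem_univ k)
  have hr := (tendsto_pow_ratio d m).comp (tendsto_add_atTop_nat m)
  have hr2 := hr.eventually (eventually_ge_nhds (show (1 / 2 : ℝ) < 1 by norm_num))
  have h2 := (tendsto_add_atTop_nat m).eventually h
  have e : ∀ i z, T 0 z = z → T (i + j) (T (-j) z) = T i z := by
    intro i z hz
    have : T i z = T (i + j + -j) z := by simp
    rw [this, hTadd (i + j) (-j)]; rfl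
  filter_upwards [hr2, h2, eventually_ge_atTop 1] with n h1 h2 hn
  have hpos : (0 : ℝ) < ((n + m : ℕ) : ℝ) ^ d := by
    have : 0 < n + m := by omega
    positivity
  simp only [Function.comp, Nat.add_sub_cancel] at h1
  rw [le_div_iff₀ hpos] at h1
  rw [card_Fbox] at h2 ⊢
  push_cast at h1 h2 ⊢
  calc ∑ i ∈ Fbox d n, ‖f (T i x) - f (T i y)‖ ^ 2
      = ∑ i ∈ Fbox d n, ‖f (T (i + j) (T (-j) x)) - f (T (i + j) (T (-j) y))‖ ^ 2 := by
        refine Finset.sum_congr rfl fun i _ => ?_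
        rw [e i x hx, e i y hy]
    _ = ∑ i ∈ (Fbox d n).image (fun i => i + j),
          ‖f (T i (T (-j) x)) - f (T i (T (-j) y))‖ ^ 2 := by
        rw [Finset.sum_image (fun a _ b _ hab => add_right_cancel hab)]
    _ ≤ ∑ i ∈ Fbox d (n + m), ‖f (T i (T (-j) x)) - f (T i (T (-j) y))‖ ^ 2 := by
        refine Finset.sum_le_sum_of_subset_of_nonneg ?_ (fun _ _ _ => by positivity)
        intro z hz
        rw [Finset.mem_image] at hz
        obtain ⟨i, hi, rfl⟩ := hz
        rw [mem_Fbox] at hi ⊢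
        intro k
        have := hi k; have := hj k; have := hjm k
        simp only [Pi.add_apply]
        push_cast
        omega
    _ ≤ c * ((n : ℝ) + m) ^ d := h2
    _ ≤ _ := by nlinarith

lemma ae_fix [MetricSpace X] [MeasurableSpace X] [BorelSpace X] {μ : Measure X}
    (hTc : ∀ j, Continuous (T j)) (hTadd : ∀ i j, T (i + j) = T i ∘ T j)
    (hT : ∀ j, MeasurePreserving (T j) μ μ) : ∀ᵐ x ∂μ, T 0 x = x := by
  have hcl : IsClosed {x | T 0 x = x} := isClosed_eq (hTc 0) continuous_id
  rw [ae_iff]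
  have hm : MeasurableSet {x | ¬ T 0 x = x} := hcl.measurableSet.compl
  rw [← (hT 0).measure_preimage hm.nullMeasurableSet]
  have : T 0 ⁻¹' {x | ¬ T 0 x = x} = ∅ := by
    ext x
    have h := congrFun (hTadd 0 0) x
    simp only [add_zero, Function.comp] at h
    simp [← h]
  rw [this]; simp
end basics

section lusin
variable {X : Type*} [MetricSpace X] [CompactSpace X] [MeasurableSpace X] [BorelSpace X]

lemma lusin_single (μ : Measure X) [IsProbabilityMeasure μ] (D : ℕ → Set X)
    (hD : ∀ k, MeasurableSet (D k)) (hcov : ∀ᵐ x ∂μ, ∃ k, x ∈ D k) (ε : ENNReal) (hε : ε ≠ 0)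
    (hε1 : ε ≠ ⊤) :
    ∃ M : Set X, IsCompact M ∧ μ Mᶜ ≤ ε ∧ ∃ δ : ℝ, 0 < δ ∧ ∀ x ∈ M, ∀ y ∈ M, dist x y ≤ δ →
      ∃ k, x ∈ D k ∧ y ∈ D k := by
  have hDm : ∀ k, MeasurableSet (disjointed D k) := fun k => MeasurableSet.disjointed hD k
  obtain ⟨e, he0, hesum⟩ := ENNReal.exists_pos_sum_of_countable'
    (ENNReal.half_pos hε).ne' ℕ
  have hK : ∀ k, ∃ K ⊆ disjointed D k, IsCompact K ∧ μ (disjointed D k \ K) < e k := fun k =>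
    (hDm k).exists_isCompact_sdiff_lt (measure_ne_top _ _) (he0 k).ne'
  choose K hKs hKc hKe using hK
  have hinf : μ (⋂ N, (⋃ k ∈ Finset.range N, K k)ᶜ) < ε := by
    refine lt_of_le_of_lt ?_ (ENNReal.half_lt_self hε hε1)
    refine le_trans ?_ hesum.le
    calc μ (⋂ N, (⋃ k ∈ Finset.range N, K k)ᶜ) ≤ μ (⋃ k, disjointed D k \ K k) := by
          refine measure_mono_ae ?_
          filter_upwards [hcov] with x hx hx2
          have hx' : x ∈ ⋃ k, disjointed D k := by
            rw [iUnion_disjointed]; exact Set.mem_iUnion.2 hx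
          obtain ⟨k, hk⟩ := Set.mem_iUnion.1 hx'
          refine Set.mem_iUnion.2 ⟨k, hk, fun hxK => ?_⟩
          have h3 := Set.mem_iInter.1 hx2 (k + 1)
          apply h3
          simp only [Set.mem_iUnion, Finset.mem_range]
          exact ⟨k, by omega, hxK⟩
      _ ≤ ∑' k, μ (disjointed D k \ K k) := measure_iUnion_le _
      _ ≤ ∑' k, e k := ENNReal.tsum_le_tsum fun k => (hKe k).le
  have hMc : ∀ N, IsCompact (⋃ k ∈ Finset.range N, K k) := fun N =>
    (Finset.range N).isCompact_biUnion fun k _ => hKc k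
  have ht := tendsto_measure_iInter_atTop (μ := μ) (s := fun N => (⋃ k ∈ Finset.range N, K k)ᶜ)
    (fun N => (hMc N).isClosed.measurableSet.compl.nullMeasurableSet)
    (by
      intro a b hab
      refine Set.compl_subset_compl.2 ?_
      refine Set.biUnion_subset_biUnion_left ?_
      intro k hk
      exact Finset.mem_coe.2 (Finset.range_mono hab hk)) ⟨0, measure_ne_top _ _⟩
  obtain ⟨N, hN⟩ := (ht.eventually (eventually_lt_nhds hinf)).exists
  refine ⟨⋃ k ∈ Finset.range N, K k, hMc N, hN.le, ?_⟩
  obtain ⟨δ, hδ, hleb⟩ := lebesgue_number_lemma_of_metric (hMc N)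
    (c := fun k => (⋃ l ∈ (Finset.range N).erase k, K l)ᶜ)
    (fun k => ((((Finset.range N).erase k).isCompact_biUnion fun l _ => hKc l).isClosed).isOpen_compl)
    (by
      intro x hx
      simp only [Set.mem_iUnion] at hx
      obtain ⟨k, hk, hxk⟩ := hx
      refine Set.mem_iUnion.2 ⟨k, ?_⟩
      intro hx2
      simp only [Set.mem_iUnion] at hx2
      obtain ⟨l, hl, hxl⟩ := hx2
      have hlk : l ≠ k := (Finset.mem_erase.1 hl).1
      exact Set.disjoint_left.1 (disjoint_disjointed D hlk) (hKs l hxl) (hKs k hxk))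
  refine ⟨δ / 2, by positivity, ?_⟩
  intro x hx y hy hxy
  obtain ⟨k, hk⟩ := hleb x hx
  have hin : ∀ z, z ∈ (⋃ k ∈ Finset.range N, K k) → z ∈ ball x δ → z ∈ D k := by
    intro z hz hzb
    have h1 := hk hzb
    simp only [Set.mem_iUnion] at hz
    obtain ⟨l, hl, hzl⟩ := hz
    by_cases hlk : l = k
    · subst hlk
      exact disjointed_subset D l (hKs l hzl)
    · exfalso
      apply h1
      simp only [Set.mem_iUnion]
      exact ⟨l, Finset.mem_erase.2 ⟨hlk, hl⟩, hzl⟩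
  refine ⟨k, hin x hx (mem_ball_self hδ), hin y hy ?_⟩
  rw [mem_ball, dist_comm]; linarith

lemma lusin_all (μ : Measure X) [IsProbabilityMeasure μ] (D : ℕ → ℕ → Set X)
    (hD : ∀ n k, MeasurableSet (D n k)) (hcov : ∀ n, ∀ᵐ x ∂μ, ∃ k, x ∈ D n k) (τ : ℝ) (hτ : 0 < τ) :
    ∃ M : Set X, IsCompact M ∧ 1 - ENNReal.ofReal τ ≤ μ M ∧
      ∀ n, ∃ δ : ℝ, 0 < δ ∧ ∀ x ∈ M, ∀ y ∈ M, dist x y ≤ δ → ∃ k, x ∈ D n k ∧ y ∈ D n k := by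
  have hτ' : ENNReal.ofReal τ ≠ 0 := by simpa using hτ
  obtain ⟨e, he0, hesum⟩ := ENNReal.exists_pos_sum_of_countable' hτ' ℕ
  have hetop : ∀ n, e n ≠ ⊤ := fun n =>
    ne_top_of_le_ne_top ENNReal.ofReal_ne_top ((ENNReal.le_tsum n).trans hesum.le)
  have h := fun n => lusin_single μ (D n) (hD n) (hcov n) (e n) (he0 n).ne' (hetop n)
  choose M hMc hMe hM using h
  have hcl : IsClosed (⋂ n, M n) := isClosed_iInter fun n => (hMc n).isClosed
  refine ⟨⋂ n, M n, hcl.isCompact, ?_, ?_⟩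
  · have h1 : μ (⋂ n, M n)ᶜ ≤ ENNReal.ofReal τ := by
      rw [Set.compl_iInter]
      exact (measure_iUnion_le _).trans ((ENNReal.tsum_le_tsum hMe).trans hesum.le)
    have h2 := prob_add_prob_compl (μ := μ) hcl.measurableSet
    rw [tsub_le_iff_right, ← h2]
    gcongr
  · intro n
    obtain ⟨δ, hδ, hh⟩ := hM n
    exact ⟨δ, hδ, fun x hx y hy hxy => hh x (Set.mem_iInter.1 hx n) y (Set.mem_iInter.1 hy n) hxy⟩
end lusin


section notms
variable {X : Type*} {d : ℕ} {T : (Fin d → ℤ) → X → X}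

lemma ae_generic [MeasurableSpace X] {μ : Measure X} [IsProbabilityMeasure μ]
    (hTadd : ∀ i j, T (i + j) = T i ∘ T j)
    (hT : ∀ j, MeasurePreserving (T j) μ μ)
    (herg : ∀ A : Set X, MeasurableSet A → (∀ j, T j ⁻¹' A = A) → μ A = 0 ∨ μ A = 1)
    {f : X → ℂ} (hf : MemLp f 2 μ) : ∀ᵐ x ∂μ, genericSq μ T f x := by
  have hi : Integrable (fun x => ‖f x‖ ^ 2) μ := hf.norm.integrable_sq
  filter_upwards [pointwise_ergodic_const hT hTadd herg hi] with x hx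
  exact hx

lemma exists_meas_conull [MeasurableSpace X] {μ : Measure X} {p : X → Prop} (h : ∀ᵐ x ∂μ, p x) :
    ∃ Y : Set X, MeasurableSet Y ∧ (∀ x ∈ Y, p x) ∧ ∀ᵐ x ∂μ, x ∈ Y := by
  refine ⟨(toMeasurable μ {x | ¬ p x})ᶜ, (measurableSet_toMeasurable _ _).compl, ?_, ?_⟩
  · intro x hx
    by_contra hp
    exact hx (subset_toMeasurable _ _ hp)
  · have : μ (toMeasurable μ {x | ¬ p x}) = 0 := by rw [measure_toMeasurable]; exact h
    exact measure_eq_zero_iff_ae_notMem.1 this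

lemma ae_visit [MeasurableSpace X] {μ : Measure X} [IsProbabilityMeasure μ]
    (hTadd : ∀ i j, T (i + j) = T i ∘ T j)
    (hT : ∀ j, MeasurePreserving (T j) μ μ)
    (herg : ∀ A : Set X, MeasurableSet A → (∀ j, T j ⁻¹' A = A) → μ A = 0 ∨ μ A = 1)
    {A : Set X} (hA : MeasurableSet A) (hpos : 0 < μ A) :
    ∀ᵐ x ∂μ, ∃ j : Fin d → ℤ, (∀ k, 0 ≤ j k) ∧ T (-j) x ∈ A := by
  have hi : Integrable (A.indicator (fun _ => (1 : ℝ))) μ :=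
    (integrable_const (1 : ℝ)).indicator hA
  have := pointwise_ergodic_const (S := fun j => T (-j)) (ν := μ) (fun j => hT (-j))
    (fun i j => by rw [neg_add, hTadd])
    (fun B hB h => herg B hB (fun j => by simpa using h (-j))) hi
  filter_upwards [this] with x hx
  rw [integral_indicator_const _ hA] at hx
  have hp : (0 : ℝ) < μ.real A • (1 : ℝ) := by
    rw [smul_eq_mul, mul_one]
    exact ENNReal.toReal_pos hpos.ne' (measure_ne_top _ _)
  obtain ⟨n, hn⟩ := (hx.eventually (eventually_gt_nhds hp)).exists
  by_contra hcon
  push Not at hcon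
  have : avg (fun j => T (-j)) (A.indicator (fun _ => (1 : ℝ))) n x = 0 := by
    unfold avg
    rw [Finset.sum_eq_zero, zero_div]
    intro j hj
    rw [mem_Fbox] at hj
    exact Set.indicator_of_notMem (hcon j fun k => (hj k).1) _
  rw [this] at hn
  exact lt_irrefl _ hn

theorem me_of_not_ms [MetricSpace X] [CompactSpace X] [MeasurableSpace X] [BorelSpace X]
    (hTc : ∀ j, Continuous (T j))
    (hTadd : ∀ i j, T (i + j) = T i ∘ T j)
    (μ : Measure X) [IsProbabilityMeasure μ]
    (hT : ∀ j, MeasurePreserving (T j) μ μ)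
    (herg : ∀ A : Set X, MeasurableSet A → (∀ j, T j ⁻¹' A = A) → μ A = 0 ∨ μ A = 1)
    (f : X → ℂ) (hf : MemLp f 2 μ) (h : ¬ MeanSensitiveFun μ T f) : MuFMeanEquicont μ T f := by
  obtain ⟨Y, hYm, hYg, hYae⟩ := exists_meas_conull (ae_generic hTadd hT herg hf)
  have h1 : ∀ n : ℕ, ∃ A : Set X, MeasurableSet A ∧ 0 < μ A ∧ ∀ x ∈ A, ∀ y ∈ A,
      genericSq μ T f x → genericSq μ T f y → dF T f x y ≤ 1 / ((n : ℝ) + 1) := by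
    intro n
    by_contra hcon
    push Not at hcon
    refine h ⟨1 / ((n : ℝ) + 1), by positivity, ?_⟩
    intro A hA hpos
    obtain ⟨x, hx, y, hy, h1, h2, h3⟩ := hcon A hA hpos
    exact ⟨x, hx, y, hy, h1, h2, h3⟩
  choose A hAm hApos hA using h1
  have hAY : ∀ n, 0 < μ (A n ∩ Y) := by
    intro n
    have : μ (A n ∩ Y) = μ (A n) := by
      refine measure_congr ?_
      filter_upwards [hYae] with x hx
      exact propext ⟨fun h => h.1, fun h => ⟨h, hx⟩⟩
    rw [this]; exact hApos n
  obtain ⟨e, he⟩ := exists_surjective_nat (Fin d → ℤ)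
  intro τ hτ
  obtain ⟨M, hMc, hMm, hM⟩ := lusin_all μ
    (fun n k => {x | (∀ l, 0 ≤ e k l) ∧ T (-(e k)) x ∈ A n ∩ Y ∧ T 0 x = x})
    (by
      intro n k
      have m1 : MeasurableSet (T (-(e k)) ⁻¹' (A n ∩ Y)) :=
        (hTc _).measurable ((hAm n).inter hYm)
      have m2 : MeasurableSet {x | T 0 x = x} := (isClosed_eq (hTc 0) continuous_id).measurableSet
      exact (MeasurableSet.const _).inter (m1.inter m2))
    (by
      intro n
      filter_upwards [ae_visit hTadd hT herg ((hAm n).inter hYm) (hAY n), ae_fix hTc hTadd hT]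
        with x hx hx0
      obtain ⟨j, hj, hjx⟩ := hx
      obtain ⟨k, rfl⟩ := he j
      exact ⟨k, hj, hjx, hx0⟩) τ hτ
  refine ⟨M, hMc, hMm, ?_⟩
  intro ε hε
  have hlim : Tendsto (fun n : ℕ => 2 * (2 * (1 / ((n : ℝ) + 1))) ^ 2) atTop (nhds 0) := by
    have := ((tendsto_one_div_add_atTop_nhds_zero_nat (𝕜 := ℝ)).const_mul 2).pow 2
    simpa using this.const_mul 2
  obtain ⟨n, hn⟩ := (hlim.eventually (eventually_lt_nhds (show (0 : ℝ) < ε ^ 3 by positivity))).exists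
  obtain ⟨δ, hδ, hh⟩ := hM n
  refine ⟨δ, hδ, fun x hx y hy hxy => ?_⟩
  obtain ⟨k, ⟨hk, hxA, hx0⟩, ⟨-, hyA, hy0⟩⟩ := hh x hx y hy hxy
  refine rhoF_le_of_Cl hε hn ?_
  refine Cl_shift hTadd (by positivity) (e k) hk hx0 hy0 ?_
  have hpos : (0 : ℝ) < 1 / ((n : ℝ) + 1) := by positivity
  exact Cl_of_dF (hYg _ hxA.2) (hYg _ hyA.2)
    (hA n _ hxA.1 _ hyA.1 (hYg _ hxA.2) (hYg _ hyA.2)) hpos.le (by linarith)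
end notms


section meap
variable {X : Type*} {d : ℕ} {T : (Fin d → ℤ) → X → X}

lemma eLpNorm_indicator_translate [MetricSpace X] [MeasurableSpace X] [BorelSpace X]
    {μ : Measure X} [IsProbabilityMeasure μ]
    (hTc : ∀ j, Continuous (T j)) (hTadd : ∀ i j, T (i + j) = T i ∘ T j)
    (hT : ∀ j, MeasurePreserving (T j) μ μ) {g : X → ℂ} (hg : StronglyMeasurable g)
    {E : Set X} (hE : MeasurableSet E) (i : Fin d → ℤ) :
    eLpNorm (E.indicator (g ∘ T i)) 2 μ = eLpNorm ((T (-i) ⁻¹' E).indicator g) 2 μ := by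
  have hE' : MeasurableSet (T (-i) ⁻¹' E) := (hTc _).measurable hE
  rw [← eLpNorm_comp_measurePreserving (hg.indicator hE').aestronglyMeasurable (hT i)]
  refine eLpNorm_congr_ae ?_
  filter_upwards [ae_fix hTc hTadd hT] with x hx
  have h1 : T (-i) (T i x) = x := by
    have := congrFun (hTadd (-i) i) x
    rw [neg_add_cancel, hx] at this
    exact this.symm
  simp only [Function.comp, Set.indicator, Set.mem_preimage, h1]

lemma ui_translates [MetricSpace X] [MeasurableSpace X] [BorelSpace X]
    {μ : Measure X} [IsProbabilityMeasure μ]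
    (hTc : ∀ j, Continuous (T j)) (hTadd : ∀ i j, T (i + j) = T i ∘ T j)
    (hT : ∀ j, MeasurePreserving (T j) μ μ) {g : X → ℂ} (hg : StronglyMeasurable g)
    (hgL : MemLp g 2 μ) {η : ℝ} (hη : 0 < η) :
    ∃ ε : ℝ, 0 < ε ∧ ∀ i k, μ {x | ε < ‖g (T i x) - g (T k x)‖} ≤ ENNReal.ofReal ε →
      eLpNorm (g ∘ T i - g ∘ T k) 2 μ < ENNReal.ofReal η := by
  obtain ⟨δ, hδ, hh⟩ := hgL.eLpNorm_indicator_le (by norm_num) (by norm_num)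
    (show 0 < η / 4 by positivity)
  refine ⟨min δ (η / 4), by positivity, ?_⟩
  intro i k hik
  set ε := min δ (η / 4) with hεdef
  set E := {x | ε < ‖g (T i x) - g (T k x)‖} with hEdef
  have hgm : ∀ i, StronglyMeasurable (g ∘ T i) := fun i => hg.comp_measurable (hTc i).measurable
  have hE : MeasurableSet E :=
    measurableSet_lt measurable_const ((hgm i).sub (hgm k)).norm.measurable
  have hb : ∀ i, eLpNorm (E.indicator (g ∘ T i)) 2 μ ≤ ENNReal.ofReal (η / 4) := by
    intro i
    rw [eLpNorm_indicator_translate hTc hTadd hT hg hE]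
    refine hh _ ((hTc _).measurable hE) ?_
    rw [(hT _).measure_preimage hE.nullMeasurableSet]
    exact hik.trans (ENNReal.ofReal_le_ofReal (min_le_left _ _))
  have hc : eLpNorm (Eᶜ.indicator (g ∘ T i - g ∘ T k)) 2 μ ≤ ENNReal.ofReal (η / 4) := by
    have := eLpNorm_le_of_ae_bound (μ := μ) (p := 2) (f := Eᶜ.indicator (g ∘ T i - g ∘ T k))
      (C := η / 4) (Eventually.of_forall fun x => by
        by_cases hx : x ∈ E
        · rw [Set.indicator_of_notMem (by simpa using hx)]
          simp; positivity
        · rw [Set.indicator_of_mem (by simpa using hx)]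
          have : ‖g (T i x) - g (T k x)‖ ≤ ε := not_lt.1 hx
          exact this.trans (min_le_right _ _))
    simpa using this
  have hdec : g ∘ T i - g ∘ T k = (E.indicator (g ∘ T i) - E.indicator (g ∘ T k))
      + Eᶜ.indicator (g ∘ T i - g ∘ T k) := by
    rw [← Set.indicator_sub', Set.indicator_self_add_compl]
  have hm := fun i => ((hgm i).indicator hE).aestronglyMeasurable (μ := μ)
  calc eLpNorm (g ∘ T i - g ∘ T k) 2 μ
      = eLpNorm ((E.indicator (g ∘ T i) - E.indicator (g ∘ T k))
      + Eᶜ.indicator (g ∘ T i - g ∘ T k)) 2 μ := by rw [← hdec]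
    _ ≤ eLpNorm (E.indicator (g ∘ T i) - E.indicator (g ∘ T k)) 2 μ
        + eLpNorm (Eᶜ.indicator (g ∘ T i - g ∘ T k)) 2 μ :=
        eLpNorm_add_le ((hm i).sub (hm k))
          (((hgm i).sub (hgm k)).indicator hE.compl).aestronglyMeasurable (by norm_num)
    _ ≤ (eLpNorm (E.indicator (g ∘ T i)) 2 μ + eLpNorm (E.indicator (g ∘ T k)) 2 μ)
        + eLpNorm (Eᶜ.indicator (g ∘ T i - g ∘ T k)) 2 μ := by
        gcongr
        exact eLpNorm_sub_le (hm i) (hm k) (by norm_num)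
    _ ≤ (ENNReal.ofReal (η / 4) + ENNReal.ofReal (η / 4)) + ENNReal.ofReal (η / 4) := by
        gcongr
        · exact hb i
        · exact hb k
    _ < ENNReal.ofReal η := by
        rw [← ENNReal.ofReal_add (by positivity) (by positivity),
          ← ENNReal.ofReal_add (by positivity) (by positivity)]
        exact (ENNReal.ofReal_lt_ofReal_iff hη).2 (by linarith)

theorem ap_of_me [MetricSpace X] [CompactSpace X] [MeasurableSpace X] [BorelSpace X]
    (hTc : ∀ j, Continuous (T j))
    (hTadd : ∀ i j, T (i + j) = T i ∘ T j)
    (μ : Measure X) [IsProbabilityMeasure μ]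
    (hT : ∀ j, MeasurePreserving (T j) μ μ)
    (herg : ∀ A : Set X, MeasurableSet A → (∀ j, T j ⁻¹' A = A) → μ A = 0 ∨ μ A = 1)
    (f : X → ℂ) (hf : MemLp f 2 μ) (h : MuFMeanEquicont μ T f) : APFun μ T f := by
  obtain ⟨g, hg, hfg⟩ := hf.1
  have hgL : MemLp g 2 μ := hf.ae_eq hfg
  have hgm : ∀ i, StronglyMeasurable (g ∘ T i) := fun i => hg.comp_measurable (hTc i).measurable
  let u : (Fin d → ℤ) → Lp ℂ 2 μ := fun j => (hf.comp_measurePreserving (hT j)).toLp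
  have hu : ∀ i k, edist (u i) (u k) = eLpNorm (g ∘ T i - g ∘ T k) 2 μ := by
    intro i k
    rw [Lp.edist_toLp_toLp]
    refine eLpNorm_congr_ae ?_
    filter_upwards [ae_all_translates hT hfg] with x hx
    simp [hx]
  refine TotallyBounded.isCompact_of_isClosed (TotallyBounded.closure ?_) isClosed_closure
  by_contra hntb
  rw [Metric.totallyBounded_iff] at hntb
  push Not at hntb
  obtain ⟨η, hη, hcov⟩ := hntb
  obtain ⟨w, -, hw⟩ := exists_seq_of_forall_finset_exists (fun _ : Fin d → ℤ => True)
    (fun i k => η ≤ dist (u i) (u k)) (by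
      intro t _
      have h1 := hcov (u '' t) (t.finite_toSet.image u)
      obtain ⟨v, ⟨j, hj⟩, hv⟩ := Set.not_subset.1 h1
      have hvj : v = u j := by
        refine Lp.ext ?_
        exact hj.trans (hf.comp_measurePreserving (hT j)).coeFn_toLp.symm
      refine ⟨j, trivial, fun i hi => ?_⟩
      by_contra hlt
      apply hv
      refine Set.mem_iUnion₂.2 ⟨u i, ⟨i, hi, rfl⟩, ?_⟩
      rw [hvj, mem_ball, dist_comm]
      exact not_le.1 hlt)
  obtain ⟨ε, hε, hui⟩ := ui_translates hTc hTadd hT hg hgL hη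
  obtain ⟨M, hMc, hMm, hM⟩ := h (1 / 2) (by norm_num)
  obtain ⟨δ, hδ, hMδ⟩ := hM (ε / 2) (by positivity)
  have hMpos : μ M ≠ 0 := by
    intro h0
    rw [h0, nonpos_iff_eq_zero, tsub_eq_zero_iff_le] at hMm
    have : ENNReal.ofReal (1 / 2) < 1 := by
      rw [← ENNReal.ofReal_one]; exact (ENNReal.ofReal_lt_ofReal_iff one_pos).2 (by norm_num)
    exact absurd hMm (not_le.2 this)
  obtain ⟨x0, hx0, hpos⟩ := exists_mem_forall_mem_nhdsWithin_pos_measure hMpos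
  set A := ball x0 (δ / 2) ∩ M with hA
  have hApos : 0 < μ A :=
    hpos A (Filter.inter_mem (mem_nhdsWithin_of_mem_nhds (ball_mem_nhds x0 (by positivity)))
      self_mem_nhdsWithin)
  have hAm : MeasurableSet A := measurableSet_ball.inter hMc.isClosed.measurableSet
  have hAd : ∀ x ∈ A, ∀ y ∈ A, dist x y ≤ δ := by
    intro x hx y hy
    have h1 := mem_ball.1 hx.1
    have h2 := mem_ball'.1 hy.1
    linarith [dist_triangle x x0 y]
  let E : (Fin d → ℤ) → (Fin d → ℤ) → Set X := fun i k => {x | ε < ‖g (T i x) - g (T k x)‖}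
  have hE : ∀ i k, MeasurableSet (E i k) := fun i k =>
    measurableSet_lt measurable_const ((hgm i).sub (hgm k)).norm.measurable
  have hp : ∀ᵐ x ∂μ, (∀ j, f (T j x) = g (T j x)) ∧ ∀ i k,
      Tendsto (fun n => avg T ((E i k).indicator (fun _ => (1 : ℝ))) n x) atTop
        (nhds (μ.real (E i k))) := by
    refine (ae_all_translates hT hfg).and (ae_all_iff.2 fun i => ae_all_iff.2 fun k => ?_)
    have := pointwise_ergodic_const hT hTadd herg
      ((integrable_const (μ := μ) (1 : ℝ)).indicator (hE i k))
    rw [integral_indicator_const _ (hE i k), smul_eq_mul, mul_one] at this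
    exact this
  obtain ⟨Y, hYm, hY, hYae⟩ := exists_meas_conull hp
  have hmeas : ∀ n : ℕ, μ (T (w n) ⁻¹' A ∩ Y) = μ A := by
    intro n
    rw [← (hT (w n)).measure_preimage hAm.nullMeasurableSet]
    refine measure_congr ?_
    filter_upwards [hYae] with x hx
    exact propext ⟨fun h => h.1, fun h => ⟨h, hx⟩⟩
  obtain ⟨m, n, hmn, x, hxm, hxn⟩ := exists_nonempty_inter_of_measure_univ_lt_tsum_measure μ
    (s := fun n : ℕ => T (w n) ⁻¹' A ∩ Y)
    (fun n => (((hTc _).measurable hAm).inter hYm).nullMeasurableSet) (by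
      simp only [hmeas]
      rw [ENNReal.tsum_const_eq_top_of_ne_zero hApos.ne']
      exact measure_lt_top _ _)
  have hr := hMδ _ hxm.1.2 _ hxn.1.2 (hAd _ hxm.1 _ hxn.1)
  have hdens := upperDensity_le_of_rhoF hr (show ε / 2 < ε by linarith)
  obtain ⟨hxf, hxlim⟩ := hY x hxm.2
  have hlim := (hxlim (w m) (w n)).limsup_eq
  have hEle : μ.real (E (w m) (w n)) ≤ ε := by
    rw [← hlim]
    refine le_trans (le_of_eq ?_) hdens
    unfold upperDensity
    congr 1
    funext N
    unfold avg
    congr 1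
    rw [Finset.card_filter]
    push_cast
    refine Finset.sum_congr rfl fun j _ => ?_
    have e : ∀ i, f (T j (T i x)) = g (T i (T j x)) := by
      intro i
      have h1 := congrFun (hTadd j i) x
      have h2 := congrFun (hTadd i j) x
      simp only [Function.comp] at h1 h2
      rw [← h1, ← h2, hxf, add_comm]
    simp only [Set.indicator, Set.mem_ofPred_eq, e, E]
  have hlt := hui (w m) (w n) (by
    rw [← ENNReal.ofReal_toReal (measure_ne_top μ {x | ε < ‖g (T (w m) x) - g (T (w n) x)‖})]
    exact ENNReal.ofReal_le_ofReal hEle)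
  rw [← hu, edist_dist, ENNReal.ofReal_lt_ofReal_iff hη] at hlt
  rcases lt_or_gt_of_ne hmn with h1 | h1
  · exact absurd hlt (not_lt.2 (hw m n h1))
  · rw [dist_comm] at hlt
    exact absurd hlt (not_lt.2 (hw n m h1))
end meap


section apms
variable {X : Type*} {d : ℕ} {T : (Fin d → ℤ) → X → X}

lemma freq_measure_pos {Ω : Type*} [MeasurableSpace Ω] {ν : Measure Ω} [IsProbabilityMeasure ν]
    {Q : ℕ → Set Ω} (hQ : ∀ n, MeasurableSet (Q n)) {c : ENNReal} (hc : c ≠ 0)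
    (h : ∃ᶠ n in atTop, c ≤ ν (Q n)) :
    ∃ P : Set Ω, MeasurableSet P ∧ ν P ≠ 0 ∧ ∀ z ∈ P, ∃ᶠ n in atTop, z ∈ Q n := by
  have hm : ∀ m, MeasurableSet (⋃ n, ⋃ (_ : m ≤ n), Q n) := fun m =>
    MeasurableSet.iUnion fun n => MeasurableSet.iUnion fun _ => hQ n
  refine ⟨⋂ m, ⋃ n, ⋃ (_ : m ≤ n), Q n, MeasurableSet.iInter hm, ?_, ?_⟩
  · have ht := tendsto_measure_iInter_atTop (μ := ν) (s := fun m => ⋃ n, ⋃ (_ : m ≤ n), Q n)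
      (fun m => (hm m).nullMeasurableSet)
      (by
        intro a b hab
        refine Set.iUnion_mono fun n => ?_
        intro z hz
        obtain ⟨h1, h2⟩ := Set.mem_iUnion.1 hz
        exact Set.mem_iUnion.2 ⟨hab.trans h1, h2⟩) ⟨0, measure_ne_top _ _⟩
    have : c ≤ ν (⋂ m, ⋃ n, ⋃ (_ : m ≤ n), Q n) := by
      refine ge_of_tendsto' ht fun m => ?_
      obtain ⟨n, hn, hc⟩ := (frequently_atTop.1 h) m
      exact hc.trans (measure_mono fun z hz => Set.mem_iUnion₂.2 ⟨n, hn, hz⟩)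
    exact fun h0 => hc (nonpos_iff_eq_zero.1 (h0 ▸ this))
  · intro z hz
    rw [frequently_atTop]
    intro m
    obtain ⟨n, hn, hz⟩ := Set.mem_iUnion₂.1 (Set.mem_iInter.1 hz m)
    exact ⟨n, hn, hz⟩

lemma three_sq (a b p q : ℂ) :
    ‖a - b‖ ^ 2 ≤ 3 * ‖a - p‖ ^ 2 + 3 * ‖b - q‖ ^ 2 + 3 * ‖p - q‖ ^ 2 := by
  have h : ‖a - b‖ ≤ ‖a - p‖ + ‖b - q‖ + ‖p - q‖ := by
    calc ‖a - b‖ = ‖(a - p) + -(b - q) + (p - q)‖ := by congr 1; ring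
      _ ≤ ‖a - p‖ + ‖-(b - q)‖ + ‖p - q‖ := norm_add₃_le
      _ = _ := by rw [norm_neg]
  have h0 := norm_nonneg (a - b)
  nlinarith [sq_nonneg (‖a - p‖ - ‖b - q‖), sq_nonneg (‖a - p‖ - ‖p - q‖),
    sq_nonneg (‖b - q‖ - ‖p - q‖), mul_self_le_mul_self h0 h]

/-- a fixed cell meeting infinitely many good sets in a set of definite measure -/
lemma exists_cell [MeasurableSpace X] {μ : Measure X} [IsProbabilityMeasure μ]
    {ι : Type*} [Fintype ι] {F : ι → X → ℂ} (hF : ∀ i, Measurable (F i)) {r : ℝ} (hr : 0 < r)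
    {B : ℕ → Set X} (hB : ∀ n, MeasurableSet (B n)) (hBm : ∀ᶠ n in atTop, μ.real (B n)ᶜ ≤ 1 / 4) :
    ∃ C : Set X, MeasurableSet C ∧ (∀ x ∈ C, ∀ y ∈ C, ∀ i, ‖F i x - F i y‖ ≤ 2 * r) ∧
      ∃ c : ℝ, 0 < c ∧ ∃ᶠ n in atTop, c ≤ μ.real (C ∩ B n) := by
  let G : X → (ι → ℂ) := fun x i => F i x
  have hG : Measurable G := measurable_pi_lambda _ hF
  let C : ℕ → Set X := fun k => G ⁻¹' ball (TopologicalSpace.denseSeq (ι → ℂ) k) r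
  have hC : ∀ k, MeasurableSet (C k) := fun k => hG measurableSet_ball
  have hU : (⋃ k, C k) = Set.univ := by
    refine Set.eq_univ_of_forall fun x => ?_
    obtain ⟨k, hk⟩ := (TopologicalSpace.denseRange_denseSeq (ι → ℂ)).exists_dist_lt (G x) hr
    exact Set.mem_iUnion.2 ⟨k, hk⟩
  have ht := tendsto_measure_iUnion_accumulate (μ := μ) (f := C)
  rw [hU, measure_univ] at ht
  have ht2 : Tendsto (fun k => μ.real (Set.accumulate C k)) atTop (nhds 1) := by
    have := (ENNReal.tendsto_toReal ENNReal.one_ne_top).comp ht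
    rw [ENNReal.toReal_one] at this
    exact this
  obtain ⟨N, hN⟩ := (ht2.eventually (eventually_gt_nhds (show (3 / 4 : ℝ) < 1 by norm_num))).exists
  set c : ℝ := 1 / (2 * (N + 1)) with hc
  have hc0 : 0 < c := by positivity
  have hex : ∀ᶠ n in atTop, ∃ k ∈ Finset.range (N + 1), c ≤ μ.real (C k ∩ B n) := by
    filter_upwards [hBm] with n hn
    by_contra hcon
    push Not at hcon
    have h1 : μ.real (Set.accumulate C N) ≤
        μ.real (⋃ k ∈ Finset.range (N + 1), C k ∩ B n) + μ.real (B n)ᶜ := by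
      refine le_trans (measureReal_mono ?_) (measureReal_union_le _ _)
      intro x hx
      by_cases hxB : x ∈ B n
      · left
        obtain ⟨k, hk, hxk⟩ := Set.mem_accumulate.1 hx
        exact Set.mem_iUnion₂.2 ⟨k, Finset.mem_range.2 (by omega), hxk, hxB⟩
      · right; exact hxB
    have h2 : μ.real (⋃ k ∈ Finset.range (N + 1), C k ∩ B n) ≤ 1 / 2 := by
      refine (measureReal_biUnion_finset_le _ _).trans ?_
      calc _ ≤ ∑ k ∈ Finset.range (N + 1), c := Finset.sum_le_sum fun k hk => (hcon k hk).le
        _ = 1 / 2 := by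
          rw [Finset.sum_const, Finset.card_range, nsmul_eq_mul, hc]
          push_cast
          field_simp
    linarith
  have hpig : ∃ k, ∃ᶠ n in atTop, c ≤ μ.real (C k ∩ B n) := by
    by_contra hcon
    push Not at hcon
    have := (eventually_all_finset (Finset.range (N + 1))).2 fun k _ => hcon k
    obtain ⟨n, ⟨k, hk, h1⟩, h2⟩ := (hex.and this).exists
    exact absurd h1 (not_le.2 (h2 k hk))
  obtain ⟨k, hk⟩ := hpig
  refine ⟨C k, hC k, ?_, c, hc0, hk⟩
  intro x hx y hy i
  have h1 : dist (G x) (G y) ≤ 2 * r := by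
    have a := mem_ball.1 hx
    have b := mem_ball'.1 hy
    linarith [dist_triangle (G x) (TopologicalSpace.denseSeq (ι → ℂ) k) (G y)]
  rw [← dist_eq_norm]
  exact (dist_le_pi_dist (G x) (G y) i).trans h1

lemma ap_core [MeasurableSpace X]
    (hTadd : ∀ i j, T (i + j) = T i ∘ T j)
    (μ : Measure X) [IsProbabilityMeasure μ]
    (hT : ∀ j, MeasurePreserving (T j) μ μ)
    {g : X → ℂ} (hg : Measurable g) (hgL : MemLp g 2 μ) {η : ℝ} (hη : 0 < η)
    {ι : Type*} [Fintype ι] {F : ι → X → ℂ} (hF : ∀ i, Measurable (F i))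
    (hFL : ∀ i, MemLp (F i) 2 μ)
    (hap : ∀ j, ∃ i, ∫ x, ‖g (T j x) - F i x‖ ^ 2 ∂μ ≤ η ^ 2) :
    ∃ A : Set X, MeasurableSet A ∧ 0 < μ A ∧ ∀ x ∈ A, ∀ y ∈ A, Cl T g x y (288 * η ^ 2) := by
  choose y hy using hap
  have hgT : ∀ j, Measurable fun x => g (T j x) := fun j => hg.comp (hT j).measurable
  have hIntg : ∀ j, Integrable (fun x => ‖g (T j x) - F (y j) x‖ ^ 2) μ := fun j =>
    (((hgL.comp_measurePreserving (hT j)).sub (hFL (y j))).norm).integrable_sq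
  let ψ : ℕ → X → ℝ := fun n x => ∑ j ∈ Fbox d n, ‖g (T j x) - F (y j) x‖ ^ 2
  have hψm : ∀ n, Measurable (ψ n) := fun n =>
    Finset.measurable_sum _ fun j _ => (((hgT j).sub (hF (y j))).norm.pow_const 2)
  let B : ℕ → Set X := fun n => {x | ψ n x < 4 * η ^ 2 * ((Fbox d n).card : ℝ)}
  have hB : ∀ n, MeasurableSet (B n) := fun n => measurableSet_lt (hψm n) measurable_const
  have hBm : ∀ᶠ n in atTop, μ.real (B n)ᶜ ≤ 1 / 4 := by
    filter_upwards [eventually_ge_atTop 1] with n hn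
    have hcard : (0 : ℝ) < ((Fbox d n).card : ℝ) := by rw [card_Fbox]; positivity
    have h1 := mul_meas_ge_le_integral_of_nonneg (μ := μ) (f := ψ n)
      (Eventually.of_forall fun x => Finset.sum_nonneg fun j _ => by positivity)
      (integrable_finsetSum _ fun j _ => hIntg j) (4 * η ^ 2 * ((Fbox d n).card : ℝ))
    have h2 : ∫ x, ψ n x ∂μ ≤ ((Fbox d n).card : ℝ) * η ^ 2 := by
      rw [integral_finsetSum _ fun j _ => hIntg j]
      calc _ ≤ ∑ j ∈ Fbox d n, η ^ 2 := Finset.sum_le_sum fun j _ => hy j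
        _ = _ := by rw [Finset.sum_const, nsmul_eq_mul]
    have h3 : (B n)ᶜ = {x | 4 * η ^ 2 * ((Fbox d n).card : ℝ) ≤ ψ n x} := by
      ext x; simp [B]
    rw [h3]
    have h4 : (0 : ℝ) < ((Fbox d n).card : ℝ) * η ^ 2 := by positivity
    have h5 := h1.trans h2
    by_contra hcon
    push Not at hcon
    nlinarith
  obtain ⟨C, hCm, hC, c, hc, hfreq⟩ := exists_cell hF hη hB hBm
  have hfm : MemLp (fun z : X × X => g z.1 - g z.2) 2 (μ.prod μ) :=
    (hgL.comp_measurePreserving measurePreserving_fst).sub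
      (hgL.comp_measurePreserving measurePreserving_snd)
  have hPE := pointwise_ergodic (S := fun j => Prod.map (T j) (T j)) (ν := μ.prod μ)
    (fun j => (hT j).prod (hT j))
    (fun i j => by rw [hTadd, Prod.map_comp_map]) hfm.norm.integrable_sq
  obtain ⟨Y, hYm, hY, hYae⟩ := exists_meas_conull hPE
  obtain ⟨P, hPm, hP0, hP⟩ := freq_measure_pos (ν := μ.prod μ)
    (Q := fun n => (C ∩ B n) ×ˢ (C ∩ B n)) (fun n => (hCm.inter (hB n)).prod (hCm.inter (hB n)))
    (c := ENNReal.ofReal c * ENNReal.ofReal c)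
    (by
      have : ENNReal.ofReal c ≠ 0 := by simpa using hc
      exact mul_ne_zero this this)
    (by
      refine hfreq.mono fun n hn => ?_
      rw [Measure.prod_prod]
      have : ENNReal.ofReal c ≤ μ (C ∩ B n) := by
        rw [← ENNReal.ofReal_toReal (measure_ne_top μ (C ∩ B n))]
        exact ENNReal.ofReal_le_ofReal hn
      gcongr)
  have hPY : μ.prod μ (P ∩ Y) ≠ 0 := by
    have : μ.prod μ (P ∩ Y) = μ.prod μ P := by
      refine measure_congr ?_
      filter_upwards [hYae] with x hx
      exact propext ⟨fun h => h.1, fun h => ⟨h, hx⟩⟩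
    rw [this]; exact hP0
  have hWm := hPm.inter hYm
  rw [Ne, Measure.measure_prod_null hWm] at hPY
  have hx0 : ∃ x0, 0 < μ (Prod.mk x0 ⁻¹' (P ∩ Y)) := by
    by_contra hcon
    push Not at hcon
    exact hPY (Eventually.of_forall fun x => nonpos_iff_eq_zero.1 (hcon x))
  obtain ⟨x0, hx0⟩ := hx0
  refine ⟨_, measurable_prodMk_left hWm, hx0, ?_⟩
  have key : ∀ x, (x0, x) ∈ P ∩ Y → Cl T g x0 x (72 * η ^ 2) := by
    intro x hx
    have hl := hY _ hx.2
    have hf : ∃ᶠ n in atTop, avg (fun j => Prod.map (T j) (T j))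
        (fun z : X × X => ‖g z.1 - g z.2‖ ^ 2) n (x0, x) ≤ 36 * η ^ 2 := by
      refine (hP _ hx.1).mono fun n hn => ?_
      obtain ⟨⟨hx0C, hx0B⟩, hxC, hxB⟩ := hn
      refine div_le_of_le_mul₀ (Nat.cast_nonneg _) (by positivity) ?_
      have hx0B' : ψ n x0 < 4 * η ^ 2 * ((Fbox d n).card : ℝ) := hx0B
      have hxB' : ψ n x < 4 * η ^ 2 * ((Fbox d n).card : ℝ) := hxB
      calc ∑ j ∈ Fbox d n, ‖g (T j x0) - g (T j x)‖ ^ 2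
          ≤ ∑ j ∈ Fbox d n, (3 * ‖g (T j x0) - F (y j) x0‖ ^ 2
              + 3 * ‖g (T j x) - F (y j) x‖ ^ 2 + 12 * η ^ 2) := by
            refine Finset.sum_le_sum fun j _ => ?_
            have h1 := three_sq (g (T j x0)) (g (T j x)) (F (y j) x0) (F (y j) x)
            have h2 := hC x0 hx0C x hxC (y j)
            have h3 := pow_le_pow_left₀ (norm_nonneg _) h2 2
            nlinarith
        _ = 3 * ψ n x0 + 3 * ψ n x + 12 * η ^ 2 * ((Fbox d n).card : ℝ) := by
            rw [Finset.sum_add_distrib, Finset.sum_add_distrib, ← Finset.mul_sum,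
              ← Finset.mul_sum, Finset.sum_const, nsmul_eq_mul]
            ring
        _ ≤ 36 * η ^ 2 * ((Fbox d n).card : ℝ) := by linarith
    have hle := le_of_tendsto_of_frequently hl hf
    have hpos : 0 < η ^ 2 := by positivity
    have hev := hl.eventually (eventually_lt_nhds (lt_of_le_of_lt hle
      (show 36 * η ^ 2 < 72 * η ^ 2 by linarith)))
    filter_upwards [hev, eventually_ge_atTop 1] with n hn hn1
    have hcard : (0 : ℝ) < ((Fbox d n).card : ℝ) := by rw [card_Fbox]; positivity
    exact ((div_lt_iff₀ hcard).1 hn).le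
  intro x hx z hz
  filter_upwards [key x hx, key z hz] with n h1 h2
  calc ∑ j ∈ Fbox d n, ‖g (T j x) - g (T j z)‖ ^ 2
      ≤ ∑ j ∈ Fbox d n, (2 * ‖g (T j x0) - g (T j x)‖ ^ 2 + 2 * ‖g (T j x0) - g (T j z)‖ ^ 2) := by
        refine Finset.sum_le_sum fun j _ => ?_
        have := norm_sub_sq_le_two (g (T j x0) - g (T j z)) (g (T j x0) - g (T j x))
        rw [sub_sub_sub_cancel_left] at this
        linarith
    _ = 2 * ∑ j ∈ Fbox d n, ‖g (T j x0) - g (T j x)‖ ^ 2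
        + 2 * ∑ j ∈ Fbox d n, ‖g (T j x0) - g (T j z)‖ ^ 2 := by
        rw [Finset.sum_add_distrib, ← Finset.mul_sum, ← Finset.mul_sum]
    _ ≤ _ := by linarith

theorem not_ms_of_ap [MeasurableSpace X]
    (hTadd : ∀ i j, T (i + j) = T i ∘ T j)
    (μ : Measure X) [IsProbabilityMeasure μ]
    (hT : ∀ j, MeasurePreserving (T j) μ μ)
    (f : X → ℂ) (hf : MemLp f 2 μ) (h : APFun μ T f) : ¬ MeanSensitiveFun μ T f := by
  rintro ⟨ε, hε, hms⟩
  obtain ⟨g, hg, hfg⟩ := hf.1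
  have hgL : MemLp g 2 μ := hf.ae_eq hfg
  set η : ℝ := ε / 17 with hηdef
  have hη : 0 < η := by positivity
  have htb := h.totallyBounded.subset subset_closure
  obtain ⟨t, htf, ht⟩ := Metric.totallyBounded_iff.1 htb η hη
  have : Fintype t := htf.fintype
  obtain ⟨A, hAm, hApos, hA⟩ := ap_core hTadd μ hT hg.measurable hgL hη
    (F := fun i : t => ((i : Lp ℂ 2 μ) : X → ℂ))
    (fun i => (Lp.stronglyMeasurable _).measurable) (fun i => Lp.memLp _) (by
      intro j
      have hm := hf.comp_measurePreserving (hT j)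
      obtain ⟨v, hv, hb⟩ := Set.mem_iUnion₂.1 (ht ⟨j, hm.coeFn_toLp⟩)
      refine ⟨⟨v, hv⟩, ?_⟩
      rw [mem_ball, dist_eq_norm, Lp.norm_def] at hb
      have hmm : MemLp (⇑(hm.toLp - v)) 2 μ := Lp.memLp _
      rw [hmm.eLpNorm_eq_integral_rpow_norm (by norm_num) (by norm_num),
        ENNReal.toReal_ofReal (by positivity)] at hb
      simp only [ENNReal.toReal_ofNat, Real.rpow_ofNat] at hb
      have e : ∫ x, ‖g (T j x) - v x‖ ^ 2 ∂μ = ∫ x, ‖(hm.toLp - v : Lp ℂ 2 μ) x‖ ^ 2 ∂μ := by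
        refine integral_congr_ae ?_
        filter_upwards [Lp.coeFn_sub hm.toLp v, hm.coeFn_toLp, ae_all_translates hT hfg]
          with x h1 h2 h3
        rw [h1, Pi.sub_apply, h2, Function.comp, h3 j]
      rw [e]
      have h0 : 0 ≤ ∫ x, ‖(hm.toLp - v : Lp ℂ 2 μ) x‖ ^ 2 ∂μ :=
        integral_nonneg fun x => by positivity
      have h2 : (2 : ℝ)⁻¹ = 1 / 2 := by norm_num
      rw [h2, ← Real.sqrt_eq_rpow, Real.sqrt_lt' hη] at hb
      exact hb.le)
  obtain ⟨Y, hYm, hY, hYae⟩ := exists_meas_conull (ae_all_translates hT hfg)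
  have hAY : 0 < μ (A ∩ Y) := by
    have : μ (A ∩ Y) = μ A := by
      refine measure_congr ?_
      filter_upwards [hYae] with x hx
      exact propext ⟨fun h => h.1, fun h => ⟨h, hx⟩⟩
    rw [this]; exact hApos
  obtain ⟨x, hx, y, hy, -, -, hlt⟩ := hms _ (hAm.inter hYm) hAY
  refine absurd hlt (not_lt.2 (dF_le_of_Cl hε.le ?_))
  filter_upwards [hA x hx.1 y hy.1] with n hn
  simp only [hY x hx.2, hY y hy.2]
  refine hn.trans ?_
  gcongr
  rw [hηdef]
  nlinarith [sq_nonneg ε]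
end apms

/-- for a TDS with an ergodic invariant measure `μ`,
`H_ap = H_ms^c = H_me`: `f` is almost periodic iff `f` is not `μ`-mean sensitive iff
`f` is `μ`-mean equicontinuous. -/
theorem stmt17 {d : ℕ}
    [MetricSpace X] [CompactSpace X] [MeasurableSpace X] [BorelSpace X]
    (T : (Fin d → ℤ) → X → X)
    (hTc : ∀ j, Continuous (T j))
    (hTadd : ∀ i j, T (i + j) = T i ∘ T j)
    (μ : Measure X) [IsProbabilityMeasure μ]
    (hT : ∀ j, MeasurePreserving (T j) μ μ)
    (herg : ∀ A : Set X, MeasurableSet A → (∀ j, T j ⁻¹' A = A) → μ A = 0 ∨ μ A = 1)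
    (f : X → ℂ) (hf : MemLp f 2 μ) :
    (APFun μ T f ↔ ¬ MeanSensitiveFun μ T f) ∧
    (¬ MeanSensitiveFun μ T f ↔ MuFMeanEquicont μ T f) := by
  have a := not_ms_of_ap hTadd μ hT f hf
  have b := me_of_not_ms hTc hTadd μ hT herg f hf
  have c := ap_of_me hTc hTadd μ hT herg f hf
  exact ⟨⟨a, fun h => c (b h)⟩, ⟨b, fun h => a (c h)⟩⟩
end
end

section
/- Let (X,T) be a topological dynamical system given by a continuous ℤ^d-action on a compact metric space and let μ be an ergodic T-invariant Borel probability measure. The following are equivalent: (1) (X,T) is μ-mean equicontinuous; (2) (X,T) is μ-1_B-mean equicontinuous for every Borel set B ⊆ X; (3) (X,T) is μ-f-mean equicontinuous for every f ∈ L²(X,μ); (4) (X,μ,T) has discrete spectrum. -/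
open MeasureTheory Filter Finset Metric
open scoped Classical

noncomputable section

variable {X : Type*}

/-- The Besicovitch pseudometric `d_b(x,y) = limsup_n (1/|F_n|) Σ_{j∈F_n} d(T^j x, T^j y)`. -/
def dB {d : ℕ} [PseudoMetricSpace X] (T : (Fin d → ℤ) → X → X) (x y : X) : ℝ :=
  Filter.limsup (fun n : ℕ =>
    (∑ j ∈ Fbox d n, dist (T j x) (T j y)) / ((Fbox d n).card : ℝ)) Filter.atTop

/-- `g ∈ L²(X,μ)` is an eigenfunction of the action: `g ≠ 0` and there is `w ∈ ℝ^d` with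
`g ∘ T^j = e^{2πi⟨w,j⟩} g` a.e. for all `j`. -/
def IsEigenfunction {d : ℕ} [MeasurableSpace X] (μ : Measure X)
    (T : (Fin d → ℤ) → X → X) (g : Lp ℂ 2 μ) : Prop :=
  g ≠ 0 ∧ ∃ w : Fin d → ℝ, ∀ j : Fin d → ℤ,
    (g : X → ℂ) ∘ T j =ᵐ[μ]
      fun x => Complex.exp (2 * Real.pi * Complex.I * ∑ k, (w k : ℂ) * (j k : ℂ)) * (g : X → ℂ) x

/-- The system has discrete spectrum: there is an orthonormal (Hilbert) basis of `L²(X,μ)`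
consisting of eigenfunctions. -/
def HasDiscreteSpectrum {d : ℕ} [MeasurableSpace X] (μ : Measure X)
    (T : (Fin d → ℤ) → X → X) : Prop :=
  ∃ (ι : Type) (b : HilbertBasis ι ℂ (Lp ℂ 2 μ)), ∀ i : ι, IsEigenfunction μ T (b i)

/-- `(X,T)` is `μ`-mean equicontinuous. -/
def MuMeanEquicont {d : ℕ} [MetricSpace X] [MeasurableSpace X] (μ : Measure X)
    (T : (Fin d → ℤ) → X → X) : Prop :=
  ∀ τ : ℝ, 0 < τ → ∃ M : Set X, IsCompact M ∧ 1 - ENNReal.ofReal τ ≤ μ M ∧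
    ∀ ε : ℝ, 0 < ε → ∃ δ : ℝ, 0 < δ ∧
      ∀ x ∈ M, ∀ y ∈ M, dist x y ≤ δ → dB T x y ≤ ε

/-- Averages over boxes of a bounded family are asymptotically shift invariant. -/
lemma avg_shift {d : ℕ} {E : Type*} [NormedAddCommGroup E] [NormedSpace ℝ E]
    (u : (Fin d → ℤ) → E) (C : ℝ) (hu : ∀ j, ‖u j‖ ≤ C) (i : Fin d → ℤ) :
    Tendsto (fun n : ℕ => ((n : ℝ) ^ d)⁻¹ •
      (∑ j ∈ Fbox d n, u (j + i) - ∑ j ∈ Fbox d n, u j)) atTop (nhds 0) := by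
  have hC : 0 ≤ C := (norm_nonneg _).trans (hu 0)
  have hlim : Tendsto (fun n : ℕ => 2 * C * (1 - ∏ k : Fin d, (1 - |(i k : ℝ)| / (n : ℝ))))
      atTop (nhds 0) := by
    have h1 : Tendsto (fun n : ℕ => ∏ k : Fin d, (1 - |(i k : ℝ)| / (n : ℝ))) atTop
        (nhds (∏ k : Fin d, (1 - 0))) := by
      refine tendsto_finsetProd _ fun k _ => ?_
      exact tendsto_const_nhds.sub (tendsto_const_div_atTop_nhds_zero_nat _)
    have h2 := (tendsto_const_nhds (x := (1 : ℝ))).sub h1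
    have h3 := h2.const_mul (2 * C)
    simpa using h3
  refine squeeze_zero_norm' ?_ hlim
  have hev : ∀ᶠ n : ℕ in atTop, 1 ≤ n ∧ ∀ k, |i k| ≤ n := by
    refine (eventually_ge_atTop 1).and (eventually_all.2 fun k => ?_)
    filter_upwards [eventually_ge_atTop (|i k|).toNat] with n hn
    omega
  filter_upwards [hev] with n hn
  obtain ⟨hn1, hn⟩ := hn
  have hnpos : (0 : ℝ) < n := by exact_mod_cast hn1
  set A := Fbox d n with hA
  set B := A.map (addRightEmbedding i) with hB
  have hsum : ∑ j ∈ A, u (j + i) = ∑ j ∈ B, u j := by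
    rw [hB, Finset.sum_map]; rfl
  have hdiff : ∑ j ∈ B, u j - ∑ j ∈ A, u j = ∑ j ∈ B \ A, u j - ∑ j ∈ A \ B, u j :=
    (Finset.sum_sdiff_sub_sum_sdiff ).symm
  have hcardA : A.card = n ^ d := card_Fbox d n
  have hcardB : B.card = n ^ d := by rw [hB, Finset.card_map, hcardA]
  have hinter : (n : ℝ) ^ d * ∏ k : Fin d, (1 - |(i k : ℝ)| / (n : ℝ)) ≤ ((A ∩ B).card : ℝ) := by
    have hsub : (Fintype.piFinset fun k => Finset.Icc (max 0 (i k)) (min ((n : ℤ) - 1) (n - 1 + i k)))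
        ⊆ A ∩ B := by
      intro j hj
      simp only [Fintype.mem_piFinset, Finset.mem_Icc] at hj
      rw [Finset.mem_inter, hB, Finset.mem_map]
      refine ⟨mem_Fbox.2 fun k => ?_, j - i, mem_Fbox.2 fun k => ?_, ?_⟩
      · have := hj k; omega
      · have := hj k; simp only [Pi.sub_apply]; omega
      · simp
    refine le_trans ?_ (Nat.cast_le.2 (Finset.card_le_card hsub))
    rw [Fintype.card_piFinset, Nat.cast_prod]
    have : (n : ℝ) ^ d = ∏ _k : Fin d, (n : ℝ) := by simp
    rw [this, ← Finset.prod_mul_distrib]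
    refine Finset.prod_le_prod (fun k _ => ?_) (fun k _ => ?_)
    · have h : |(i k : ℝ)| ≤ n := by exact_mod_cast hn k
      have : |(i k : ℝ)| / (n : ℝ) ≤ 1 := div_le_one_of_le₀ h hnpos.le
      exact mul_nonneg hnpos.le (by linarith)
    · have h1 : (n : ℝ) * (1 - |(i k : ℝ)| / (n : ℝ)) = n - |(i k : ℝ)| := by
        field_simp
      rw [h1, Int.card_Icc]
      have h2 : (n : ℤ) - |i k| ≤
        ((min ((n : ℤ) - 1) (n - 1 + i k) + 1 - max 0 (i k)).toNat : ℤ) := by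
        refine le_trans ?_ (Int.self_le_toNat _)
        rcases le_total 0 (i k) with h | h
        · rw [abs_of_nonneg h, max_eq_right h, min_eq_left (by linarith)]; linarith
        · rw [abs_of_nonpos h, max_eq_left h, min_eq_right (by linarith)]; linarith
      exact_mod_cast h2
  have hc1 : ((B \ A).card : ℝ) = (n : ℝ) ^ d - (A ∩ B).card := by
    have := Finset.card_sdiff_add_card_inter B A
    rw [hcardB, Finset.inter_comm] at this
    have h : (((B \ A).card + (A ∩ B).card : ℕ) : ℝ) = ((n ^ d : ℕ) : ℝ) := by rw [this]
    push_cast at h; linarith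
  have hc2 : ((A \ B).card : ℝ) = (n : ℝ) ^ d - (A ∩ B).card := by
    have := Finset.card_sdiff_add_card_inter A B
    rw [hcardA] at this
    have h : (((A \ B).card + (A ∩ B).card : ℕ) : ℝ) = ((n ^ d : ℕ) : ℝ) := by rw [this]
    push_cast at h; linarith
  have hb : ∀ S : Finset (Fin d → ℤ), ‖∑ j ∈ S, u j‖ ≤ S.card * C := fun S =>
    (norm_sum_le_of_le S fun j _ => hu j).trans (by simp)
  have hpos : (0 : ℝ) < (n : ℝ) ^ d := by positivity
  rw [hsum, hdiff, norm_smul, Real.norm_of_nonneg (inv_nonneg.2 hpos.le)]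
  have h4 : ‖∑ j ∈ B \ A, u j - ∑ j ∈ A \ B, u j‖ ≤
      (n : ℝ) ^ d * (2 * C * (1 - ∏ k : Fin d, (1 - |(i k : ℝ)| / (n : ℝ)))) := by
    refine (norm_sub_le _ _).trans ?_
    refine (add_le_add (hb _) (hb _)).trans ?_
    rw [hc1, hc2]
    nlinarith
  rw [inv_mul_le_iff₀ hpos]
  exact h4

/-- A nonzero finite-dimensional subspace invariant under commuting maps contains a common
eigenvector. -/
lemma common_eigenvector {ι H : Type*} [AddCommGroup H] [Module ℂ H] (U : ι → H →ₗ[ℂ] H)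
    (hc : ∀ i j x, U i (U j x) = U j (U i x)) (V : Submodule ℂ H) [FiniteDimensional ℂ V]
    (hV : V ≠ ⊥) (hVU : ∀ i, ∀ x ∈ V, U i x ∈ V) :
    ∃ g ∈ V, g ≠ 0 ∧ ∀ i, ∃ c : ℂ, U i g = c • g := by
  let P : ℕ → Prop := fun n => ∃ V' : Submodule ℂ H, V' ≤ V ∧ V' ≠ ⊥ ∧
    (∀ i, ∀ x ∈ V', U i x ∈ V') ∧ Module.finrank ℂ V' = n
  have hP : ∃ n, P n := ⟨_, V, le_rfl, hV, hVU, rfl⟩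
  obtain ⟨V', hle, hne, hinv, hfr⟩ := Nat.find_spec hP
  have hmin := fun n h => Nat.find_min' hP (m := n) h
  have : FiniteDimensional ℂ V' := Submodule.finiteDimensional_of_le hle
  have hscal : ∀ i, ∃ c : ℂ, ∀ x ∈ V', U i x = c • x := by
    intro i
    have : Nontrivial V' := (Submodule.nontrivial_iff_ne_bot).2 hne
    obtain ⟨c, hc'⟩ := Module.End.exists_eigenvalue ((U i).restrict (hinv i))
    obtain ⟨v, hv⟩ := hc'.exists_hasEigenvector
    refine ⟨c, ?_⟩
    have hv1 := hv.apply_eq_smul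
    have hv1' : U i (v : H) = c • (v : H) := by
      have := congrArg Subtype.val hv1
      simpa using this
    let V'' : Submodule ℂ H := V' ⊓ Module.End.eigenspace (U i) c
    have hmem : ∀ x, x ∈ V'' ↔ x ∈ V' ∧ U i x = c • x := fun x => by
      simp [V'']
    have hV''ne : V'' ≠ ⊥ := by
      intro h
      have h1 : (v : H) ∈ V'' := (hmem _).2 ⟨v.2, hv1'⟩
      rw [h, Submodule.mem_bot] at h1
      exact hv.2 (Subtype.ext h1)
    have hle2 : V'' ≤ V' := inf_le_left
    have hV''inv : ∀ j, ∀ x ∈ V'', U j x ∈ V'' := by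
      intro j x hx
      rw [hmem] at hx ⊢
      refine ⟨hinv j x hx.1, ?_⟩
      rw [hc, hx.2, map_smul]
    have h2 := hmin _ ⟨V'', hle2.trans hle, hV''ne, hV''inv, rfl⟩
    have h3 : V'' = V' := Submodule.eq_of_le_of_finrank_le hle2 (by rw [hfr]; exact h2)
    intro x hx
    rw [← h3] at hx
    exact ((hmem x).1 hx).2
  obtain ⟨g, hg, hg0⟩ := Submodule.exists_mem_ne_zero_of_ne_bot hne
  exact ⟨g, hle hg, hg0, fun i => ⟨(hscal i).choose, (hscal i).choose_spec g hg⟩⟩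

/-- A nonzero vector with totally bounded orbit in an invariant closed subspace yields a joint
eigenvector in this subspace. -/
theorem hilbert_eig {d : ℕ} {H : Type*} [NormedAddCommGroup H] [InnerProductSpace ℂ H]
    [CompleteSpace H] (U : (Fin d → ℤ) → H →ₗᵢ[ℂ] H)
    (hadd : ∀ i j x, U (i + j) x = U i (U j x)) (W : Submodule ℂ H) (hWc : IsClosed (W : Set H))
    (hWU : ∀ i, ∀ x ∈ W, U i x ∈ W) (f : H) (hfW : f ∈ W) (hf : f ≠ 0)
    (htb : TotallyBounded (Set.range fun j => U j f)) :
    ∃ g ∈ W, g ≠ 0 ∧ ∀ j, ∃ c : ℂ, U j g = c • g := by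
  let A : (Fin d → ℤ) → H →L[ℂ] H := fun j => InnerProductSpace.rankOne ℂ (U j f) (U j f)
  have hA : ∀ j x, A j x = inner ℂ (U j f) x • U j f := fun j x => by
    simp [A, InnerProductSpace.rankOne_apply]
  have hAtb : TotallyBounded (convexHull ℝ (Set.range A)) := by
    refine TotallyBounded.convexHull ?_
    have hcomp : IsCompact (closure (Set.range fun j => U j f)) :=
      htb.closure.isCompact_of_isClosed isClosed_closure
    have hcont : Continuous (fun x : H => InnerProductSpace.rankOne ℂ x x) :=
      (ContinuousLinearMap.continuous₂ (ContinuousLinearMap.smulRightL ℂ H H)).comp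
        ((innerSL ℂ (E := H)).continuous.prodMk continuous_id)
    refine (hcomp.image hcont).totallyBounded.subset ?_
    rintro _ ⟨j, rfl⟩
    exact ⟨U j f, subset_closure ⟨j, rfl⟩, rfl⟩
  let K : ℕ → H →L[ℂ] H := fun n => ((n : ℝ) ^ d)⁻¹ • ∑ j ∈ Fbox d n, A j
  have hKapp : ∀ n x, K n x = ((n : ℝ) ^ d)⁻¹ • ∑ j ∈ Fbox d n, inner ℂ (U j f) x • U j f := by
    intro n x
    simp only [K, _root_.smul_apply, _root_.sum_apply, hA]
  have hKmem : ∀ n, K (n + 1) ∈ convexHull ℝ (Set.range A) := by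
    intro n
    simp only [K, Finset.smul_sum]
    refine (convex_convexHull ℝ _).sum_mem (fun j _ => by positivity) ?_
      (fun j _ => subset_convexHull ℝ _ ⟨j, rfl⟩)
    rw [Finset.sum_const, card_Fbox, nsmul_eq_mul]
    push_cast
    exact mul_inv_cancel₀ (by positivity)
  have hcomp : IsCompact (closure (convexHull ℝ (Set.range A))) :=
    hAtb.closure.isCompact_of_isClosed isClosed_closure
  obtain ⟨K0, -, φ, hφ, hlim⟩ := hcomp.tendsto_subseq (fun n => subset_closure (hKmem n))
  have hψ : Tendsto (fun m => φ m + 1) atTop atTop :=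
    (tendsto_add_atTop_nat 1).comp hφ.tendsto_atTop
  have hlim' : Tendsto (fun m => K (φ m + 1)) atTop (nhds K0) := hlim
  have hptw : ∀ x, Tendsto (fun m => K (φ m + 1) x) atTop (nhds (K0 x)) := fun x =>
    ((ContinuousLinearMap.apply ℂ H x).continuous.tendsto K0).comp hlim'
  have hAcomp : ∀ j, IsCompactOperator (A j) := by
    intro j
    have h1 : IsCompactOperator (innerSL ℂ (U j f)) := isCompactOperator_of_locallyCompactSpace_dom _
    exact h1.clm_comp (ContinuousLinearMap.toSpanSingleton ℂ (U j f))
  have hKcomp : IsCompactOperator K0 := by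
    refine isCompactOperator_of_tendsto hlim' (Eventually.of_forall fun m => ?_)
    have hs : ∀ S : Finset (Fin d → ℤ), IsCompactOperator (⇑(∑ j ∈ S, A j)) := by
      intro S
      exact Submodule.sum_mem (compactOperator (RingHom.id ℂ) H H) (fun j _ => hAcomp j)
    exact (hs _).smul _
  have hKsymm : (K0 : H →ₗ[ℂ] H).IsSymmetric := by
    intro x y
    have h1 : Tendsto (fun m => inner ℂ (K (φ m + 1) x) y) atTop (nhds (inner ℂ (K0 x) y)) :=
      (hptw x).inner tendsto_const_nhds
    have h2 : Tendsto (fun m => inner ℂ x (K (φ m + 1) y)) atTop (nhds (inner ℂ x (K0 y))) :=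
      tendsto_const_nhds.inner (hptw y)
    refine tendsto_nhds_unique h1 (h2.congr fun m => ?_)
    rw [hKapp, hKapp, RCLike.real_smul_eq_coe_smul (K := ℂ), RCLike.real_smul_eq_coe_smul (K := ℂ),
      inner_smul_left, inner_smul_right, inner_sum, sum_inner]
    simp only [inner_smul_left, inner_smul_right, RCLike.conj_ofReal, inner_conj_symm]
    congr 1
    exact Finset.sum_congr rfl fun j _ => mul_comm _ _
  have hKcomm : ∀ i x, U i (K0 x) = K0 (U i x) := by
    intro i x
    have h1 : Tendsto (fun m => U i (K (φ m + 1) x)) atTop (nhds (U i (K0 x))) :=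
      ((U i).continuous.tendsto _).comp (hptw x)
    have h2 := hptw (U i x)
    have h3 := (avg_shift (fun j => inner ℂ (U j f) (U i x) • U j f) (‖f‖ * ‖x‖ * ‖f‖)
      (fun j => by
        rw [norm_smul, (U j).norm_map]
        gcongr
        refine (norm_inner_le_norm _ _).trans ?_
        rw [(U j).norm_map, (U i).norm_map]) i).comp hψ
    have h4 : Tendsto (fun m => U i (K (φ m + 1) x) - K (φ m + 1) (U i x)) atTop (nhds 0) := by
      refine h3.congr fun m => ?_
      simp only [Function.comp_apply]
      rw [hKapp, hKapp, smul_sub]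
      congr 1
      rw [RCLike.real_smul_eq_coe_smul (K := ℂ), RCLike.real_smul_eq_coe_smul (K := ℂ), map_smul,
        map_sum]
      congr 1
      refine Finset.sum_congr rfl fun j _ => ?_
      rw [map_smul, add_comm j i, hadd, (U i).inner_map_map]
    have h5 := tendsto_nhds_unique h4 (h1.sub h2)
    exact (sub_eq_zero.1 h5.symm)
  have hK0 : K0 ≠ 0 := by
    intro hK0
    have hfpos : 0 < ‖f‖ := norm_pos_iff.2 hf
    obtain ⟨t, hts, htf, hcov⟩ := htb.exists_subset (Metric.dist_mem_uniformity (half_pos hfpos))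
    have hz : Tendsto (fun m => ∑ y ∈ htf.toFinset, RCLike.re (inner ℂ y (K (φ m + 1) y))) atTop
        (nhds (∑ y ∈ htf.toFinset, 0)) := by
      refine tendsto_finsetSum _ fun y _ => ?_
      have h2 : Tendsto (fun m => inner ℂ y (K (φ m + 1) y)) atTop (nhds (inner ℂ y (K0 y))) :=
        tendsto_const_nhds.inner (hptw y)
      have h3 := (RCLike.continuous_re.tendsto _).comp h2
      rw [hK0] at h3
      simpa [Function.comp_def] using h3
    rw [Finset.sum_const_zero] at hz
    have hlow : ∀ m, (‖f‖ ^ 2 / 2) ^ 2 ≤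
        ∑ y ∈ htf.toFinset, RCLike.re (inner ℂ y (K (φ m + 1) y)) := by
      intro m
      have hterm : ∀ y, RCLike.re (inner ℂ y (K (φ m + 1) y)) =
          (((φ m + 1 : ℕ) : ℝ) ^ d)⁻¹ * ∑ j ∈ Fbox d (φ m + 1), ‖inner ℂ (U j f) y‖ ^ 2 := by
        intro y
        rw [hKapp, RCLike.real_smul_eq_coe_smul (K := ℂ), inner_smul_right, RCLike.re_ofReal_mul,
          inner_sum, map_sum]
        congr 1
        refine Finset.sum_congr rfl fun j _ => ?_
        rw [inner_smul_right, ← inner_conj_symm y, RCLike.mul_conj]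
        norm_cast
      simp only [hterm]
      rw [← Finset.mul_sum, Finset.sum_comm]
      have hp : (0 : ℝ) < ((φ m + 1 : ℕ) : ℝ) ^ d := by positivity
      rw [le_inv_mul_iff₀ hp]
      have hcard : (((φ m + 1 : ℕ) : ℝ) ^ d) * (‖f‖ ^ 2 / 2) ^ 2 =
          ∑ j ∈ Fbox d (φ m + 1), (‖f‖ ^ 2 / 2) ^ 2 := by
        rw [Finset.sum_const, card_Fbox, nsmul_eq_mul]; push_cast; ring
      rw [hcard]
      refine Finset.sum_le_sum fun j _ => ?_
      have hj := hcov ⟨j, rfl⟩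
      simp only [Set.mem_iUnion, Set.mem_ofPred_eq] at hj
      obtain ⟨y, hy, hjy⟩ := hj
      refine le_trans ?_ (Finset.single_le_sum (f := fun y => ‖inner ℂ (U j f) y‖ ^ 2)
        (fun y _ => by positivity) (htf.mem_toFinset.2 hy))
      refine pow_le_pow_left₀ (by positivity) ?_ 2
      have e1 : inner ℂ (U j f) (U j f) = inner ℂ (U j f) y + inner ℂ (U j f) (U j f - y) := by
        rw [← inner_add_right]; congr 1; abel
      have e2 : ‖inner ℂ (U j f) (U j f)‖ = ‖f‖ ^ 2 := by
        rw [inner_self_eq_norm_sq_to_K, (U j).norm_map]; simp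
      have e3 : ‖inner ℂ (U j f) (U j f - y)‖ ≤ ‖f‖ * (‖f‖ / 2) := by
        refine (norm_inner_le_norm _ _).trans ?_
        rw [(U j).norm_map]
        rw [← dist_eq_norm]
        gcongr
      have e4 := norm_add_le (inner ℂ (U j f) y) (inner ℂ (U j f) (U j f - y))
      rw [← e1, e2] at e4
      nlinarith
    have := ge_of_tendsto' hz hlow
    have : 0 < (‖f‖ ^ 2 / 2) ^ 2 := by positivity
    linarith
  have hex : ∃ lam, Module.End.HasEigenvalue (K0 : Module.End ℂ H) lam ∧ lam ≠ 0 := by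
    by_contra hcon
    push Not at hcon
    exact hK0 ((ContinuousLinearMap.eq_zero_of_forall_hasEigenvalue_eq_zero hKcomp hKsymm).1 hcon)
  obtain ⟨lam, hlam, hlam0⟩ := hex
  have := ContinuousLinearMap.finite_dimensional_eigenspace hKcomp lam hlam0
  have hKW : ∀ x, K0 x ∈ W := by
    intro x
    refine hWc.mem_of_tendsto (hptw x) (Eventually.of_forall fun m => ?_)
    rw [hKapp, RCLike.real_smul_eq_coe_smul (K := ℂ)]
    exact W.smul_mem _ (W.sum_mem fun j _ => W.smul_mem _ (hWU j f hfW))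
  obtain ⟨g, hgV, hg0, hg⟩ := common_eigenvector (fun i => (U i).toLinearMap)
    (fun i j x => by
      simp only [LinearIsometry.coe_toLinearMap]
      rw [← hadd, add_comm, hadd])
    (Module.End.eigenspace (K0 : Module.End ℂ H) lam) hlam
    (fun i x hx => by
      rw [Module.End.mem_eigenspace_iff] at hx ⊢
      have hx' : K0 x = lam • x := hx
      show K0 (U i x) = lam • U i x
      rw [← hKcomm, hx', map_smul])
  refine ⟨g, ?_, hg0, hg⟩
  have hg' : K0 g = lam • g := Module.End.mem_eigenspace_iff.1 hgV
  have : g = lam⁻¹ • K0 g := by rw [hg', smul_smul, inv_mul_cancel₀ hlam0, one_smul]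
  rw [this]
  exact W.smul_mem _ (hKW g)

/-- Weak form of the ergodic theorem: for a bounded nonnegative function, eventual upper bounds on
averages bound the integral. -/
lemma erg_ge {d : ℕ} [MeasurableSpace X] (T : (Fin d → ℤ) → X → X)
    (hTadd : ∀ i j, T (i + j) = T i ∘ T j)
    (μ : Measure X) [IsProbabilityMeasure μ]
    (hT : ∀ j, MeasurePreserving (T j) μ μ)
    (herg : ∀ A : Set X, MeasurableSet A → (∀ j, T j ⁻¹' A = A) → μ A = 0 ∨ μ A = 1)
    (p : X → ℝ) (hp : Measurable p) (C : ℝ) (hpC : ∀ x, ‖p x‖ ≤ C) :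
    ∀ᵐ x ∂μ, ∀ ε : ℝ, (∀ᶠ n : ℕ in atTop, ((n : ℝ) ^ d)⁻¹ * ∑ j ∈ Fbox d n, p (T j x) ≤ ε) →
      ∫ x, p x ∂μ ≤ ε := by
  set I := ∫ x, p x ∂μ with hI
  have hC : 0 ≤ C := by
    obtain ⟨x⟩ := nonempty_of_isProbabilityMeasure μ
    exact (norm_nonneg _).trans (hpC x)
  set av : ℕ → X → ℝ := fun n x => ((n : ℝ) ^ d)⁻¹ * ∑ j ∈ Fbox d n, p (T j x) with hav
  have havm : ∀ n, Measurable (av n) := fun n =>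
    (Finset.measurable_sum _ fun j _ => hp.comp (hT j).measurable).const_mul _
  have havC : ∀ n x, ‖av n x‖ ≤ C := by
    intro n x
    simp only [hav, norm_mul]
    have h1 : ‖∑ j ∈ Fbox d n, p (T j x)‖ ≤ (n : ℝ) ^ d * C := by
      refine (norm_sum_le_of_le _ fun j _ => hpC _).trans ?_
      rw [Finset.sum_const, card_Fbox, nsmul_eq_mul]; push_cast; exact le_rfl
    rw [norm_inv, Real.norm_of_nonneg (by positivity : (0 : ℝ) ≤ (n : ℝ) ^ d)]
    rcases eq_or_lt_of_le (by positivity : (0 : ℝ) ≤ (n : ℝ) ^ d) with h | h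
    · rw [← h]; simpa using hC
    · rw [inv_mul_le_iff₀ h]; exact h1
  have hpint : Integrable p μ := Integrable.of_bound hp.aestronglyMeasurable C (ae_of_all _ hpC)
  have havI : ∀ n, 1 ≤ n → ∫ x, av n x ∂μ = I := by
    intro n hn
    have hterm : ∀ j, ∫ x, p (T j x) ∂μ = I := by
      intro j
      rw [← integral_map (hT j).measurable.aemeasurable
        (by rw [(hT j).map_eq]; exact hp.aestronglyMeasurable), (hT j).map_eq]
    simp only [hav]
    rw [integral_const_mul, integral_finsetSum (f := fun j a => p (T j a)) _ (fun j _ =>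
      ((hT j).integrable_comp_of_integrable hpint))]
    simp only [hterm, Finset.sum_const, card_Fbox, nsmul_eq_mul]
    push_cast
    have : (0 : ℝ) < (n : ℝ) ^ d := by positivity
    field_simp
  let A : ℝ → Set X := fun c => {x | ∃ q : ℚ, (q : ℝ) < c ∧ ∃ N : ℕ, ∀ n : ℕ, N ≤ n → av n x ≤ q}
  have hAm : ∀ c, MeasurableSet (A c) := by
    intro c
    have : A c = ⋃ q : ℚ, ⋃ (_ : (q : ℝ) < c), ⋃ N : ℕ, ⋂ n : ℕ, ⋂ (_ : N ≤ n),
        {x | av n x ≤ q} := by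
      ext x; simp [A]
    rw [this]
    refine MeasurableSet.iUnion fun q => MeasurableSet.iUnion fun _ => MeasurableSet.iUnion fun N =>
      MeasurableSet.iInter fun n => MeasurableSet.iInter fun _ => ?_
    exact measurableSet_le (havm n) measurable_const
  have hshift : ∀ i x, Tendsto (fun n => av n (T i x) - av n x) atTop (nhds 0) := by
    intro i x
    refine (avg_shift (fun j => p (T j x)) C (fun j => hpC _) i).congr fun n => ?_
    simp only [hav, smul_eq_mul, mul_sub, hTadd, Function.comp_apply]
  have hsub : ∀ c x y, Tendsto (fun n => av n y - av n x) atTop (nhds 0) → x ∈ A c → y ∈ A c := by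
    rintro c x y hxy ⟨q, hq, N, hN⟩
    obtain ⟨q', hq1, hq2⟩ := exists_rat_btwn hq
    have hev : ∀ᶠ n in atTop, av n y - av n x < q' - q :=
      hxy.eventually_lt_const (sub_pos.2 hq1)
    obtain ⟨N', hN'⟩ := eventually_atTop.1 (hev.and (eventually_ge_atTop N))
    refine ⟨q', hq2, N', fun n hn => ?_⟩
    have := hN' n hn
    have := hN n this.2
    linarith
  have hinv : ∀ c i, T i ⁻¹' (A c) = A c := by
    intro c i
    ext x
    refine ⟨fun h => hsub c _ _ ?_ h, fun h => hsub c _ _ (hshift i x) h⟩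
    have := (hshift i x).neg
    simpa using this
  have hzero : ∀ c, c ≤ I → μ (A c) = 0 := by
    -- first for `c < I`
    have hlt : ∀ c, c < I → μ (A c) = 0 := by
      intro c hc
      rcases herg (A c) (hAm c) (hinv c) with h | h
      · exact h
      exfalso
      have hae : ∀ᵐ x ∂μ, x ∈ A c := by
        rw [← prob_compl_eq_zero_iff (hAm c)] at h
        exact h
      have hdom : Tendsto (fun n => ∫ x, max (av n x) c ∂μ) atTop (nhds (∫ _x, c ∂μ)) := by
        refine tendsto_integral_of_dominated_convergence (fun _ => C + |c|)
          (fun n => ((havm n).max measurable_const).aestronglyMeasurable) (integrable_const _)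
          (fun n => ae_of_all _ fun x => ?_) ?_
        · have h1 := havC n x
          rw [Real.norm_eq_abs] at h1 ⊢
          have h2 := abs_nonneg (av n x)
          have h3 := abs_nonneg c
          rcases max_choice (av n x) c with h | h <;> rw [h] <;> linarith
        · filter_upwards [hae] with x hx
          obtain ⟨q, hq, N, hN⟩ := hx
          refine tendsto_const_nhds.congr' ?_
          filter_upwards [eventually_ge_atTop N] with n hn
          exact (max_eq_right ((hN n hn).trans hq.le)).symm
      rw [integral_const] at hdom
      simp only [probReal_univ, one_smul] at hdom
      have : I ≤ c := by
        refine ge_of_tendsto hdom ?_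
        filter_upwards [eventually_ge_atTop 1] with n hn
        rw [← havI n hn]
        refine integral_mono ?_ ?_ fun x => le_max_left _ _
        · exact Integrable.of_bound (havm n).aestronglyMeasurable C (ae_of_all _ (havC n))
        · refine Integrable.of_bound ((havm n).max measurable_const).aestronglyMeasurable (C + |c|)
            (ae_of_all _ fun x => ?_)
          have h1 := havC n x
          rw [Real.norm_eq_abs] at h1 ⊢
          have h2 := abs_nonneg (av n x)
          have h3 := abs_nonneg c
          rcases max_choice (av n x) c with h | h <;> rw [h] <;> linarith
      linarith
    intro c hc
    have : A c ⊆ ⋃ q : ℚ, ⋃ (_ : (q : ℝ) < I), A q := by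
      rintro x ⟨q, hq, hN⟩
      obtain ⟨q', h1, h2⟩ := exists_rat_btwn (hq.trans_le hc)
      simp only [Set.mem_iUnion]
      exact ⟨q', h2, q, h1, hN⟩
    refine measure_mono_null this ?_
    rw [measure_iUnion_null_iff]
    intro q
    rw [measure_iUnion_null_iff]
    intro hq
    exact hlt q hq
  have hnot : ∀ᵐ x ∂μ, x ∉ A I := by
    rw [ae_iff]; simpa using hzero I le_rfl
  filter_upwards [hnot] with x hx ε hε
  by_contra hlt
  push Not at hlt
  obtain ⟨q, h1, h2⟩ := exists_rat_btwn hlt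
  obtain ⟨N, hN⟩ := eventually_atTop.1 hε
  exact hx ⟨q, h2, N, fun n hn => (hN n hn).trans h1.le⟩

/-- Koopman operators. -/
def koop {d : ℕ} [MeasurableSpace X] {μ : Measure X} (T : (Fin d → ℤ) → X → X)
    (hT : ∀ j, MeasurePreserving (T j) μ μ) (j : Fin d → ℤ) : Lp ℂ 2 μ →ₗᵢ[ℂ] Lp ℂ 2 μ :=
  Lp.compMeasurePreservingₗᵢ ℂ (T j) (hT j)

lemma koop_ae {d : ℕ} [MeasurableSpace X] {μ : Measure X} (T : (Fin d → ℤ) → X → X)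
    (hT : ∀ j, MeasurePreserving (T j) μ μ) (j : Fin d → ℤ) (g : Lp ℂ 2 μ) :
    (koop T hT j g : X → ℂ) =ᵐ[μ] g ∘ T j := Lp.coeFn_compMeasurePreserving g (hT j)

lemma koop_add {d : ℕ} [MeasurableSpace X] {μ : Measure X} (T : (Fin d → ℤ) → X → X)
    (hTadd : ∀ i j, T (i + j) = T i ∘ T j)
    (hT : ∀ j, MeasurePreserving (T j) μ μ) (i j : Fin d → ℤ) (g : Lp ℂ 2 μ) :
    koop T hT (i + j) g = koop T hT i (koop T hT j g) := by
  apply Lp.ext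
  have h1 := koop_ae T hT (i + j) g
  have h2 := koop_ae T hT i (koop T hT j g)
  have h3 := (hT i).quasiMeasurePreserving.ae_eq_comp (koop_ae T hT j g)
  refine h1.trans (EventuallyEq.trans ?_ (h2.trans h3).symm)
  rw [add_comm, hTadd]
  exact EventuallyEq.rfl

lemma koop_zero {d : ℕ} [MeasurableSpace X] {μ : Measure X} (T : (Fin d → ℤ) → X → X)
    (hTadd : ∀ i j, T (i + j) = T i ∘ T j)
    (hT : ∀ j, MeasurePreserving (T j) μ μ) (g : Lp ℂ 2 μ) : koop T hT 0 g = g := by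
  apply (koop T hT 0).injective
  rw [← koop_add T hTadd, add_zero]

lemma koop_dist {d : ℕ} [MeasurableSpace X] {μ : Measure X} (T : (Fin d → ℤ) → X → X)
    (hT : ∀ j, MeasurePreserving (T j) μ μ) (f : X → ℂ) (hf : MemLp f 2 μ) (i j : Fin d → ℤ) :
    ‖koop T hT i (hf.toLp f) - koop T hT j (hf.toLp f)‖ ^ 2 =
      ∫ x, ‖f (T i x) - f (T j x)‖ ^ 2 ∂μ := by
  set G := koop T hT i (hf.toLp f) - koop T hT j (hf.toLp f) with hG
  have h1 : (G : X → ℂ) =ᵐ[μ] fun x => f (T i x) - f (T j x) := by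
    have a1 := (koop_ae T hT i (hf.toLp f)).trans
      ((hT i).quasiMeasurePreserving.ae_eq_comp hf.coeFn_toLp)
    have a2 := (koop_ae T hT j (hf.toLp f)).trans
      ((hT j).quasiMeasurePreserving.ae_eq_comp hf.coeFn_toLp)
    filter_upwards [Lp.coeFn_sub (koop T hT i (hf.toLp f)) (koop T hT j (hf.toLp f)), a1, a2]
      with x h h1 h2
    rw [hG, h, Pi.sub_apply, h1, h2]; rfl
  have h2 : ‖G‖ ^ 2 = RCLike.re (inner ℂ G G) := (inner_self_eq_norm_sq G).symm
  rw [h2, L2.inner_def, ← integral_re (L2.integrable_inner G G)]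
  refine integral_congr_ae ?_
  filter_upwards [h1] with x hx
  rw [inner_self_eq_norm_sq, hx]

theorem orbit_tb {d : ℕ} [MetricSpace X] [MeasurableSpace X] (T : (Fin d → ℤ) → X → X)
    (hTadd : ∀ i j, T (i + j) = T i ∘ T j)
    (μ : Measure X) [IsProbabilityMeasure μ]
    (hT : ∀ j, MeasurePreserving (T j) μ μ)
    (herg : ∀ A : Set X, MeasurableSet A → (∀ j, T j ⁻¹' A = A) → μ A = 0 ∨ μ A = 1)
    (f : X → ℂ) (hfm : Measurable f) (C : ℝ) (hfC : ∀ x, ‖f x‖ ≤ C) (hf : MemLp f 2 μ)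
    (M : Set X) (hM : TotallyBounded M) (hMm : MeasurableSet M) (hM2 : 1 < 2 * μ.real M)
    (hMf : ∀ ε : ℝ, 0 < ε → ∃ δ : ℝ, 0 < δ ∧ ∀ x ∈ M, ∀ y ∈ M, dist x y ≤ δ →
      ∀ᶠ n : ℕ in atTop,
        ((n : ℝ) ^ d)⁻¹ * ∑ j ∈ Fbox d n, ‖f (T j x) - f (T j y)‖ ^ 2 ≤ ε) :
    TotallyBounded (Set.range fun j => koop T hT j (hf.toLp f)) := by
  have hcomm : ∀ i j x, T i (T j x) = T j (T i x) := fun i j x => by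
    have h1 := congrFun (hTadd i j) x
    have h2 := congrFun (hTadd j i) x
    rw [add_comm] at h1
    exact h1.symm.trans h2
  set F := hf.toLp f with hF
  set U := koop T hT with hU
  -- good point
  have hgood1 : ∀ᵐ x ∂μ, ∀ i j, ∀ ε : ℝ, 0 ≤ ε → (∀ᶠ n : ℕ in atTop,
      ((n : ℝ) ^ d)⁻¹ * ∑ k ∈ Fbox d n, ‖f (T k (T i x)) - f (T k (T j x))‖ ^ 2 ≤ ε ^ 2) →
      ‖U i F - U j F‖ ≤ ε := by
    rw [ae_all_iff]; intro i
    rw [ae_all_iff]; intro j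
    have h := erg_ge T hTadd μ hT herg (fun x => ‖f (T i x) - f (T j x)‖ ^ 2)
      (((hfm.comp (hT i).measurable).sub (hfm.comp (hT j).measurable)).norm.pow_const 2)
      ((C + C) ^ 2) (fun x => by
        rw [norm_pow, norm_norm]
        exact pow_le_pow_left₀ (norm_nonneg _)
          ((norm_sub_le _ _).trans (add_le_add (hfC _) (hfC _))) 2)
    filter_upwards [h] with x hx ε hε hev
    have h2 := hx (ε ^ 2) (by
      filter_upwards [hev] with n hn
      simpa only [hcomm i, hcomm j] using hn)
    rw [← koop_dist T hT f hf] at h2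
    exact (pow_le_pow_iff_left₀ (norm_nonneg _) hε two_ne_zero).1 h2
  have hgood2 : ∀ᵐ x ∂μ, ∀ i, ∃ r, T r x ∈ M ∧ T (i + r) x ∈ M := by
    rw [ae_all_iff]; intro i
    set B : Set X := M ∩ T i ⁻¹' M with hB
    have hBm : MeasurableSet B := hMm.inter ((hT i).measurable hMm)
    have hBpos : 0 < μ.real B := by
      have h1 : μ.real (T i ⁻¹' M) = μ.real M := by
        rw [measureReal_def, (hT i).measure_preimage hMm.nullMeasurableSet, measureReal_def]
      have h2 := measureReal_union_add_inter (μ := μ) (s := M) (t := T i ⁻¹' M)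
        ((hT i).measurable hMm)
      have h3 : μ.real (M ∪ T i ⁻¹' M) ≤ 1 := measureReal_le_one
      rw [h1] at h2
      change _ + μ.real B = _ at h2
      linarith
    have h := erg_ge T hTadd μ hT herg (B.indicator fun _ => (1 : ℝ))
      (measurable_const.indicator hBm) 1 (fun x => by
        by_cases hx : x ∈ B <;> simp [hx])
    rw [integral_indicator_const _ hBm] at h
    filter_upwards [h] with x hx
    by_contra hcon
    push Not at hcon
    have h0 := hx 0 (Eventually.of_forall fun n => by
      have : ∑ j ∈ Fbox d n, B.indicator (fun _ => (1 : ℝ)) (T j x) = 0 := by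
        refine Finset.sum_eq_zero fun r _ => Set.indicator_of_notMem ?_ _
        rintro ⟨h1, h2⟩
        refine hcon r h1 ?_
        rw [hTadd]; exact h2
      rw [this]; simp)
    simp only [smul_eq_mul, mul_one] at h0
    linarith
  obtain ⟨x, hx1, hx2⟩ := (hgood1.and hgood2).exists
  have hshift : ∀ a b k, ‖U (a + k) F - U (b + k) F‖ = ‖U a F - U b F‖ := by
    intro a b k
    rw [add_comm a k, add_comm b k, hU, koop_add T hTadd, koop_add T hTadd, ← map_sub,
      LinearIsometry.norm_map]
  rw [Metric.totallyBounded_iff]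
  intro ε hε
  obtain ⟨δ, hδ, hδM⟩ := hMf ((ε / 4) ^ 2) (by positivity)
  let S : Set X := {y | y ∈ M ∧ ∃ r, T r x = y}
  have hS : TotallyBounded S := hM.subset fun y hy => hy.1
  obtain ⟨t, htS, htf, hcov⟩ := hS.exists_subset (Metric.dist_mem_uniformity hδ)
  have hr : ∀ y : X, ∃ r, y ∈ t → T r x = y := by
    intro y
    by_cases hy : y ∈ t
    · obtain ⟨r, hr⟩ := (htS hy).2
      exact ⟨r, fun _ => hr⟩
    · exact ⟨0, fun h => absurd h hy⟩
  choose r hr using hr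
  refine ⟨Set.image2 (fun y z => U (r y - r z) F) t t, htf.image2 _ htf, ?_⟩
  have key : ∀ a, T a x ∈ M → ∃ y ∈ t, ‖U a F - U (r y) F‖ ≤ ε / 4 := by
    intro a ha
    have := hcov (show T a x ∈ S from ⟨ha, a, rfl⟩)
    simp only [Set.mem_iUnion, Set.mem_ofPred_eq] at this
    obtain ⟨y, hy, hd⟩ := this
    refine ⟨y, hy, hx1 a (r y) (ε / 4) (by positivity) ?_⟩
    rw [hr y hy]
    exact hδM _ ha _ (htS hy).1 hd.le
  rintro _ ⟨i, rfl⟩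
  obtain ⟨r', h1, h2⟩ := hx2 i
  obtain ⟨y, hy, hy'⟩ := key _ h2
  obtain ⟨z, hz, hz'⟩ := key _ h1
  simp only [Set.mem_iUnion]
  refine ⟨_, ⟨y, hy, z, hz, rfl⟩, ?_⟩
  rw [Metric.mem_ball, dist_eq_norm]
  have e1 : ‖U i F - U (r y - r z) F‖ = ‖U (i + r' + r z) F - U (r y + r') F‖ := by
    rw [← hshift i (r y - r z) (r' + r z)]
    congr 4 <;> abel
  have e2 : ‖U (i + r' + r z) F - U (r y + r z) F‖ = ‖U (i + r') F - U (r y) F‖ := hshift _ _ _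
  have e3 : ‖U (r y + r z) F - U (r y + r') F‖ = ‖U r' F - U (r z) F‖ := by
    rw [norm_sub_rev, add_comm (r y) r', add_comm (r y) (r z)]
    exact hshift _ _ _
  have e4 := norm_sub_le_norm_sub_add_norm_sub (U (i + r' + r z) F) (U (r y + r z) F)
    (U (r y + r') F)
  show ‖U i F - U (r y - r z) F‖ < ε
  linarith

lemma orthonormal_countable {H : Type*} [NormedAddCommGroup H] [InnerProductSpace ℂ H]
    [TopologicalSpace.SeparableSpace H] (S : Set H)
    (hS : Orthonormal ℂ (Subtype.val : S → H)) : S.Countable := by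
  have hd : S.PairwiseDisjoint (fun s => ball s (1 / 2)) := by
    intro a ha b hb hab
    refine ball_disjoint_ball ?_
    have h0 : inner ℂ a b = 0 := hS.2 (i := ⟨a, ha⟩) (j := ⟨b, hb⟩) (by simpa using hab)
    have ha1 : ‖a‖ = 1 := hS.1 ⟨a, ha⟩
    have hb1 : ‖b‖ = 1 := hS.1 ⟨b, hb⟩
    have h2 : ‖a - b‖ ^ 2 = 2 := by
      rw [@norm_sub_sq ℂ, h0, ha1, hb1]; norm_num
    rw [dist_eq_norm]
    nlinarith [norm_nonneg (a - b)]
  exact hd.countable_of_isOpen (fun i _ => isOpen_ball) (fun i _ => ⟨i, mem_ball_self (by norm_num)⟩)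

lemma hilbert_basis {d : ℕ} {H : Type*} [NormedAddCommGroup H] [InnerProductSpace ℂ H]
    [CompleteSpace H] [TopologicalSpace.SeparableSpace H]
    (U : (Fin d → ℤ) → H →ₗᵢ[ℂ] H) (hadd : ∀ i j x, U (i + j) x = U i (U j x))
    (hzero : ∀ x, U 0 x = x)
    (htot : ∀ h : H, (∀ F, TotallyBounded (Set.range fun j => U j F) → inner ℂ F h = 0) → h = 0) :
    ∃ (ι : Type) (b : HilbertBasis ι ℂ H), ∀ i j, ∃ c : ℂ, U j (b i) = c • b i := by
  let P : Set (Set H) := {S | Orthonormal ℂ (Subtype.val : S → H) ∧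
    ∀ g ∈ S, ∀ j, ∃ c : ℂ, U j g = c • g}
  obtain ⟨S, hS⟩ : ∃ S, Maximal (· ∈ P) S := by
    refine zorn_subset P fun c hc hch => ⟨⋃₀ c, ⟨?_, ?_⟩, fun s hs => Set.subset_sUnion_of_mem hs⟩
    · exact orthonormal_sUnion_of_directed hch.directedOn fun s hs => (hc hs).1
    · rintro g ⟨s, hs, hg⟩; exact (hc hs).2 g hg
  obtain ⟨hSo, hSe⟩ := hS.prop
  set W : Submodule ℂ H := (Submodule.span ℂ S)ᗮ with hW
  have hWmem : ∀ x, x ∈ W ↔ ∀ s ∈ S, inner ℂ s x = 0 := by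
    intro x
    rw [hW, Submodule.mem_orthogonal]
    refine ⟨fun h s hs => h s (Submodule.subset_span hs), fun h u hu => ?_⟩
    induction hu using Submodule.span_induction with
    | mem u hu => exact h u hu
    | zero => simp
    | add u v _ _ hu hv => rw [inner_add_left, hu, hv, add_zero]
    | smul c u _ hu => rw [inner_smul_left, hu, mul_zero]
  have hWU : ∀ i, ∀ x ∈ W, U i x ∈ W := by
    intro i x hx
    rw [hWmem] at hx ⊢
    intro s hs
    obtain ⟨c, hc⟩ := hSe s hs i
    have h1 : inner ℂ (U i s) (U i x) = 0 := by rw [LinearIsometry.inner_map_map]; exact hx s hs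
    rw [hc, inner_smul_left] at h1
    rcases mul_eq_zero.1 h1 with h | h
    · exfalso
      have hc0 : c = 0 := by simpa using h
      have : ‖U i s‖ = 1 := by rw [LinearIsometry.norm_map]; exact hSo.1 ⟨s, hs⟩
      rw [hc, hc0] at this; simp at this
    · exact h
  have hWUo : ∀ i, ∀ x ∈ Wᗮ, U i x ∈ Wᗮ := by
    intro i x hx
    rw [Submodule.mem_orthogonal] at hx ⊢
    intro u hu
    have h1 : U i (U (-i) u) = u := by rw [← hadd, add_neg_cancel, hzero]
    rw [← h1, LinearIsometry.inner_map_map]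
    exact hx _ (hWU _ _ hu)
  have hWc : IsClosed (W : Set H) := Submodule.isClosed_orthogonal _
  have hWbot : W = ⊥ := by
    rw [Submodule.eq_bot_iff]
    by_contra hcon
    push Not at hcon
    obtain ⟨h, hhW, hh0⟩ := hcon
    have h1 : ∃ F, TotallyBounded (Set.range fun j => U j F) ∧ inner ℂ F h ≠ 0 := by
      by_contra hc
      push Not at hc
      exact hh0 (htot h hc)
    obtain ⟨F, hF, hFh⟩ := h1
    set f := W.starProjection F with hf
    have hfW : f ∈ W := Submodule.starProjection_apply_mem _ _
    have hFf : F - f ∈ Wᗮ := Submodule.sub_starProjection_mem_orthogonal F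
    have hf0 : f ≠ 0 := by
      intro h0
      rw [h0, sub_zero] at hFf
      apply hFh
      have := (Submodule.mem_orthogonal _ _).1 hFf h hhW
      rw [← inner_conj_symm, this, map_zero]
    have hcomm : ∀ j, U j f = W.starProjection (U j F) := by
      intro j
      refine (Submodule.eq_starProjection_of_mem_orthogonal (hWU j f hfW) ?_).symm
      rw [← map_sub]; exact hWUo j _ hFf
    have htb : TotallyBounded (Set.range fun j => U j f) := by
      have : (Set.range fun j => U j f) = W.starProjection '' (Set.range fun j => U j F) := by
        rw [← Set.range_comp]; congr 1; ext j; exact hcomm j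
      rw [this]
      exact hF.image W.starProjection.uniformContinuous
    obtain ⟨g, hgW, hg0, hgc⟩ := hilbert_eig U hadd W hWc hWU f hfW hf0 htb
    set e : H := ((‖g‖⁻¹ : ℝ) : ℂ) • g with he
    have hgn : ‖g‖ ≠ 0 := norm_ne_zero_iff.2 hg0
    have hen : ‖e‖ = 1 := by
      rw [he, norm_smul, Complex.norm_real, norm_inv, norm_norm, inv_mul_cancel₀ hgn]
    have heW : e ∈ W := W.smul_mem _ hgW
    have heo : ∀ s ∈ S, inner ℂ s e = 0 := (hWmem e).1 heW
    have hins : insert e S ∈ P := by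
      refine ⟨?_, ?_⟩
      · rw [orthonormal_subtype_iff_ite]
        have hSo' := orthonormal_subtype_iff_ite.1 hSo
        have heS : ∀ s ∈ S, e ≠ s := by
          rintro s hs rfl
          have := heo e hs
          rw [inner_self_eq_zero] at this
          rw [this] at hen; simp at hen
        intro v hv w hw
        rcases hv with rfl | hv <;> rcases hw with rfl | hw
        · simp [inner_self_eq_norm_sq_to_K, hen]
        · rw [if_neg (heS w hw), ← inner_conj_symm, heo w hw, map_zero]
        · rw [if_neg (heS v hv).symm, heo v hv]
        · exact hSo' v hv w hw
      · rintro x (rfl | hx) j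
        · obtain ⟨c, hc⟩ := hgc j
          exact ⟨c, by rw [he, map_smul, hc, smul_comm]⟩
        · exact hSe x hx j
    have heS : e ∈ S := hS.le_of_ge hins (Set.subset_insert _ _) (Set.mem_insert _ _)
    have := heo e heS
    rw [inner_self_eq_zero] at this
    rw [this] at hen; simp at hen
  have hcount : Countable S := (orthonormal_countable S hSo).to_subtype
  have hsm : Small.{0} S := inferInstance
  let q : Shrink.{0} S → H := fun i => ((equivShrink S).symm i : H)
  have hq : Orthonormal ℂ q := hSo.comp _ (equivShrink S).symm.injective
  have hr : Set.range q = S := by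
    rw [show q = Subtype.val ∘ (equivShrink S).symm from rfl,
      Set.range_comp, (equivShrink S).symm.surjective.range_eq]
    simp
  refine ⟨Shrink.{0} S, HilbertBasis.mkOfOrthogonalEqBot hq (by rw [hr]; exact hWbot), ?_⟩
  intro i j
  rw [HilbertBasis.coe_mkOfOrthogonalEqBot]
  exact hSe _ ((equivShrink S).symm i).2 j

lemma ds_of_tb {d : ℕ} [MetricSpace X] [CompactSpace X] [MeasurableSpace X] [BorelSpace X]
    (T : (Fin d → ℤ) → X → X)
    (hTadd : ∀ i j, T (i + j) = T i ∘ T j)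
    (μ : Measure X) [IsProbabilityMeasure μ]
    (hT : ∀ j, MeasurePreserving (T j) μ μ)
    (htot : ∀ h : Lp ℂ 2 μ,
      (∀ F, TotallyBounded (Set.range fun j => koop T hT j F) → inner ℂ F h = 0) → h = 0) :
    HasDiscreteSpectrum μ T := by
  have : Fact ((2 : ENNReal) ≠ ⊤) := ⟨by norm_num⟩
  have hadd := koop_add T hTadd hT
  have hzero := koop_zero T hTadd hT
  obtain ⟨ι, b, hb⟩ := hilbert_basis (koop T hT) hadd hzero htot
  refine ⟨ι, b, fun i => ?_⟩
  set g := b i with hg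
  have hg1 : ‖g‖ = 1 := b.orthonormal.1 i
  have hg0 : g ≠ 0 := by rintro h; rw [h] at hg1; simp at hg1
  refine ⟨hg0, ?_⟩
  choose c hc using hb i
  have hcn : ∀ j, ‖c j‖ = 1 := by
    intro j
    have := LinearIsometry.norm_map (koop T hT j) g
    rw [hc j, norm_smul, hg1, mul_one] at this
    exact this
  refine ⟨fun k => (c (Pi.single k 1)).arg / (2 * Real.pi), ?_⟩
  set w : Fin d → ℝ := fun k => (c (Pi.single k 1)).arg / (2 * Real.pi) with hw
  let ψ : (Fin d → ℤ) → ℂ := fun j =>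
    Complex.exp (2 * Real.pi * Complex.I * ∑ k, (w k : ℂ) * (j k : ℂ))
  have hψadd : ∀ i j, ψ (i + j) = ψ i * ψ j := by
    intro i j
    simp only [ψ, ← Complex.exp_add, ← mul_add, ← Finset.sum_add_distrib]
    congr 2
    refine Finset.sum_congr rfl fun k _ => ?_
    simp
  have hψ0 : ψ 0 = 1 := by simp [ψ]
  let K : AddSubgroup (Fin d → ℤ) :=
    { carrier := {j | koop T hT j g = ψ j • g}
      zero_mem' := by
        change koop T hT 0 g = ψ 0 • g
        rw [hzero, hψ0, one_smul]
      add_mem' := by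
        intro a b ha hb
        change koop T hT (a + b) g = ψ (a + b) • g
        change koop T hT a g = ψ a • g at ha
        change koop T hT b g = ψ b • g at hb
        rw [hadd, hb, map_smul, ha, smul_smul, hψadd, mul_comm]
      neg_mem' := by
        intro a ha
        change koop T hT (-a) g = ψ (-a) • g
        change koop T hT a g = ψ a • g at ha
        have h1 : koop T hT (-a) (koop T hT a g) = g := by
          rw [← hadd, neg_add_cancel, hzero]
        rw [ha, map_smul] at h1
        have h2 : ψ (-a) * ψ a = 1 := by rw [← hψadd, neg_add_cancel, hψ0]
        calc koop T hT (-a) g = (ψ (-a) * ψ a) • koop T hT (-a) g := by rw [h2, one_smul]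
          _ = ψ (-a) • g := by rw [← smul_smul, h1] }
  have hsingle : ∀ k, Pi.single k (1 : ℤ) ∈ K := by
    intro k
    change koop T hT (Pi.single k 1) g = ψ (Pi.single k 1) • g
    rw [hc]
    congr 1
    have h1 : ∑ l, (w l : ℂ) * (((Pi.single k (1 : ℤ) : Fin d → ℤ) l : ℤ) : ℂ) = w k := by
      rw [Finset.sum_eq_single k]
      · simp
      · intro l _ hl; simp [Pi.single_eq_of_ne hl]
      · simp
    simp only [ψ, h1]
    have h2 := Complex.norm_mul_exp_arg_mul_I (c (Pi.single k 1))
    rw [hcn] at h2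
    rw [← h2]
    simp only [hw]
    push_cast
    rw [one_mul]
    congr 1
    have : (Real.pi : ℂ) ≠ 0 := by exact_mod_cast Real.pi_ne_zero
    field_simp
  have hall : ∀ j, j ∈ K := by
    intro j
    rw [pi_eq_sum_univ' j]
    refine K.sum_mem fun k _ => ?_
    have := K.zsmul_mem (hsingle k) (j k)
    convert this using 2
  intro j
  have h1 : koop T hT j g = ψ j • g := hall j
  refine (koop_ae T hT j g).symm.trans ?_
  rw [h1]
  filter_upwards [Lp.coeFn_smul (ψ j) g] with x hx
  rw [hx]; rfl

lemma density_le_one (d : ℕ) (S : Set (Fin d → ℤ)) (n : ℕ) :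
    (((Fbox d n).filter (fun j => j ∈ S)).card : ℝ) / ((Fbox d n).card : ℝ) ≤ 1 := by
  refine div_le_one_of_le₀ ?_ (by positivity)
  exact_mod_cast Finset.card_filter_le _ _

lemma upperDensity_le_one (d : ℕ) (S : Set (Fin d → ℤ)) : upperDensity d S ≤ 1 := by
  refine limsup_le_of_le ?_ (Eventually.of_forall fun n => density_le_one d S n)
  exact IsBoundedUnder.isCoboundedUnder_le
    (isBoundedUnder_of ⟨0, fun n => div_nonneg (by positivity) (by positivity)⟩)

lemma rho_avg {d : ℕ} (T : (Fin d → ℤ) → X → X) (f : X → ℂ) (hf : ∀ a b, ‖f a - f b‖ ≤ 1)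
    (x y : X) (η : ℝ) (hη : 0 < η) (hη1 : η ≤ 1 / 2) (h : rhoF T f x y ≤ η) :
    ∀ᶠ n : ℕ in atTop,
        ((n : ℝ) ^ d)⁻¹ * ∑ j ∈ Fbox d n, ‖f (T j x) - f (T j y)‖ ^ 2 ≤ 4 * η := by
  have hne : {ε : ℝ | 0 < ε ∧ upperDensity d {i | ε < ‖f (T i x) - f (T i y)‖} < ε}.Nonempty :=
    ⟨2, by norm_num, (upperDensity_le_one _ _).trans_lt (by norm_num)⟩
  obtain ⟨e, ⟨he0, hed⟩, he2⟩ := exists_lt_of_csInf_lt hne (lt_of_le_of_lt h (by linarith : η < 2 * η))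
  set S : Set (Fin d → ℤ) := {i | e < ‖f (T i x) - f (T i y)‖} with hS
  have hev := eventually_lt_of_limsup_lt hed
    (isBoundedUnder_of ⟨1, fun n => density_le_one d S n⟩)
  filter_upwards [hev, eventually_ge_atTop 1] with n hn hn1
  have hnd : (0 : ℝ) < (n : ℝ) ^ d := by positivity
  rw [card_Fbox] at hn
  push_cast at hn
  rw [div_lt_iff₀ hnd] at hn
  rw [inv_mul_le_iff₀ hnd]
  calc ∑ j ∈ Fbox d n, ‖f (T j x) - f (T j y)‖ ^ 2
      ≤ ∑ j ∈ Fbox d n, (e + if j ∈ S then 1 else 0) := by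
        refine Finset.sum_le_sum fun j _ => ?_
        have h0 := norm_nonneg (f (T j x) - f (T j y))
        have h1 := hf (T j x) (T j y)
        split_ifs with hj
        · nlinarith
        · have : ‖f (T j x) - f (T j y)‖ ≤ e := not_lt.1 hj
          nlinarith
    _ = n ^ d * e + ((Fbox d n).filter (fun j => j ∈ S)).card := by
        rw [Finset.sum_add_distrib, Finset.sum_const, card_Fbox, nsmul_eq_mul,
          Finset.sum_boole]; push_cast; rfl
    _ ≤ n ^ d * e + e * n ^ d := by linarith
    _ ≤ n ^ d * (4 * η) := by nlinarith

lemma half_lt [MeasurableSpace X] (μ : Measure X) [IsProbabilityMeasure μ] (M : Set X)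
    (h : 1 - ENNReal.ofReal (1 / 4) ≤ μ M) : 1 < 2 * μ.real M := by
  have h1 : (1 : ENNReal) - ENNReal.ofReal (1 / 4) = ENNReal.ofReal (3 / 4) := by
    rw [← ENNReal.ofReal_one, ← ENNReal.ofReal_sub _ (by norm_num)]; norm_num
  rw [h1, ENNReal.ofReal_le_iff_le_toReal (measure_ne_top _ _)] at h
  rw [Measure.real]
  linarith

lemma ds_of_two {d : ℕ} [MetricSpace X] [CompactSpace X] [MeasurableSpace X] [BorelSpace X]
    (T : (Fin d → ℤ) → X → X)
    (hTadd : ∀ i j, T (i + j) = T i ∘ T j)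
    (μ : Measure X) [IsProbabilityMeasure μ]
    (hT : ∀ j, MeasurePreserving (T j) μ μ)
    (herg : ∀ A : Set X, MeasurableSet A → (∀ j, T j ⁻¹' A = A) → μ A = 0 ∨ μ A = 1)
    (h2 : ∀ B : Set X, MeasurableSet B → MuFMeanEquicont μ T (B.indicator fun _ => (1 : ℂ))) :
    HasDiscreteSpectrum μ T := by
  refine ds_of_tb T hTadd μ hT fun h hh => ?_
  rw [Lp.eq_zero_iff_ae_eq_zero]
  refine Lp.ae_eq_zero_of_forall_setIntegral_eq_zero h (by norm_num) (by norm_num) ?_ ?_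
  · intro s _ _
    exact ((Lp.memLp h).integrable (by norm_num)).integrableOn
  · intro B hB _
    rw [← L2.inner_indicatorConstLp_one hB (measure_ne_top μ B) h]
    apply hh
    obtain ⟨M, hMc, hMμ, hM⟩ := h2 B hB (1 / 4) (by norm_num)
    have hdiff : ∀ a b : X, ‖B.indicator (fun _ => (1 : ℂ)) a - B.indicator (fun _ => (1 : ℂ)) b‖ ≤ 1 := by
      intro a b
      by_cases ha : a ∈ B <;> by_cases hb : b ∈ B <;> simp [ha, hb]
    refine orbit_tb T hTadd μ hT herg (B.indicator fun _ => (1 : ℂ))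
      (measurable_const.indicator hB) 1 ?_ (memLp_indicator_const 2 hB 1 (Or.inr (measure_ne_top μ B)))
      M hMc.totallyBounded hMc.measurableSet (half_lt μ M hMμ) ?_
    · intro x
      by_cases hx : x ∈ B <;> simp [hx]
    · intro ε hε
      have hη : 0 < min (ε / 4) (1 / 2) := by positivity
      obtain ⟨δ, hδ, hδM⟩ := hM _ hη
      refine ⟨δ, hδ, fun x hx y hy hxy => ?_⟩
      filter_upwards [rho_avg T _ hdiff x y _ hη (min_le_right _ _) (hδM x hx y hy hxy)] with n hn
      refine hn.trans ?_
      have := min_le_left (ε / 4) (1 / 2)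
      linarith

lemma ds_of_one {d : ℕ} [MetricSpace X] [CompactSpace X] [MeasurableSpace X] [BorelSpace X]
    (T : (Fin d → ℤ) → X → X)
    (hTadd : ∀ i j, T (i + j) = T i ∘ T j)
    (μ : Measure X) [IsProbabilityMeasure μ]
    (hT : ∀ j, MeasurePreserving (T j) μ μ)
    (herg : ∀ A : Set X, MeasurableSet A → (∀ j, T j ⁻¹' A = A) → μ A = 0 ∨ μ A = 1)
    (h1 : MuMeanEquicont μ T) :
    HasDiscreteSpectrum μ T := by
  refine ds_of_tb T hTadd μ hT fun h hh => ?_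
  refine DenseRange.eq_zero_of_inner_left ℂ
    (ContinuousMap.toLp_denseRange ℂ μ ℂ (p := 2) (by norm_num)) fun f => ?_
  rw [← inner_conj_symm, hh, map_zero]
  have hfm : Measurable f := f.continuous.measurable
  have hfC : ∀ x, ‖f x‖ ≤ ‖f‖ := f.norm_coe_le_norm
  have hf : MemLp f 2 μ := MemLp.of_bound hfm.aestronglyMeasurable ‖f‖ (ae_of_all _ hfC)
  have heq : ContinuousMap.toLp 2 μ ℂ f = hf.toLp f := by
    apply Lp.ext
    exact (ContinuousMap.coeFn_toLp μ f).trans hf.coeFn_toLp.symm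
  rw [heq]
  obtain ⟨M, hMc, hMμ, hM⟩ := h1 (1 / 4) (by norm_num)
  refine orbit_tb T hTadd μ hT herg f hfm ‖f‖ hfC hf
    M hMc.totallyBounded hMc.measurableSet (half_lt μ M hMμ) ?_
  intro ε hε
  have huc := CompactSpace.uniformContinuous_of_continuous f.continuous
  obtain ⟨δ', hδ', hδf⟩ := Metric.uniformContinuous_iff.1 huc (Real.sqrt (ε / 2)) (by positivity)
  set K := 4 * ‖f‖ ^ 2 / δ' with hK
  have hK0 : 0 ≤ K := by positivity
  have hbd : ∀ a b, ‖f a - f b‖ ^ 2 ≤ ε / 2 + K * dist a b := by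
    intro a b
    rcases lt_or_ge (dist a b) δ' with hab | hab
    · have h3 := hδf hab
      rw [dist_eq_norm] at h3
      have h4 : ‖f a - f b‖ ^ 2 ≤ Real.sqrt (ε / 2) ^ 2 := by gcongr
      rw [Real.sq_sqrt (by positivity)] at h4
      have : 0 ≤ K * dist a b := by positivity
      linarith
    · have h3 : ‖f a - f b‖ ≤ 2 * ‖f‖ := by
        refine (norm_sub_le _ _).trans ?_
        linarith [hfC a, hfC b]
      have h4 : ‖f a - f b‖ ^ 2 ≤ (2 * ‖f‖) ^ 2 := by gcongr
      have h5 : K * δ' ≤ K * dist a b := by gcongr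
      have h6 : K * δ' = 4 * ‖f‖ ^ 2 := by rw [hK]; field_simp
      nlinarith
  have hκ : 0 < ε / (4 * (K + 1)) := by positivity
  obtain ⟨δ, hδ, hδM⟩ := hM _ hκ
  refine ⟨δ, hδ, fun x hx y hy hxy => ?_⟩
  have h3 : dB T x y < 2 * (ε / (4 * (K + 1))) := lt_of_le_of_lt (hδM x hx y hy hxy) (by linarith)
  have hbdd : IsBoundedUnder (· ≤ ·) atTop (fun n : ℕ =>
      (∑ j ∈ Fbox d n, dist (T j x) (T j y)) / ((Fbox d n).card : ℝ)) := by
    refine isBoundedUnder_of ⟨Metric.diam (Set.univ : Set X), fun n => ?_⟩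
    refine div_le_of_le_mul₀ (by positivity) Metric.diam_nonneg ?_
    rw [mul_comm, ← nsmul_eq_mul]
    exact Finset.sum_le_card_nsmul _ _ _ fun j _ =>
      Metric.dist_le_diam_of_mem isCompact_univ.isBounded trivial trivial
  filter_upwards [eventually_lt_of_limsup_lt h3 hbdd, eventually_ge_atTop 1] with n hn hn1
  have hnd : (0 : ℝ) < (n : ℝ) ^ d := by positivity
  rw [card_Fbox] at hn
  push_cast at hn
  rw [div_lt_iff₀ hnd] at hn
  rw [inv_mul_le_iff₀ hnd]
  calc ∑ j ∈ Fbox d n, ‖f (T j x) - f (T j y)‖ ^ 2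
      ≤ ∑ j ∈ Fbox d n, (ε / 2 + K * dist (T j x) (T j y)) :=
        Finset.sum_le_sum fun j _ => hbd _ _
    _ = n ^ d * (ε / 2) + K * ∑ j ∈ Fbox d n, dist (T j x) (T j y) := by
        rw [Finset.sum_add_distrib, Finset.sum_const, card_Fbox, nsmul_eq_mul, Finset.mul_sum]
        push_cast; rfl
    _ ≤ n ^ d * (ε / 2) + K * (2 * (ε / (4 * (K + 1))) * n ^ d) := by gcongr
    _ ≤ n ^ d * ε := by
        have : K * (2 * (ε / (4 * (K + 1)))) ≤ ε / 2 := by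
          rw [mul_div_assoc', mul_div_assoc', div_le_iff₀ (by positivity)]
          nlinarith
        nlinarith

lemma maximal_comb {d N : ℕ} (a : (Fin d → ℤ) → ENNReal) (lam : ENNReal)
    (S : Finset (Fin d → ℤ)) (hSN : S ⊆ Fbox d N)
    (hS : ∀ s ∈ S, ∃ n : ℕ, 1 ≤ n ∧ n ≤ N ∧ lam * (n : ENNReal) ^ d ≤ ∑ j ∈ Fbox d n, a (j + s)) :
    lam * S.card ≤ 4 ^ d * ∑ j ∈ Fbox d (2 * N), a j := by
  choose! m hm1 hmN hm using hS
  let D : (Fin d → ℤ) → Finset (Fin d → ℤ) := fun s => (Fbox d (m s)).map (addRightEmbedding s)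
  have hDmem : ∀ s x, x ∈ D s ↔ ∀ k, s k ≤ x k ∧ x k < s k + m s := by
    intro s x
    simp only [D, Finset.mem_map, mem_Fbox, addRightEmbedding_apply]
    constructor
    · rintro ⟨j, hj, rfl⟩ k
      have := hj k
      simp only [Pi.add_apply]
      omega
    · intro h
      refine ⟨x - s, fun k => ?_, by simp⟩
      have := h k
      simp only [Pi.sub_apply]
      omega
  have hDne : ∀ s ∈ S, s ∈ D s := by
    intro s hs
    rw [hDmem]
    intro k
    have := hm1 s hs
    omega
  obtain ⟨u, huS, hud, hu⟩ := Vitali.exists_disjoint_subfamily_covering_enlargement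
    (fun s => (D s : Set (Fin d → ℤ))) (S : Set (Fin d → ℤ)) (fun s => (m s : ℝ)) 2 (by norm_num)
    (fun s _ => by positivity) N (fun s hs => by exact_mod_cast hmN s hs)
    (fun s hs => ⟨s, hDne s hs⟩)
  have hufin : u.Finite := S.finite_toSet.subset huS
  lift u to Finset (Fin d → ℤ) using hufin
  let E : (Fin d → ℤ) → Finset (Fin d → ℤ) := fun b =>
    Fintype.piFinset fun k => Finset.Icc (b k - 2 * m b) (b k + m b)
  have hE : ∀ b ∈ u, (E b).card ≤ (4 * m b) ^ d := by
    intro b hb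
    simp only [E, Fintype.card_piFinset, Int.card_Icc]
    have h1 := hm1 b (huS hb)
    refine (Finset.prod_le_pow_card _ _ (4 * m b) fun k _ => ?_).trans_eq (by simp)
    omega
  have hcov : S ⊆ u.biUnion E := by
    intro s hs
    obtain ⟨b, hb, ⟨x, hxs, hxb⟩, hle⟩ := hu s hs
    rw [Finset.mem_biUnion]
    refine ⟨b, hb, ?_⟩
    have hle' : m s ≤ 2 * m b := by exact_mod_cast hle
    rw [Fintype.mem_piFinset]
    intro k
    have h1 := (hDmem s x).1 hxs k
    have h2 := (hDmem b x).1 hxb k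
    rw [Finset.mem_Icc]
    omega
  have hcard : S.card ≤ ∑ b ∈ u, (4 * m b) ^ d :=
    (Finset.card_le_card hcov).trans (Finset.card_biUnion_le.trans (Finset.sum_le_sum hE))
  calc lam * (S.card : ENNReal) ≤ lam * ((∑ b ∈ u, (4 * m b) ^ d : ℕ) : ENNReal) := by
        gcongr
    _ = 4 ^ d * ∑ b ∈ u, lam * (m b : ENNReal) ^ d := by
        push_cast
        rw [Finset.mul_sum, Finset.mul_sum]
        refine Finset.sum_congr rfl fun b _ => ?_
        rw [mul_pow]; ring
    _ ≤ 4 ^ d * ∑ b ∈ u, ∑ j ∈ D b, a j := by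
        gcongr with b hb
        refine (hm b (huS hb)).trans_eq ?_
        simp only [D, Finset.sum_map, addRightEmbedding_apply]
    _ = 4 ^ d * ∑ j ∈ u.biUnion D, a j := by
        rw [Finset.sum_biUnion]
        intro b hb c hc hbc
        exact Finset.disjoint_coe.1 (hud hb hc hbc)
    _ ≤ 4 ^ d * ∑ j ∈ Fbox d (2 * N), a j := by
        gcongr
        intro x hx
        obtain ⟨b, hb, hx⟩ := Finset.mem_biUnion.1 hx
        rw [mem_Fbox]
        intro k
        have h1 := (hDmem b x).1 hx k
        have h2 := (mem_Fbox.1 (hSN (huS hb))) k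
        have h3 := hmN b (huS hb)
        push_cast
        omega

lemma maximal_N {d : ℕ} [MeasurableSpace X] (T : (Fin d → ℤ) → X → X)
    (hTadd : ∀ i j, T (i + j) = T i ∘ T j) (μ : Measure X)
    (hT : ∀ j, MeasurePreserving (T j) μ μ) (h : X → ENNReal) (hh : Measurable h) (lam : ENNReal)
    (N : ℕ) (hN : 1 ≤ N) :
    lam * μ {x | ∃ n : ℕ, 1 ≤ n ∧ n ≤ N ∧ lam * (n : ENNReal) ^ d < ∑ j ∈ Fbox d n, h (T j x)} ≤
      8 ^ d * ∫⁻ x, h x ∂μ := by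
  set G := {x | ∃ n : ℕ, 1 ≤ n ∧ n ≤ N ∧ lam * (n : ENNReal) ^ d < ∑ j ∈ Fbox d n, h (T j x)}
    with hG
  have hGm : MeasurableSet G := by
    have : G = ⋃ n : ℕ, ⋃ (_ : 1 ≤ n), ⋃ (_ : n ≤ N),
        {x | lam * (n : ENNReal) ^ d < ∑ j ∈ Fbox d n, h (T j x)} := by
      ext x; simp only [hG, Set.mem_iUnion, Set.mem_ofPred_eq, exists_prop]
    rw [this]
    refine MeasurableSet.iUnion fun n => MeasurableSet.iUnion fun _ => MeasurableSet.iUnion fun _ => ?_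
    exact measurableSet_lt measurable_const
      (Finset.measurable_sum _ fun j _ => hh.comp (hT j).measurable)
  have hpt : ∀ x, ∑ s ∈ Fbox d N, lam * G.indicator (fun _ => (1 : ENNReal)) (T s x) ≤
      4 ^ d * ∑ j ∈ Fbox d (2 * N), h (T j x) := by
    intro x
    have := maximal_comb (fun j => h (T j x)) lam ((Fbox d N).filter fun s => T s x ∈ G)
      (N := N) (Finset.filter_subset _ _) (by
        intro s hs
        obtain ⟨n, h1, h2, h3⟩ := (Finset.mem_filter.1 hs).2
        refine ⟨n, h1, h2, h3.le.trans_eq ?_⟩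
        simp only [hTadd, Function.comp_apply])
    refine le_trans (le_of_eq ?_) this
    rw [← Finset.mul_sum]
    congr 1
    rw [← Finset.sum_boole]
    refine Finset.sum_congr rfl fun s _ => ?_
    simp [Set.indicator_apply]
  have hInt := lintegral_mono (μ := μ) hpt
  have hm1 : ∀ s, Measurable fun x => lam * G.indicator (fun _ => (1 : ENNReal)) (T s x) :=
    fun s => ((measurable_const.indicator hGm).comp (hT s).measurable).const_mul _
  have hm2 : ∀ s, Measurable fun x => h (T s x) := fun s => hh.comp (hT s).measurable
  rw [lintegral_finsetSum _ fun s _ => hm1 s,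
    lintegral_const_mul _ (Finset.measurable_sum _ fun j _ => hm2 j),
    lintegral_finsetSum _ fun s _ => hm2 s] at hInt
  have e1 : ∀ s, ∫⁻ x, lam * G.indicator (fun _ => (1 : ENNReal)) (T s x) ∂μ = lam * μ G := by
    intro s
    have hm3 : Measurable (G.indicator (fun _ => (1 : ENNReal))) := measurable_const.indicator hGm
    rw [(hT s).lintegral_comp (f := fun x => lam * G.indicator (fun _ => (1 : ENNReal)) x)
      (hm3.const_mul lam), lintegral_const_mul _ hm3]
    congr 1
    exact lintegral_indicator_one hGm
  have e2 : ∀ s, ∫⁻ x, h (T s x) ∂μ = ∫⁻ x, h x ∂μ := fun s => (hT s).lintegral_comp hh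
  simp only [e1, e2, Finset.sum_const, card_Fbox, nsmul_eq_mul] at hInt
  have hNd0 : ((N : ENNReal) ^ d) ≠ 0 := pow_ne_zero _ (by
    simp; omega)
  have hNdt : ((N : ENNReal) ^ d) ≠ ⊤ := ENNReal.pow_ne_top (by simp)
  have h8 : 4 ^ d * (((2 * N) ^ d : ℕ) * ∫⁻ x, h x ∂μ) =
      (N : ENNReal) ^ d * (8 ^ d * ∫⁻ x, h x ∂μ) := by
    push_cast
    rw [show (8 : ENNReal) = 4 * 2 by norm_num, mul_pow, mul_pow]; ring
  rw [h8] at hInt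
  push_cast at hInt
  exact (ENNReal.mul_le_mul_iff_right hNd0 hNdt).1 hInt

lemma maximal_ineq_s18 {d : ℕ} [MeasurableSpace X] (T : (Fin d → ℤ) → X → X)
    (hTadd : ∀ i j, T (i + j) = T i ∘ T j) (μ : Measure X)
    (hT : ∀ j, MeasurePreserving (T j) μ μ) (h : X → ENNReal) (hh : Measurable h)
    (lam : ENNReal) :
    lam * μ {x | ∃ n : ℕ, 1 ≤ n ∧ lam * (n : ENNReal) ^ d < ∑ j ∈ Fbox d n, h (T j x)} ≤
      8 ^ d * ∫⁻ x, h x ∂μ := by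
  set G : ℕ → Set X := fun N =>
    {x | ∃ n : ℕ, 1 ≤ n ∧ n ≤ N ∧ lam * (n : ENNReal) ^ d < ∑ j ∈ Fbox d n, h (T j x)} with hG
  have hU : {x | ∃ n : ℕ, 1 ≤ n ∧ lam * (n : ENNReal) ^ d < ∑ j ∈ Fbox d n, h (T j x)} =
      ⋃ N, G N := by
    ext x
    simp only [hG, Set.mem_iUnion]
    constructor
    · rintro ⟨n, h1, h2⟩; exact ⟨n, n, h1, le_rfl, h2⟩
    · rintro ⟨N, n, h1, _, h2⟩; exact ⟨n, h1, h2⟩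
  have hmono : Monotone G := by
    rintro a b hab x ⟨n, h1, h2, h3⟩
    exact ⟨n, h1, h2.trans hab, h3⟩
  rw [hU, hmono.measure_iUnion, ENNReal.mul_iSup]
  refine iSup_le fun N => ?_
  rcases Nat.eq_zero_or_pos N with rfl | hN
  · have : G 0 = ∅ := by
      ext x; simp only [hG, Set.mem_empty_iff_false, iff_false]
      rintro ⟨n, h1, h2, _⟩; omega
    rw [this]; simp
  · exact maximal_N T hTadd μ hT h hh lam N hN

/-- Lusin's theorem. -/
lemma lusin [MetricSpace X] [CompactSpace X] [MeasurableSpace X] [BorelSpace X]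
    (μ : Measure X) [IsProbabilityMeasure μ] {Y : Type*} [TopologicalSpace Y]
    [SecondCountableTopology Y] [MeasurableSpace Y] [OpensMeasurableSpace Y]
    (e : X → Y) (he : Measurable e) (A : Set X) (hA : MeasurableSet A) (τ : ENNReal) (hτ : τ ≠ 0) :
    ∃ M ⊆ A, IsCompact M ∧ μ Mᶜ ≤ μ Aᶜ + τ ∧ ContinuousOn e M := by
  let b := TopologicalSpace.countableBasis Y
  have hbc : Countable b := (TopologicalSpace.countable_countableBasis Y).to_subtype
  have hb : TopologicalSpace.IsTopologicalBasis b := TopologicalSpace.isBasis_countableBasis Y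
  have hτ2 : τ / 2 ≠ 0 := by simp [hτ]
  obtain ⟨t, ht, hts⟩ := ENNReal.exists_pos_sum_of_countable' hτ2 b
  have hV : ∀ n : b, MeasurableSet (e ⁻¹' (n : Set Y)) := fun n => he (hb.isOpen n.2).measurableSet
  have ht2 : ∀ n, t n / 2 ≠ 0 := fun n => by simp [(ht n).ne']
  choose K hKV hKc hKμ using fun n => (hV n).exists_isClosed_sdiff_lt (measure_ne_top μ _) (ht2 n)
  choose L hLV hLc hLμ using fun n => (hV n).compl.exists_isClosed_sdiff_lt (measure_ne_top μ _) (ht2 n)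
  obtain ⟨K0, hK0A, hK0c, hK0μ⟩ := hA.exists_isClosed_sdiff_lt (measure_ne_top μ _) hτ2
  set M := K0 ∩ ⋂ n, (K n ∪ L n) with hM
  have hMc : IsClosed M := hK0c.inter (isClosed_iInter fun n => (hKc n).union (hLc n))
  refine ⟨M, Set.inter_subset_left.trans hK0A, hMc.isCompact, ?_, ?_⟩
  · have hsub : Mᶜ ⊆ (Aᶜ ∪ (A \ K0)) ∪ ⋃ n : b, ((e ⁻¹' (n : Set Y) \ K n) ∪ ((e ⁻¹' (n : Set Y))ᶜ \ L n)) := by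
      intro x hx
      by_contra hcon
      simp only [Set.mem_union, Set.mem_iUnion, not_or, not_exists, Set.mem_sdiff, not_and, not_not,
        Set.mem_compl_iff] at hcon
      apply hx
      refine ⟨hcon.1.2 hcon.1.1, Set.mem_iInter.2 fun n => ?_⟩
      by_cases hxn : x ∈ e ⁻¹' (n : Set Y)
      · exact Or.inl ((hcon.2 n).1 hxn)
      · exact Or.inr ((hcon.2 n).2 hxn)
    calc μ Mᶜ ≤ _ := measure_mono hsub
      _ ≤ (μ Aᶜ + τ / 2) + ∑' n, t n := by
        refine (measure_union_le _ _).trans (add_le_add ?_ ?_)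
        · exact (measure_union_le _ _).trans (add_le_add le_rfl hK0μ.le)
        · refine (measure_iUnion_le _).trans (ENNReal.tsum_le_tsum fun n => ?_)
          refine (measure_union_le _ _).trans ?_
          exact (add_le_add (hKμ n).le (hLμ n).le).trans_eq (ENNReal.add_halves _)
      _ ≤ (μ Aᶜ + τ / 2) + τ / 2 := by gcongr
      _ = μ Aᶜ + τ := by rw [add_assoc, ENNReal.add_halves]
  · rw [continuousOn_iff_continuous_domRestrict, hb.continuous_iff]
    intro s hs
    refine isOpen_induced_iff.2 ⟨(L ⟨s, hs⟩)ᶜ, (hLc _).isOpen_compl, ?_⟩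
    ext ⟨x, hx⟩
    have hx2 := Set.mem_iInter.1 hx.2 ⟨s, hs⟩
    simp only [Set.mem_preimage, Set.mem_compl_iff, Set.domRestrict_apply]
    constructor
    · intro h
      rcases hx2 with h2 | h2
      · exact hKV _ h2
      · exact absurd h2 h
    · intro h h2
      exact hLV _ h2 h

lemma approx_eig {d : ℕ} [MeasurableSpace X] (T : (Fin d → ℤ) → X → X)
    (μ : Measure X) [IsProbabilityMeasure μ] {ι : Type} (b : HilbertBasis ι ℂ (Lp ℂ 2 μ))
    (f : X → ℂ) (hfm : StronglyMeasurable f) (hf : MemLp f 2 μ) (ε : ENNReal) (hε : ε ≠ 0) :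
    ∃ (s : Finset ι) (c : ι → ℂ),
      ∫⁻ x, ‖f x - ∑ i ∈ s, c i * (b i : X → ℂ) x‖ₑ ∂μ ≤ ε := by
  have hh := b.hasSum_repr (hf.toLp f)
  have h1 : ∀ᶠ s : Finset ι in atTop,
      (∑ i ∈ s, b.repr (hf.toLp f) i • b i) ∈ eball (hf.toLp f) ε :=
    hh (eball_mem_nhds _ (pos_iff_ne_zero.2 hε))
  obtain ⟨s, hs⟩ := h1.exists
  set c : ι → ℂ := fun i => b.repr (hf.toLp f) i with hc
  refine ⟨s, c, ?_⟩
  have hsum : ∀ s : Finset ι, ((∑ i ∈ s, c i • b i : Lp ℂ 2 μ) : X → ℂ) =ᵐ[μ]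
      fun x => ∑ i ∈ s, c i * (b i : X → ℂ) x := by
    intro s
    induction s using Finset.induction_on with
    | empty => simp only [Finset.sum_empty]; exact Lp.coeFn_zero ℂ 2 μ
    | insert a s ha ih =>
      rw [Finset.sum_insert ha]
      filter_upwards [ih, Lp.coeFn_add (c a • b a) (∑ i ∈ s, c i • b i),
        Lp.coeFn_smul (c a) (b a)] with x hx1 hx2 hx3
      rw [hx2, Pi.add_apply, hx1, hx3, Finset.sum_insert ha, Pi.smul_apply, smul_eq_mul]
  have hed : edist (hf.toLp f) (∑ i ∈ s, c i • b i) < ε := by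
    rw [edist_comm]; exact hs
  rw [Lp.edist_def] at hed
  have hae : (⇑(hf.toLp f) - ⇑(∑ i ∈ s, c i • b i : Lp ℂ 2 μ)) =ᵐ[μ]
      fun x => f x - ∑ i ∈ s, c i * (b i : X → ℂ) x := by
    filter_upwards [hf.coeFn_toLp, hsum s] with x hx1 hx2
    rw [Pi.sub_apply, hx1, hx2]
  rw [eLpNorm_congr_ae hae] at hed
  rw [← eLpNorm_one_eq_lintegral_enorm]
  refine (eLpNorm_le_eLpNorm_of_exponent_le (by norm_num) ?_).trans hed.le
  refine AEStronglyMeasurable.sub hfm.aestronglyMeasurable ?_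
  exact ((Lp.aestronglyMeasurable _).congr (hsum s))

lemma key {d : ℕ} [MetricSpace X] [CompactSpace X] [MeasurableSpace X] [BorelSpace X]
    (T : (Fin d → ℤ) → X → X)
    (hTadd : ∀ i j, T (i + j) = T i ∘ T j)
    (μ : Measure X) [IsProbabilityMeasure μ]
    (hT : ∀ j, MeasurePreserving (T j) μ μ)
    (hds : HasDiscreteSpectrum μ T) (f : X → ℂ) (hf : MemLp f 2 μ) (τ : ENNReal) (hτ : τ ≠ 0) :
    ∃ M : Set X, IsCompact M ∧ μ Mᶜ ≤ τ ∧
    ∀ ε : ℝ, 0 < ε → ∃ δ : ℝ, 0 < δ ∧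
      ∀ x ∈ M, ∀ y ∈ M, dist x y ≤ δ → ∀ᶠ n : ℕ in atTop,
        ((n : ℝ) ^ d)⁻¹ * ∑ j ∈ Fbox d n, ‖f (T j x) - f (T j y)‖ ≤ ε := by
  have : Fact ((2 : ENNReal) ≠ ⊤) := ⟨by norm_num⟩
  obtain ⟨ι, b, hb⟩ := hds
  have hιc : Countable ι := by
    have h1 : (Set.range b).Countable := orthonormal_countable _ b.orthonormal.toSubtypeRange
    have h2 : Countable (Set.range b) := h1.to_subtype
    exact Function.Injective.countable (f := Set.rangeFactorization b)
      (Set.rangeFactorization_injective.2 b.orthonormal.linearIndependent.injective)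
  set e : ι → X → ℂ := fun i => (b i : X → ℂ) with he
  have hem : ∀ i, Measurable (e i) := fun i => (Lp.stronglyMeasurable (b i)).measurable
  choose w hw using fun i => (hb i).2
  let ψ : ι → (Fin d → ℤ) → ℂ := fun i j =>
    Complex.exp (2 * Real.pi * Complex.I * ∑ k, (w i k : ℂ) * (j k : ℂ))
  have hψ : ∀ i j, ‖ψ i j‖ = 1 := by
    intro i j
    have : (2 * Real.pi * Complex.I * ∑ k, (w i k : ℂ) * (j k : ℂ)) =
        ((2 * Real.pi * ∑ k, w i k * (j k : ℝ) : ℝ) : ℂ) * Complex.I := by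
      push_cast; ring
    simp only [ψ, this, Complex.norm_exp_ofReal_mul_I]
  have hgood1 : ∀ᵐ x ∂μ, ∀ i j, e i (T j x) = ψ i j * e i x := by
    rw [ae_all_iff]; intro i
    rw [ae_all_iff]; intro j
    exact hw i j
  set f' := hf.1.mk f with hf'
  have hf'm : StronglyMeasurable f' := hf.1.stronglyMeasurable_mk
  have hff' : f =ᵐ[μ] f' := hf.1.ae_eq_mk
  have hf'L : MemLp f' 2 μ := (memLp_congr_ae hff').1 hf
  have hgood2 : ∀ᵐ x ∂μ, ∀ j, f (T j x) = f' (T j x) := by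
    rw [ae_all_iff]; intro j
    exact (hT j).quasiMeasurePreserving.ae hff'
  have hτ2 : τ / 2 ≠ 0 := by simp [hτ]
  obtain ⟨t, ht, hts⟩ := ENNReal.exists_pos_sum_of_countable' hτ2 ℕ
  set lam : ℕ → ENNReal := fun m => ENNReal.ofReal (1 / ((m : ℝ) + 1)) with hlam
  have hlam0 : ∀ m, lam m ≠ 0 := fun m => by
    simp only [hlam, ne_eq, ENNReal.ofReal_eq_zero, not_le]; positivity
  have hlamt : ∀ m, lam m ≠ ⊤ := fun m => ENNReal.ofReal_ne_top
  have h80 : (8 : ENNReal) ^ d ≠ 0 := pow_ne_zero _ (by norm_num)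
  have h8t : (8 : ENNReal) ^ d ≠ ⊤ := ENNReal.pow_ne_top (by norm_num)
  have heps : ∀ m, lam m * t m / 8 ^ d ≠ 0 := fun m =>
    ENNReal.div_ne_zero.2 ⟨mul_ne_zero (hlam0 m) (ht m).ne', h8t⟩
  choose s c hsc using fun m => approx_eig T μ b f' hf'm hf'L _ (heps m)
  set g : ℕ → X → ℂ := fun m x => ∑ i ∈ s m, c m i * e i x with hg
  have hgm : ∀ m, Measurable (g m) := fun m =>
    Finset.measurable_sum _ fun i _ => (hem i).const_mul _
  let G : ℕ → Set X := fun m => {x | ∃ n : ℕ, 1 ≤ n ∧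
    lam m * (n : ENNReal) ^ d < ∑ j ∈ Fbox d n, ‖f' (T j x) - g m (T j x)‖ₑ}
  have hG : ∀ m, μ (G m) ≤ t m := by
    intro m
    have h1 := maximal_ineq_s18 T hTadd μ hT (fun x => ‖f' x - g m x‖ₑ)
      (hf'm.measurable.sub (hgm m)).enorm (lam m)
    have h2 : 8 ^ d * ∫⁻ x, ‖f' x - g m x‖ₑ ∂μ ≤ lam m * t m := by
      calc 8 ^ d * ∫⁻ x, ‖f' x - g m x‖ₑ ∂μ ≤ 8 ^ d * (lam m * t m / 8 ^ d) := by
            gcongr; exact hsc m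
        _ = lam m * t m := ENNReal.mul_div_cancel h80 h8t
    exact (ENNReal.mul_le_mul_iff_right (hlam0 m) (hlamt m)).1 (h1.trans h2)
  set bad : Set X := {x | ¬ ((∀ i j, e i (T j x) = ψ i j * e i x) ∧
    ∀ j, f (T j x) = f' (T j x))} ∪ ⋃ m, G m with hbad
  have hbadμ : μ bad ≤ τ / 2 := by
    refine (measure_union_le _ _).trans ?_
    have : μ {x | ¬ ((∀ i j, e i (T j x) = ψ i j * e i x) ∧ ∀ j, f (T j x) = f' (T j x))} = 0 :=
      ae_iff.1 (hgood1.and hgood2)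
    rw [this, zero_add]
    exact (measure_iUnion_le _).trans ((ENNReal.tsum_le_tsum hG).trans hts.le)
  obtain ⟨M, hMA, hMc, hMμ, hMe⟩ := lusin μ (fun x i => e i x) (measurable_pi_iff.2 hem)
    (toMeasurable μ bad)ᶜ (measurableSet_toMeasurable μ bad).compl (τ / 2) hτ2
  have hMbad : ∀ x ∈ M, x ∉ bad := fun x hx hxb => hMA hx (subset_toMeasurable μ bad hxb)
  refine ⟨M, hMc, ?_, ?_⟩
  · refine hMμ.trans ?_
    rw [compl_compl, measure_toMeasurable]
    exact (add_le_add hbadμ le_rfl).trans_eq (ENNReal.add_halves _)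
  intro ε hε
  obtain ⟨m, hm⟩ := exists_nat_one_div_lt (by positivity : 0 < ε / 4)
  have hMi : ∀ i, ContinuousOn (e i) M := fun i => (continuous_apply i).comp_continuousOn hMe
  have hΦ : ContinuousOn (fun x (i : s m) => c m i * e i x) M :=
    continuousOn_pi.2 fun i => continuousOn_const.mul (hMi i)
  have hΦu := hMc.uniformContinuousOn_of_continuous hΦ
  obtain ⟨δ, hδ, hδM⟩ := Metric.uniformContinuousOn_iff.1 hΦu (ε / (2 * ((s m).card + 1)))
    (by positivity)
  refine ⟨δ / 2, by positivity, fun x hx y hy hxy => ?_⟩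
  have hdist := hδM x hx y hy (by linarith)
  have hav : ∀ z ∈ M, ∀ n : ℕ, 1 ≤ n →
      ∑ j ∈ Fbox d n, ‖f' (T j z) - g m (T j z)‖ ≤ ε / 4 * (n : ℝ) ^ d := by
    intro z hz n hn
    have hzG : z ∉ G m := fun h => hMbad z hz (Or.inr (Set.mem_iUnion.2 ⟨m, h⟩))
    have h1 : ∑ j ∈ Fbox d n, ‖f' (T j z) - g m (T j z)‖ₑ ≤ lam m * (n : ENNReal) ^ d :=
      not_lt.1 fun h => hzG ⟨n, hn, h⟩
    have h2 : lam m * (n : ENNReal) ^ d = ENNReal.ofReal (1 / ((m : ℝ) + 1) * (n : ℝ) ^ d) := by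
      rw [ENNReal.ofReal_mul (by positivity), ENNReal.ofReal_pow (by positivity),
        ENNReal.ofReal_natCast]
    have h3 : ∑ j ∈ Fbox d n, ‖f' (T j z) - g m (T j z)‖ₑ =
        ENNReal.ofReal (∑ j ∈ Fbox d n, ‖f' (T j z) - g m (T j z)‖) := by
      rw [ENNReal.ofReal_sum_of_nonneg fun j _ => norm_nonneg _]
      simp only [ofReal_norm]
    rw [h2, h3, ENNReal.ofReal_le_ofReal_iff (by positivity)] at h1
    refine h1.trans ?_
    gcongr
  have hgood : ∀ z ∈ M, (∀ i j, e i (T j z) = ψ i j * e i z) ∧ ∀ j, f (T j z) = f' (T j z) :=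
    fun z hz => by
      by_contra hcon
      exact hMbad z hz (Or.inl hcon)
  have hgd : ∀ j, ‖g m (T j x) - g m (T j y)‖ ≤ ε / 2 := by
    intro j
    have h1 : g m (T j x) - g m (T j y) =
        ∑ i ∈ s m, ψ i j * (c m i * e i x - c m i * e i y) := by
      simp only [hg, ← Finset.sum_sub_distrib]
      refine Finset.sum_congr rfl fun i _ => ?_
      rw [(hgood x hx).1 i j, (hgood y hy).1 i j]; ring
    rw [h1]
    have h2 : ∀ i ∈ s m, ‖ψ i j * (c m i * e i x - c m i * e i y)‖ ≤
        ε / (2 * ((s m).card + 1)) := by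
      intro i hi
      rw [norm_mul, hψ, one_mul]
      have := (dist_le_pi_dist _ _ (⟨i, hi⟩ : s m)).trans hdist.le
      rwa [dist_eq_norm] at this
    refine (norm_sum_le_of_le _ h2).trans ?_
    rw [Finset.sum_const, nsmul_eq_mul, mul_div_assoc', div_le_iff₀ (by positivity)]
    nlinarith
  filter_upwards [eventually_ge_atTop 1] with n hn
  have hnd : (0 : ℝ) < (n : ℝ) ^ d := by positivity
  rw [inv_mul_le_iff₀ hnd]
  calc ∑ j ∈ Fbox d n, ‖f (T j x) - f (T j y)‖
      ≤ ∑ j ∈ Fbox d n, (‖f' (T j x) - g m (T j x)‖ + ‖f' (T j y) - g m (T j y)‖ + ε / 2) := by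
        refine Finset.sum_le_sum fun j _ => ?_
        rw [(hgood x hx).2 j, (hgood y hy).2 j]
        have h1 : f' (T j x) - f' (T j y) = (f' (T j x) - g m (T j x)) -
          (f' (T j y) - g m (T j y)) + (g m (T j x) - g m (T j y)) := by ring
        rw [h1]
        refine (norm_add_le _ _).trans ?_
        have := norm_sub_le (f' (T j x) - g m (T j x)) (f' (T j y) - g m (T j y))
        linarith [hgd j]
    _ = ∑ j ∈ Fbox d n, ‖f' (T j x) - g m (T j x)‖ + ∑ j ∈ Fbox d n, ‖f' (T j y) - g m (T j y)‖
        + n ^ d * (ε / 2) := by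
        rw [Finset.sum_add_distrib, Finset.sum_add_distrib, Finset.sum_const, card_Fbox,
          nsmul_eq_mul]; push_cast; rfl
    _ ≤ ε / 4 * (n : ℝ) ^ d + ε / 4 * (n : ℝ) ^ d + n ^ d * (ε / 2) := by
        gcongr
        · exact hav x hx n hn
        · exact hav y hy n hn
    _ = n ^ d * ε := by ring

lemma one_sub_le [MetricSpace X] [MeasurableSpace X] [BorelSpace X] (μ : Measure X)
    [IsProbabilityMeasure μ] (M : Set X) (hM : IsCompact M) (τ : ENNReal) (h : μ Mᶜ ≤ τ) :
    1 - τ ≤ μ M := by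
  rw [← compl_compl M, prob_compl_eq_one_sub hM.measurableSet.compl]
  exact tsub_le_tsub_left h 1

lemma three_of_ds {d : ℕ} [MetricSpace X] [CompactSpace X] [MeasurableSpace X] [BorelSpace X]
    (T : (Fin d → ℤ) → X → X)
    (hTadd : ∀ i j, T (i + j) = T i ∘ T j)
    (μ : Measure X) [IsProbabilityMeasure μ]
    (hT : ∀ j, MeasurePreserving (T j) μ μ)
    (hds : HasDiscreteSpectrum μ T) (f : X → ℂ) (hf : MemLp f 2 μ) : MuFMeanEquicont μ T f := by
  intro τ hτ
  obtain ⟨M, hMc, hMμ, hM⟩ := key T hTadd μ hT hds f hf (ENNReal.ofReal τ)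
    (by simpa using hτ)
  refine ⟨M, hMc, one_sub_le μ M hMc _ hMμ, fun ε hε => ?_⟩
  obtain ⟨δ, hδ, hδM⟩ := hM (ε * (ε / 2)) (by positivity)
  refine ⟨δ, hδ, fun x hx y hy hxy => ?_⟩
  refine csInf_le ⟨0, fun e he => he.1.le⟩ ⟨hε, ?_⟩
  refine lt_of_le_of_lt ?_ (half_lt_self hε)
  refine limsup_le_of_le (IsBoundedUnder.isCoboundedUnder_le
    (isBoundedUnder_of ⟨0, fun n => div_nonneg (by positivity) (by positivity)⟩)) ?_
  filter_upwards [hδM x hx y hy hxy, eventually_ge_atTop 1] with n hn hn1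
  have hnd : (0 : ℝ) < (n : ℝ) ^ d := by positivity
  rw [card_Fbox]
  push_cast
  rw [div_le_iff₀ hnd]
  rw [inv_mul_le_iff₀ hnd] at hn
  have h1 : (((Fbox d n).filter (fun j => j ∈ {i | ε < ‖f (T i x) - f (T i y)‖})).card : ℝ) * ε ≤
      ∑ j ∈ Fbox d n, ‖f (T j x) - f (T j y)‖ := by
    rw [← nsmul_eq_mul]
    refine (Finset.card_nsmul_le_sum _ (fun j => ‖f (T j x) - f (T j y)‖) ε ?_).trans ?_
    · intro j hj
      exact le_of_lt (Finset.mem_filter.1 hj).2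
    · exact Finset.sum_le_sum_of_subset_of_nonneg (Finset.filter_subset _ _)
        fun _ _ _ => norm_nonneg _
  have h2 := h1.trans hn
  have h3 : (n : ℝ) ^ d * (ε * (ε / 2)) = (ε / 2 * (n : ℝ) ^ d) * ε := by ring
  rw [h3] at h2
  exact le_of_mul_le_mul_right h2 hε

lemma one_of_ds {d : ℕ} [MetricSpace X] [CompactSpace X] [MeasurableSpace X] [BorelSpace X]
    (T : (Fin d → ℤ) → X → X)
    (hTadd : ∀ i j, T (i + j) = T i ∘ T j)
    (μ : Measure X) [IsProbabilityMeasure μ]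
    (hT : ∀ j, MeasurePreserving (T j) μ μ)
    (hds : HasDiscreteSpectrum μ T) : MuMeanEquicont μ T := by
  intro τ hτ
  have hne : Nonempty X := nonempty_of_isProbabilityMeasure μ
  have hτ0 : ENNReal.ofReal τ ≠ 0 := by simpa using hτ
  obtain ⟨t, ht, hts⟩ := ENNReal.exists_pos_sum_of_countable' hτ0 ℕ
  set p : ℕ → X := TopologicalSpace.denseSeq X with hp
  set f : ℕ → X → ℂ := fun k x => ((dist x (p k) : ℝ) : ℂ) with hf
  have hfc : ∀ k, Continuous (f k) := fun k =>
    Complex.continuous_ofReal.comp (continuous_id.dist continuous_const)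
  have hfL : ∀ k, MemLp (f k) 2 μ := by
    intro k
    refine MemLp.of_bound (hfc k).measurable.aestronglyMeasurable
      (Metric.diam (Set.univ : Set X)) (ae_of_all _ fun x => ?_)
    simp only [hf, Complex.norm_real, Real.norm_of_nonneg dist_nonneg]
    exact Metric.dist_le_diam_of_mem isCompact_univ.isBounded trivial trivial
  choose M hMc hMμ hM using fun k => key T hTadd μ hT hds (f k) (hfL k) (t k) (ht k).ne'
  have hMcl : IsClosed (⋂ k, M k) := isClosed_iInter fun k => (hMc k).isClosed
  refine ⟨⋂ k, M k, hMcl.isCompact, one_sub_le μ _ hMcl.isCompact _ ?_, fun ε hε => ?_⟩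
  · rw [Set.compl_iInter]
    exact (measure_iUnion_le _).trans ((ENNReal.tsum_le_tsum hMμ).trans hts.le)
  have hcov : (Set.univ : Set X) ⊆ ⋃ k, ball (p k) (ε / 4) := by
    intro x _
    obtain ⟨k, hk⟩ := (TopologicalSpace.denseRange_denseSeq X).exists_dist_lt x
      (by positivity : 0 < ε / 4)
    exact Set.mem_iUnion.2 ⟨k, hk⟩
  obtain ⟨s, hs⟩ := isCompact_univ.elim_finite_subcover _ (fun k => isOpen_ball) hcov
  have hbd : ∀ a b : X, dist a b ≤ ε / 2 + ∑ k ∈ s, ‖f k a - f k b‖ := by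
    intro a b
    obtain ⟨k, hk, hak⟩ := Set.mem_iUnion₂.1 (hs (Set.mem_univ a))
    have h1 : ‖f k a - f k b‖ ≤ ∑ k ∈ s, ‖f k a - f k b‖ :=
      Finset.single_le_sum (f := fun k => ‖f k a - f k b‖) (fun _ _ => norm_nonneg _) hk
    have h2 : ‖f k a - f k b‖ = |dist a (p k) - dist b (p k)| := by
      simp only [hf]; rw [← Complex.ofReal_sub, Complex.norm_real, Real.norm_eq_abs]
    have h3 := dist_triangle_right a b (p k)
    have h4 : dist a (p k) < ε / 4 := hak
    have h5 := neg_abs_le (dist a (p k) - dist b (p k))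
    linarith
  have hη : 0 < ε / (2 * ((s.card : ℝ) + 1)) := by positivity
  choose δ hδ hδM using fun k => hM k _ hη
  obtain ⟨δ0, hδ0, hδ0s⟩ : ∃ δ0 > 0, ∀ k ∈ s, δ0 ≤ δ k := by
    clear hs hbd hη hδM
    induction s using Finset.induction_on with
    | empty => exact ⟨1, one_pos, by simp⟩
    | insert a s ha ih =>
      obtain ⟨δ0, h0, h1⟩ := ih
      refine ⟨min δ0 (δ a), lt_min h0 (hδ a), fun k hk => ?_⟩
      rcases Finset.mem_insert.1 hk with rfl | hk
      · exact min_le_right _ _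
      · exact (min_le_left _ _).trans (h1 k hk)
  refine ⟨δ0, hδ0, fun x hx y hy hxy => ?_⟩
  refine limsup_le_of_le (IsBoundedUnder.isCoboundedUnder_le
    (isBoundedUnder_of ⟨0, fun n => div_nonneg (Finset.sum_nonneg fun _ _ => dist_nonneg)
      (by positivity)⟩)) ?_
  have hev : ∀ᶠ n : ℕ in atTop, ∀ k ∈ s,
      ((n : ℝ) ^ d)⁻¹ * ∑ j ∈ Fbox d n, ‖f k (T j x) - f k (T j y)‖ ≤
        ε / (2 * ((s.card : ℝ) + 1)) := by
    rw [Filter.eventually_all_finset]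
    intro k hk
    exact hδM k x (Set.mem_iInter.1 hx k) y (Set.mem_iInter.1 hy k) (hxy.trans (hδ0s k hk))
  filter_upwards [hev, eventually_ge_atTop 1] with n hn hn1
  have hnd : (0 : ℝ) < (n : ℝ) ^ d := by positivity
  rw [card_Fbox]
  push_cast
  rw [div_le_iff₀ hnd]
  calc ∑ j ∈ Fbox d n, dist (T j x) (T j y)
      ≤ ∑ j ∈ Fbox d n, (ε / 2 + ∑ k ∈ s, ‖f k (T j x) - f k (T j y)‖) :=
        Finset.sum_le_sum fun j _ => hbd _ _
    _ = n ^ d * (ε / 2) + ∑ k ∈ s, ∑ j ∈ Fbox d n, ‖f k (T j x) - f k (T j y)‖ := by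
        rw [Finset.sum_add_distrib, Finset.sum_const, card_Fbox, nsmul_eq_mul, Finset.sum_comm]
        push_cast; rfl
    _ ≤ n ^ d * (ε / 2) + ∑ k ∈ s, n ^ d * (ε / (2 * ((s.card : ℝ) + 1))) := by
        gcongr with k hk
        exact (inv_mul_le_iff₀ hnd).1 (hn k hk)
    _ ≤ ε * n ^ d := by
        rw [Finset.sum_const, nsmul_eq_mul]
        have : (s.card : ℝ) * (ε / (2 * ((s.card : ℝ) + 1))) ≤ ε / 2 := by
          rw [mul_div_assoc', div_le_iff₀ (by positivity)]
          nlinarith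
        nlinarith

/-- for a TDS with an ergodic invariant measure `μ`, the following are
equivalent: (1) `μ`-mean equicontinuity; (2) `μ-1_B`-mean equicontinuity for every Borel
`B`; (3) `μ-f`-mean equicontinuity for all `f ∈ L²(X,μ)`; (4) discrete spectrum. -/
theorem stmt18 {d : ℕ}
    [MetricSpace X] [CompactSpace X] [MeasurableSpace X] [BorelSpace X]
    (T : (Fin d → ℤ) → X → X)
    (hTc : ∀ j, Continuous (T j))
    (hTadd : ∀ i j, T (i + j) = T i ∘ T j)
    (μ : Measure X) [IsProbabilityMeasure μ]
    (hT : ∀ j, MeasurePreserving (T j) μ μ)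
    (herg : ∀ A : Set X, MeasurableSet A → (∀ j, T j ⁻¹' A = A) → μ A = 0 ∨ μ A = 1) :
    [MuMeanEquicont μ T,
     ∀ B : Set X, MeasurableSet B →
       MuFMeanEquicont μ T (B.indicator fun _ => (1 : ℂ)),
     ∀ f : X → ℂ, MemLp f 2 μ → MuFMeanEquicont μ T f,
     HasDiscreteSpectrum μ T].TFAE := by
  tfae_have 1 → 4 := fun h => ds_of_one T hTadd μ hT herg h
  tfae_have 2 → 4 := fun h => ds_of_two T hTadd μ hT herg h
  tfae_have 3 → 2 := fun h B hB =>
    h _ (memLp_indicator_const 2 hB 1 (Or.inr (measure_ne_top μ B)))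
  tfae_have 4 → 3 := fun h f hf => three_of_ds T hTadd μ hT h f hf
  tfae_have 4 → 1 := fun h => one_of_ds T hTadd μ hT h
  tfae_finish
end
end
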